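/- Let (ρ, u) be a weak solution of the stationary isentropic Navier–Stokes system on ℝ³ with exponent γ ≥ 6 and potential G ∈ D₀^{1, 6γ/(5γ−6)}(ℝ³). If the total energy is finite, i.e. ∫_{ℝ³} ( (1/2) ρ|u|² + ρ^γ/(γ−1) ) dx < ∞, then u = 0 almost everywhere. -/

import Mathlib

noncomputable section

open MeasureTheory Metric Filter Topology Set

/-- Three-dimensional Euclidean space. -/
abbrev E3 : Type := EuclideanSpace ℝ (Fin 3)

/-- Partial derivative of a scalar function in the `i`-th coordinate direction. -/
def pd (f : E3 → ℝ) (i : Fin 3) : E3 → ℝ :=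
  fun x => fderiv ℝ f x (EuclideanSpace.single i 1)

/-- Classical gradient matrix of a vector field: `(tgrad φ x) i j = ∂_j φ_i (x)`. -/
def tgrad (φ : E3 → Fin 3 → ℝ) (x : E3) : Fin 3 → Fin 3 → ℝ :=
  fun i j => pd (fun y => φ y i) j x

/-- Smooth compactly supported scalar test function with support in `Ω`. -/
def IsTest (Ω : Set E3) (φ : E3 → ℝ) : Prop :=
  ContDiff ℝ ((⊤ : ℕ∞) : WithTop ℕ∞) φ ∧ HasCompactSupport φ ∧ tsupport φ ⊆ Ω

/-- `C^n` compactly supported vector-valued test function with support in `Ω`. -/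
def IsTestVec (n : WithTop ℕ∞) (Ω : Set E3) (φ : E3 → Fin 3 → ℝ) : Prop :=
  ContDiff ℝ n φ ∧ HasCompactSupport φ ∧ tsupport φ ⊆ Ω

/-- The Newtonian viscous stress tensor
`S(M) = μ (M + Mᵗ - (2/3) (tr M) I) + η (tr M) I`. -/
def Smat (μ η : ℝ) (M : Fin 3 → Fin 3 → ℝ) : Fin 3 → Fin 3 → ℝ :=
  fun i j =>
    μ * (M i j + M j i - (2 / 3) * (∑ k, M k k) * (if i = j then (1 : ℝ) else 0))
      + η * (∑ k, M k k) * (if i = j then (1 : ℝ) else 0)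

/-- `dG` is the weak gradient of the scalar function `G` on `Ω`. -/
def HasWeakGradOn (Ω : Set E3) (G : E3 → ℝ) (dG : E3 → Fin 3 → ℝ) : Prop :=
  ∀ φ : E3 → ℝ, IsTest Ω φ → ∀ i : Fin 3,
    ∫ x in Ω, G x * pd φ i x = - ∫ x in Ω, dG x i * φ x

/-- `du` is the weak gradient (Jacobian) of the vector field `u` on `Ω`. -/
def HasWeakGradVecOn (Ω : Set E3) (u : E3 → Fin 3 → ℝ) (du : E3 → Fin 3 → Fin 3 → ℝ) : Prop :=
  ∀ φ : E3 → ℝ, IsTest Ω φ → ∀ i j : Fin 3,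
    ∫ x in Ω, u x i * pd φ j x = - ∫ x in Ω, du x i j * φ x

/-- `u ∈ D₀^{1,2}(Ω; ℝ³)` with weak gradient `du`: `u` is locally integrable on `Ω`, its weak
gradient belongs to `L²(Ω)`, and `u` can be approximated by smooth compactly supported fields
`uₙ` with `∇uₙ → ∇u` in `L²(Ω)` and `uₙ → u` in `L⁶(Ω)`. -/
def MemD012 (Ω : Set E3) (u : E3 → Fin 3 → ℝ) (du : E3 → Fin 3 → Fin 3 → ℝ) : Prop :=
  LocallyIntegrableOn u Ω volume ∧
  HasWeakGradVecOn Ω u du ∧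
  MemLp du 2 (volume.restrict Ω) ∧
  ∃ un : ℕ → E3 → Fin 3 → ℝ,
    (∀ n, IsTestVec ((⊤ : ℕ∞) : WithTop ℕ∞) Ω (un n)) ∧
    Tendsto (fun n => eLpNorm (fun x => tgrad (un n) x - du x) 2 (volume.restrict Ω))
      atTop (𝓝 0) ∧
    Tendsto (fun n => eLpNorm (fun x => un n x - u x) 6 (volume.restrict Ω)) atTop (𝓝 0)

/-- `G ∈ D₀^{1,q}(Ω)` with weak gradient `dG`. -/
def MemD01q (Ω : Set E3) (G : E3 → ℝ) (dG : E3 → Fin 3 → ℝ) (q : ℝ) : Prop :=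
  HasWeakGradOn Ω G dG ∧
  MemLp dG (ENNReal.ofReal q) (volume.restrict Ω) ∧
  ∃ Gn : ℕ → E3 → ℝ,
    (∀ n, IsTest Ω (Gn n)) ∧
    Tendsto (fun n =>
        eLpNorm (fun x => (fun i => pd (Gn n) i x) - dG x) (ENNReal.ofReal q)
          (volume.restrict Ω)) atTop (𝓝 0) ∧
    ∀ K : Set E3, IsCompact K → K ⊆ Ω →
      Tendsto (fun n => ∫ x in K, |Gn n x - G x|) atTop (𝓝 0)

/-- `G ∈ W^{1,∞}(Ω)` with weak gradient `dG`: both `G` and `∇G` are essentially bounded. -/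
def MemW1inf (Ω : Set E3) (G : E3 → ℝ) (dG : E3 → Fin 3 → ℝ) : Prop :=
  HasWeakGradOn Ω G dG ∧
  MemLp G ⊤ (volume.restrict Ω) ∧ MemLp dG ⊤ (volume.restrict Ω)

/-- Weak solution `(ρ, u)` (with weak gradient `du` of `u` and weak gradient `dG` of `G`) of the
stationary barotropic Navier–Stokes system
`div(ρu) = 0`, `div(ρ u⊗u) + ∇p(ρ) − div S(∇u) = ρ∇G` on `Ω` with no-slip boundary condition. -/
structure WeakSolution (Ω : Set E3) (μ η : ℝ) (p : ℝ → ℝ)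
    (G : E3 → ℝ) (dG : E3 → Fin 3 → ℝ)
    (ρ : E3 → ℝ) (u : E3 → Fin 3 → ℝ) (du : E3 → Fin 3 → Fin 3 → ℝ) : Prop where
  aemeas_ρ : AEMeasurable ρ volume
  aemeas_u : AEMeasurable u volume
  weakGrad_G : HasWeakGradOn Ω G dG
  ρ_nonneg : ∀ᵐ x ∂(volume.restrict Ω), 0 ≤ ρ x
  ρu_locInt : LocallyIntegrableOn (fun x => fun i => ρ x * u x i) (closure Ω) volume
  mass : ∀ φ : E3 → ℝ, ContDiff ℝ ((⊤ : ℕ∞) : WithTop ℕ∞) φ → HasCompactSupport φ →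
    ∫ x in Ω, ρ x * (∑ i, u x i * pd φ i x) = 0
  ρ_locInt : LocallyIntegrableOn ρ Ω volume
  ρu2_locInt : LocallyIntegrableOn (fun x => ρ x * (∑ i, (u x i) ^ 2)) Ω volume
  pρ_locInt : LocallyIntegrableOn (fun x => p (ρ x)) Ω volume
  ρdG_locInt : LocallyIntegrableOn (fun x => fun i => ρ x * dG x i) Ω volume
  u_D012 : MemD012 Ω u du
  momentum : ∀ φ : E3 → Fin 3 → ℝ, IsTestVec 1 Ω φ →
    ∫ x in Ω, ((∑ i, ∑ j, ρ x * u x i * u x j * tgrad φ x i j)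
        + p (ρ x) * (∑ i, tgrad φ x i i))
      = (∫ x in Ω, ∑ i, ∑ j, Smat μ η (du x) i j * tgrad φ x i j)
        - ∫ x in Ω, ∑ i, ρ x * dG x i * φ x i

/-- Weak solution of the stationary isentropic Navier–Stokes system on `ℝ³`
with pressure `p(ρ) = ρ^γ`. -/
def IsentropicWeakSolution (μ η γ : ℝ) (G : E3 → ℝ) (dG : E3 → Fin 3 → ℝ)
    (ρ : E3 → ℝ) (u : E3 → Fin 3 → ℝ) (du : E3 → Fin 3 → Fin 3 → ℝ) : Prop :=
  WeakSolution univ μ η (fun s => s ^ γ) G dG ρ u du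

/-- The `L^r` norm of a scalar function on a set. -/
def lpNormOn (f : E3 → ℝ) (r : ℝ) (s : Set E3) : ℝ :=
  (∫ x in s, |f x| ^ r) ^ (1 / r)

/-- Euclidean norm of a vector in `ℝ³` (represented as `Fin 3 → ℝ`). -/
def vnorm (v : Fin 3 → ℝ) : ℝ := Real.sqrt (∑ i, (v i) ^ 2)

/-- The `L^r` norm of a vector field on a set. -/
def vecLpNormOn (u : E3 → Fin 3 → ℝ) (r : ℝ) (s : Set E3) : ℝ :=
  (∫ x in s, (vnorm (u x)) ^ r) ^ (1 / r)

/-- The exponent `f(α, γ)` from the higher-integrability propositions. -/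
def fExp (α γ : ℝ) : ℝ :=
  if 6 ≤ γ then
    (if (2 * γ - 3) / (γ * (γ - 1)) ≤ α then α - 3 / (2 * γ)
     else α / γ + 1 / (2 * γ) - 3 / γ ^ 2)
  else
    (if 3 / (2 * (γ - 1)) ≤ α then α - 3 / (2 * γ)
     else if 1 / (2 * (γ - 1)) ≤ α then α / γ
     else α / γ ^ 2 + 1 / (2 * γ ^ 2))

/-- The exponent `g(α, β, γ)`. -/
def gExp (α β γ : ℝ) : ℝ :=
  if fExp α γ ≤ (γ - 3) / (γ * (3 * γ - 5)) then
    γ * (1 - fExp α γ) * (6 - β) / (3 * β * (γ - 1))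
  else (1 - γ * fExp α γ) * (6 - β) / (2 * β)


open scoped ENNReal NNReal ContDiff


/-- Smooth compactly supported scalar functions. -/
def TF (f : E3 → ℝ) : Prop := ContDiff ℝ ((⊤ : ℕ∞) : WithTop ℕ∞) f ∧ HasCompactSupport f

lemma TF.isTest {f : E3 → ℝ} (h : TF f) : IsTest univ f := ⟨h.1, h.2, subset_univ _⟩

lemma IsTest.tf {f : E3 → ℝ} (h : IsTest univ f) : TF f := ⟨h.1, h.2.1⟩

lemma TF.cont {f : E3 → ℝ} (h : TF f) : Continuous f := h.1.continuous

lemma TF.diff {f : E3 → ℝ} (h : TF f) : Differentiable ℝ f := h.1.differentiable (by simp)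

lemma pd_contDiff {f : E3 → ℝ} (h : ContDiff ℝ ((⊤ : ℕ∞) : WithTop ℕ∞) f) (i : Fin 3) :
    ContDiff ℝ ((⊤ : ℕ∞) : WithTop ℕ∞) (pd f i) := by
  have : ContDiff ℝ ((⊤ : ℕ∞) : WithTop ℕ∞) (fderiv ℝ f) :=
    h.fderiv_right (m := ((⊤ : ℕ∞) : WithTop ℕ∞)) (by simp)
  exact this.clm_apply contDiff_const

lemma pd_compact {f : E3 → ℝ} (h : HasCompactSupport f) (i : Fin 3) :
    HasCompactSupport (pd f i) := h.fderiv_apply (𝕜 := ℝ) _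

lemma TF.pd {f : E3 → ℝ} (h : TF f) (i : Fin 3) : TF (pd f i) :=
  ⟨pd_contDiff h.1 i, pd_compact h.2 i⟩

lemma TF.mul {f g : E3 → ℝ} (h : TF f) (hg : TF g) : TF (fun x => f x * g x) :=
  ⟨h.1.mul hg.1, h.2.mul_right⟩

lemma TF.add {f g : E3 → ℝ} (h : TF f) (hg : TF g) : TF (fun x => f x + g x) :=
  ⟨h.1.add hg.1, h.2.add hg.2⟩

lemma TF.sub {f g : E3 → ℝ} (h : TF f) (hg : TF g) : TF (fun x => f x - g x) := by
  refine ⟨h.1.sub hg.1, ?_⟩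
  have := h.2.add (hg.2.neg)
  simp only [sub_eq_add_neg]
  exact this

lemma TF.const_mul {f : E3 → ℝ} (h : TF f) (c : ℝ) : TF (fun x => c * f x) :=
  ⟨contDiff_const.mul h.1, h.2.mul_left⟩

lemma TF.sum {ι : Type*} (s : Finset ι) {f : ι → E3 → ℝ} (h : ∀ i, TF (f i)) :
    TF (fun x => ∑ i ∈ s, f i x) := by
  classical
  induction s using Finset.induction_on with
  | empty =>
    refine ⟨by simpa using contDiff_const, ?_⟩
    simp only [Finset.sum_empty]
    exact HasCompactSupport.zero (α := E3) (β := ℝ)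
  | insert a s ha ih =>
    simp only [Finset.sum_insert ha]
    exact (h a).add ih

lemma TF.memLp {f : E3 → ℝ} (h : TF f) (p : ℝ≥0∞) : MemLp f p volume :=
  h.cont.memLp_of_hasCompactSupport h.2

lemma TF.integrable {f : E3 → ℝ} (h : TF f) : Integrable f volume :=
  h.cont.integrable_of_hasCompactSupport h.2

lemma TF.mulInt {f g : E3 → ℝ} (hf : Continuous f) (hg : TF g) :
    Integrable (fun x => f x * g x) volume :=
  (hf.mul hg.cont).integrable_of_hasCompactSupport hg.2.mul_left

lemma pd_mul {f g : E3 → ℝ} {x : E3} (hf : DifferentiableAt ℝ f x) (hg : DifferentiableAt ℝ g x)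
    (i : Fin 3) : pd (fun y => f y * g y) i x = pd f i x * g x + f x * pd g i x := by
  unfold pd
  rw [fderiv_fun_mul hf hg]
  simp [smul_eq_mul]
  ring

lemma pd_add {f g : E3 → ℝ} {x : E3} (hf : DifferentiableAt ℝ f x) (hg : DifferentiableAt ℝ g x)
    (i : Fin 3) : pd (fun y => f y + g y) i x = pd f i x + pd g i x := by
  unfold pd
  rw [fderiv_fun_add hf hg]
  simp

lemma pd_sub {f g : E3 → ℝ} {x : E3} (hf : DifferentiableAt ℝ f x) (hg : DifferentiableAt ℝ g x)
    (i : Fin 3) : pd (fun y => f y - g y) i x = pd f i x - pd g i x := by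
  unfold pd
  rw [fderiv_fun_sub hf hg]
  simp

lemma pd_const_mul {f : E3 → ℝ} {x : E3} (c : ℝ) (hf : DifferentiableAt ℝ f x)
    (i : Fin 3) : pd (fun y => c * f y) i x = c * pd f i x := by
  unfold pd
  rw [fderiv_const_mul hf]
  simp

/-- integration by parts with one compactly supported factor -/
lemma ibp {f g : E3 → ℝ} (hf : ContDiff ℝ 1 f) (hg : TF g) (i : Fin 3) :
    ∫ x, f x * pd g i x = - ∫ x, pd f i x * g x := by
  have hcf : Continuous (pd f i) :=
    (hf.continuous_fderiv (by simp)).clm_apply continuous_const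
  exact integral_mul_fderiv_eq_neg_fderiv_mul_of_integrable
    (TF.mulInt hcf hg) (TF.mulInt hf.continuous (hg.pd i)) (TF.mulInt hf.continuous hg)
    (fun x _ => hf.differentiable (by simp) x) (fun x _ => hg.diff x)

lemma pd_comm {f : E3 → ℝ} (h : ContDiff ℝ ((⊤ : ℕ∞) : WithTop ℕ∞) f) (i j : Fin 3) :
    pd (pd f i) j = pd (pd f j) i := by
  ext x
  have hs : IsSymmSndFDerivAt ℝ f x :=
    h.contDiffAt.isSymmSndFDerivAt (by simp only [minSmoothness_of_isRCLikeNormedField]; exact WithTop.coe_le_coe.2 (le_top : (2 : ℕ∞) ≤ ⊤))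
  have hd : DifferentiableAt ℝ (fderiv ℝ f) x :=
    (h.fderiv_right (m := ((⊤ : ℕ∞) : WithTop ℕ∞)) (by simp)).differentiable (by simp) x
  have key : ∀ a b : Fin 3, pd (pd f a) b x
      = fderiv ℝ (fderiv ℝ f) x (EuclideanSpace.single b 1) (EuclideanSpace.single a 1) := by
    intro a b
    unfold pd
    rw [fderiv_clm_apply hd (differentiableAt_const _)]
    simp
  rw [key, key]
  exact hs.eq _ _

lemma ibp_swap {f g : E3 → ℝ} (hf : TF f) (hg : TF g) (i j : Fin 3) :
    ∫ x, pd f i x * pd g j x = ∫ x, pd f j x * pd g i x := by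
  have h1 := ibp (((hf.pd i).1).of_le (by simp)) hg j
  have h2 := ibp (((hf.pd j).1).of_le (by simp)) hg i
  rw [h1, h2, pd_comm hf.1]

/-- Laplacian -/
def Lap (f : E3 → ℝ) : E3 → ℝ := fun x => ∑ i, pd (pd f i) i x

lemma TF.lap {f : E3 → ℝ} (h : TF f) : TF (Lap f) := TF.sum _ fun i => (h.pd i).pd i

lemma hess_bound {f : E3 → ℝ} (hf : TF f) (i j : Fin 3) :
    ∫ x, (pd (pd f i) j x) ^ 2 ≤ ∫ x, (Lap f x) ^ 2 := by
  have e : ∀ a b, ∫ x, (pd (pd f a) b x) ^ 2 = ∫ x, pd (pd f a) a x * pd (pd f b) b x := by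
    intro a b
    rw [← ibp_swap (hf.pd a) (hf.pd b) b a]
    refine integral_congr_ae (Eventually.of_forall fun x => ?_)
    simp only [pd_comm hf.1 b a]
    ring
  have hint : ∀ a b, Integrable (fun x => pd (pd f a) a x * pd (pd f b) b x) volume :=
    fun a b => TF.mulInt ((hf.pd a).pd a).cont ((hf.pd b).pd b)
  have : ∫ x, (Lap f x) ^ 2 = ∑ a, ∑ b, ∫ x, (pd (pd f a) b x) ^ 2 := by
    have : ∀ x, (Lap f x) ^ 2 = ∑ a, ∑ b, pd (pd f a) a x * pd (pd f b) b x := by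
      intro x
      rw [Lap, sq, Finset.sum_mul_sum]
    simp_rw [this]
    rw [integral_finsetSum _ (fun a _ => integrable_finsetSum _ fun b _ => hint a b)]
    refine Finset.sum_congr rfl fun a _ => ?_
    rw [integral_finsetSum _ (fun b _ => hint a b)]
    exact Finset.sum_congr rfl fun b _ => (e a b).symm
  rw [this]
  have h0 : ∀ a b, 0 ≤ ∫ x, (pd (pd f a) b x) ^ 2 := fun a b =>
    integral_nonneg fun x => sq_nonneg _
  calc _ ≤ ∑ b, ∫ x, (pd (pd f i) b x) ^ 2 :=
        Finset.single_le_sum (f := fun b => ∫ x, (pd (pd f i) b x) ^ 2)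
          (fun b _ => h0 i b) (Finset.mem_univ j)
    _ ≤ _ := Finset.single_le_sum (f := fun a => ∑ b, ∫ x, (pd (pd f a) b x) ^ 2)
          (fun a _ => Finset.sum_nonneg fun b _ => h0 a b) (Finset.mem_univ i)

lemma fderiv_eq_sum (f : E3 → ℝ) (x v : E3) : fderiv ℝ f x v = ∑ i, v i * pd f i x := by
  have : v = ∑ i, v i • EuclideanSpace.single i (1:ℝ) := by
    ext j
    simp [Finset.sum_apply, Pi.single_apply]
  conv_lhs => rw [this]
  simp [pd]

lemma fderiv_norm_le (f : E3 → ℝ) (x : E3) : ‖fderiv ℝ f x‖ ≤ ∑ i, |pd f i x| := by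
  refine ContinuousLinearMap.opNorm_le_bound _ (Finset.sum_nonneg fun i _ => abs_nonneg _) ?_
  intro v
  rw [fderiv_eq_sum, Finset.sum_mul]
  refine (norm_sum_le _ _).trans (Finset.sum_le_sum fun i _ => ?_)
  rw [norm_mul, mul_comm]
  exact mul_le_mul_of_nonneg_left (PiLp.norm_apply_le v i) (norm_nonneg _)

lemma sobolev : ∃ C : ℝ≥0, ∀ f : E3 → ℝ, TF f →
    eLpNorm f 6 volume ≤ C * ∑ i, eLpNorm (pd f i) 2 volume := by
  refine ⟨SNormLESNormFDerivOfEqConst ℝ (volume : Measure E3) (2:ℝ≥0), fun f hf => ?_⟩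
  have h := eLpNorm_le_eLpNorm_fderiv_of_eq (μ := (volume : Measure E3)) (p := 2) (p' := 6)
    (hf.1.of_le (by simp)) hf.2 (by norm_num) (by simp) (by simp; norm_num)
  have h6 : ((6:ℝ≥0) : ℝ≥0∞) = 6 := by norm_num
  have h2 : ((2:ℝ≥0) : ℝ≥0∞) = 2 := by norm_num
  rw [h6, h2] at h
  refine h.trans ?_
  gcongr
  calc eLpNorm (fderiv ℝ f) 2 volume
      ≤ eLpNorm (∑ i, fun x => |pd f i x|) 2 volume := by
        refine eLpNorm_mono_real fun x => ?_
        simpa using fderiv_norm_le f x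
    _ ≤ ∑ i, eLpNorm (fun x => |pd f i x|) 2 volume :=
        eLpNorm_sum_le (fun i _ => ((hf.pd i).cont.abs).aestronglyMeasurable) (by norm_num)
    _ = _ := by
        refine Finset.sum_congr rfl fun i _ => ?_
        exact eLpNorm_norm (pd f i)

lemma pd_comp_smul {f : E3 → ℝ} (hf : Differentiable ℝ f) (c : ℝ) (i : Fin 3) (x : E3) :
    pd (fun y => f (c • y)) i x = c * pd f i (c • x) := by
  unfold pd
  have h : HasFDerivAt (fun y : E3 => f (c • y))
      ((fderiv ℝ f (c • x)).comp (c • ContinuousLinearMap.id ℝ E3)) x := by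
    have h1 : HasFDerivAt (fun y : E3 => c • y) (c • ContinuousLinearMap.id ℝ E3) x :=
      (hasFDerivAt_id x).const_smul c
    exact (hf (c • x)).hasFDerivAt.comp x h1
  rw [h.fderiv]
  simp

/-- bounded partial derivatives -/
lemma TF.bdd {f : E3 → ℝ} (h : TF f) : ∃ C, 0 ≤ C ∧ ∀ x, |f x| ≤ C := by
  obtain ⟨C, hC⟩ := h.cont.bounded_above_of_compact_support h.2
  exact ⟨C, (norm_nonneg _).trans (hC 0), hC⟩

lemma TF.comp_smul {f : E3 → ℝ} (h : TF f) {c : ℝ} (hc : c ≠ 0) : TF (fun x => f (c • x)) :=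
  ⟨h.1.comp (contDiff_const_smul c), h.2.comp_smul hc⟩

lemma cutoffs : ∃ (χ : ℕ → E3 → ℝ) (C : ℝ), 0 ≤ C ∧ (∀ n, TF (χ n)) ∧
    (∀ n x, 0 ≤ χ n x ∧ χ n x ≤ 1) ∧ (∀ x, Tendsto (fun n => χ n x) atTop (𝓝 1)) ∧
    (∀ n i x, |pd (χ n) i x| ≤ C / (n + 1)) := by
  let b : ContDiffBump (0 : E3) := ⟨1, 2, by norm_num, by norm_num⟩
  have hb : TF b := ⟨b.contDiff, b.hasCompactSupport⟩
  choose C hC0 hC using fun i => (hb.pd i).bdd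
  have hpos : ∀ n : ℕ, (0:ℝ) < n + 1 := fun n => by positivity
  refine ⟨fun n x => b (((n:ℝ) + 1)⁻¹ • x), ∑ i, C i, Finset.sum_nonneg fun i _ => hC0 i, ?_, ?_,
    ?_, ?_⟩
  · intro n
    exact hb.comp_smul (inv_ne_zero (hpos n).ne')
  · exact fun n x => ⟨b.nonneg, b.le_one⟩
  · intro x
    refine tendsto_const_nhds.congr' ?_
    obtain ⟨N, hN⟩ := exists_nat_gt ‖x‖
    filter_upwards [eventually_ge_atTop N] with n hn
    symm
    apply b.one_of_mem_closedBall
    rw [mem_closedBall, dist_zero_right, norm_smul, Real.norm_of_nonneg (inv_nonneg.2 (hpos n).le),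
      inv_mul_le_iff₀ (hpos n)]
    have : (N:ℝ) ≤ n := by exact_mod_cast hn
    show ‖x‖ ≤ (n + 1) * 1
    linarith
  · intro n i x
    rw [pd_comp_smul hb.diff, abs_mul, abs_of_nonneg (inv_nonneg.2 (hpos n).le), inv_mul_eq_div]
    gcongr
    exact (hC i _).trans (Finset.single_le_sum (fun i _ => hC0 i) (Finset.mem_univ i))

/-- product convergence -/
lemma tendsto_mul_Lp {p q r : ℝ≥0∞} [hpqr : ENNReal.HolderTriple p q r] (hr : 1 ≤ r)
    {f : ℕ → E3 → ℝ} {f0 : E3 → ℝ} {g : ℕ → E3 → ℝ} {g0 : E3 → ℝ}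
    (hf0 : MemLp f0 p volume) (hg0 : MemLp g0 q volume)
    (hf : ∀ n, AEStronglyMeasurable (f n) volume) (hg : ∀ n, AEStronglyMeasurable (g n) volume)
    (hfl : Tendsto (fun n => eLpNorm (fun x => f n x - f0 x) p volume) atTop (𝓝 0))
    (hgl : Tendsto (fun n => eLpNorm (fun x => g n x - g0 x) q volume) atTop (𝓝 0)) :
    Tendsto (fun n => eLpNorm (fun x => f n x * g n x - f0 x * g0 x) r volume) atTop (𝓝 0) := by
  have hb : ∀ n, eLpNorm (fun x => f n x * g n x - f0 x * g0 x) r volume ≤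
      eLpNorm (fun x => f n x - f0 x) p volume * eLpNorm (fun x => g n x - g0 x) q volume
      + eLpNorm (fun x => f n x - f0 x) p volume * eLpNorm g0 q volume
      + eLpNorm f0 p volume * eLpNorm (fun x => g n x - g0 x) q volume := by
    intro n
    have m1 := (hf n).sub hf0.1
    have m2 := (hg n).sub hg0.1
    have e : (fun x => f n x * g n x - f0 x * g0 x) =
      (((fun x => f n x - f0 x) • (fun x => g n x - g0 x)) + (fun x => f n x - f0 x) • g0)
        + f0 • (fun x => g n x - g0 x) := by
      ext x
      simp [smul_eq_mul]
      ring
    rw [e]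
    refine (eLpNorm_add_le ((m1.smul m2).add (m1.smul hg0.1)) (hf0.1.smul m2) hr).trans ?_
    gcongr
    · refine (eLpNorm_add_le (m1.smul m2) (m1.smul hg0.1) hr).trans ?_
      gcongr
      · exact eLpNorm_smul_le_mul_eLpNorm m2 m1
      · exact eLpNorm_smul_le_mul_eLpNorm hg0.1 m1
    · exact eLpNorm_smul_le_mul_eLpNorm m2 hf0.1
  refine tendsto_of_tendsto_of_tendsto_of_le_of_le tendsto_const_nhds ?_ (fun n => zero_le) hb
  have t1 := ENNReal.Tendsto.mul hfl (Or.inr ENNReal.zero_ne_top) hgl (Or.inr ENNReal.zero_ne_top)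
  have t2 := ENNReal.Tendsto.mul_const hfl (Or.inr hg0.2.ne) (b := eLpNorm g0 q volume)
  have t3 := ENNReal.Tendsto.const_mul hgl (Or.inr hf0.2.ne) (a := eLpNorm f0 p volume)
  simpa using (t1.add t2).add t3

/-- pairing convergence -/
lemma tendsto_pair {p q : ℝ≥0∞} [hpqr : ENNReal.HolderTriple p q 1]
    {f0 : E3 → ℝ} {g : ℕ → E3 → ℝ} {g0 : E3 → ℝ}
    (hf0 : MemLp f0 p volume) (hg0 : MemLp g0 q volume)
    (hg : ∀ n, MemLp (g n) q volume)
    (hgl : Tendsto (fun n => eLpNorm (fun x => g n x - g0 x) q volume) atTop (𝓝 0)) :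
    Tendsto (fun n => ∫ x, f0 x * g n x) atTop (𝓝 (∫ x, f0 x * g0 x)) := by
  have h := tendsto_mul_Lp (r := 1) le_rfl hf0 hg0 (fun n => hf0.1) (fun n => (hg n).1)
    (f := fun _ => f0) (by simp) hgl
  exact tendsto_integral_of_L1' _ (hf0.1.mul hg0.1)
    (Eventually.of_forall fun n => hf0.integrable_mul (hg n)) h


lemma riesz_factor {V H : Type*} [AddCommGroup V] [Module ℝ V] [NormedAddCommGroup H]
    [InnerProductSpace ℝ H] [CompleteSpace H] (T : V →ₗ[ℝ] H) (l : V →ₗ[ℝ] ℝ) (A : ℝ)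
    (hA : ∀ v, |l v| ≤ A * ‖T v‖) : ∃ w : H, ∀ v, l v = inner ℝ w (T v) := by
  have hker : ∀ v, T v = 0 → l v = 0 := by
    intro v hv
    have := hA v
    rw [hv, norm_zero, mul_zero] at this
    exact abs_nonpos_iff.1 this
  have hsur : ∀ r : LinearMap.range T, ∃ v, T v = r := fun r => r.2
  choose σ hσ using hsur
  have hl : ∀ v w, T v = T w → l v = l w := by
    intro v w h
    have := hker (v - w) (by rw [map_sub, h, sub_self])
    rw [map_sub] at this
    linarith
  let f0 : LinearMap.range T →ₗ[ℝ] ℝ :=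
    { toFun := fun r => l (σ r)
      map_add' := by
        intro r s
        rw [← map_add]
        apply hl
        rw [map_add, hσ, hσ, hσ]
        rfl
      map_smul' := by
        intro c r
        rw [RingHom.id_apply, ← map_smul]
        apply hl
        rw [map_smul, hσ, hσ]
        rfl }
  let f : LinearMap.range T →L[ℝ] ℝ := f0.mkContinuous A (by
    intro r
    have := hA (σ r)
    rw [hσ] at this
    exact this)
  obtain ⟨g, hg, -⟩ := _root_.exists_extension_norm_eq (𝕜 := ℝ) (LinearMap.range T) f
  refine ⟨(InnerProductSpace.toDual ℝ H).symm g, fun v => ?_⟩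
  rw [InnerProductSpace.toDual_symm_apply]
  have := hg ⟨T v, LinearMap.mem_range_self T v⟩
  simp only at this
  rw [this]
  exact hl _ _ (hσ ⟨T v, LinearMap.mem_range_self T v⟩).symm

/-- The kernel pair: `Ψ` and `g` with `Δ Ψ = 2 (3 g + y·∇g)`. -/
lemma kernel_exists : ∃ Ψ g : E3 → ℝ, TF Ψ ∧ TF g ∧ (∀ y, g y ≠ 0 → ‖y‖ ≤ 2) ∧
    (∀ y, Lap Ψ y ≠ 0 → ‖y‖ ≤ 2) ∧ (∫ y, g y ≠ 0) ∧
    (∀ y, Lap Ψ y = 2 * (3 * g y + fderiv ℝ g y y)) := by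
  let H : ℝ → ℝ := fun t => - Real.smoothTransition (2 - t)
  have hH : ContDiff ℝ ∞ H :=
    (Real.smoothTransition.contDiff.comp (contDiff_const.sub contDiff_id)).neg
  have hH0 : ∀ t, 2 ≤ t → H t = 0 := by
    intro t ht
    simp only [H, neg_eq_zero]
    exact Real.smoothTransition.zero_of_nonpos (by linarith)
  let h := deriv H
  have hh : ContDiff ℝ ∞ h := by
    have : ContDiff ℝ (((⊤ : ℕ∞) : WithTop ℕ∞) + 1) H := by simpa using hH
    exact (contDiff_succ_iff_deriv.1 this).2.2
  have hh0 : ∀ t, 2 < t → h t = 0 := by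
    intro t ht
    have : H =ᶠ[𝓝 t] fun _ => 0 := by
      filter_upwards [Ioi_mem_nhds ht] with s hs using hH0 s (le_of_lt hs)
    simp only [h]
    rw [this.deriv_eq, deriv_const]
  let Ψ : E3 → ℝ := fun y => H (‖y‖ ^ 2)
  let g : E3 → ℝ := fun y => h (‖y‖ ^ 2)
  have hsq : ContDiff ℝ ∞ (fun y : E3 => ‖y‖ ^ 2) := contDiff_norm_sq ℝ
  have hΨs : ∀ y : E3, 2 < ‖y‖ → 2 < ‖y‖ ^ 2 := by
    intro y hy
    nlinarith
  have hΨ : TF Ψ := by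
    refine ⟨hH.comp hsq, ?_⟩
    refine HasCompactSupport.of_support_subset_isCompact (isCompact_closedBall (0:E3) 2) ?_
    intro y hy
    rw [mem_closedBall, dist_zero_right]
    by_contra hc
    exact hy (hH0 _ (hΨs y (not_le.1 hc)).le)
  have hgs : ∀ y, g y ≠ 0 → ‖y‖ ≤ 2 := by
    intro y hy
    by_contra hc
    exact hy (hh0 _ (hΨs y (not_le.1 hc)))
  have hg : TF g := by
    refine ⟨hh.comp hsq, ?_⟩
    refine HasCompactSupport.of_support_subset_isCompact (isCompact_closedBall (0:E3) 2) ?_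
    intro y hy
    rw [mem_closedBall, dist_zero_right]
    exact hgs y hy
  have hpdΨ : ∀ i y, pd Ψ i y = 2 * (y i * g y) := by
    intro i y
    have h1 : HasFDerivAt (fun y : E3 => ‖y‖ ^ 2) (2 • innerSL ℝ y) y :=
      (hasStrictFDerivAt_norm_sq y).hasFDerivAt
    have h2 : HasDerivAt H (h (‖y‖ ^ 2)) (‖y‖ ^ 2) :=
      (hH.differentiable (by simp) _).hasDerivAt
    have h3 := h2.comp_hasFDerivAt y h1
    unfold pd
    have h4 : fderiv ℝ Ψ y = _ := h3.fderiv
    rw [h4]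
    simp [g, EuclideanSpace.inner_single_right]
    ring
  have hcoord : ∀ i : Fin 3, Differentiable ℝ (fun y : E3 => y i) := fun i => by fun_prop
  have hpdc : ∀ (i : Fin 3) (y : E3), pd (fun y : E3 => y i) i y = 1 := by
    intro i y
    unfold pd
    have : HasFDerivAt (fun y : E3 => y i) (EuclideanSpace.proj i : E3 →L[ℝ] ℝ) y :=
      (EuclideanSpace.proj i : E3 →L[ℝ] ℝ).hasFDerivAt
    rw [this.fderiv]
    simp
  have hlap : ∀ y, Lap Ψ y = 2 * (3 * g y + fderiv ℝ g y y) := by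
    intro y
    have : ∀ i, pd (pd Ψ i) i y = 2 * (g y + y i * pd g i y) := by
      intro i
      have e : pd Ψ i = fun y => 2 * (y i * g y) := funext (hpdΨ i)
      rw [e, pd_const_mul _ ((hcoord i y).fun_mul (hg.diff y)), pd_mul (hcoord i y) (hg.diff y), hpdc]
      ring
    unfold Lap
    simp_rw [this]
    rw [fderiv_eq_sum, ← Finset.mul_sum, Finset.sum_add_distrib]
    simp
  refine ⟨Ψ, g, hΨ, hg, hgs, ?_, ?_, hlap⟩
  · intro y hy
    by_contra hc
    apply hy
    have : g =ᶠ[𝓝 y] fun _ => 0 := by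
      have : {z : E3 | 2 < ‖z‖} ∈ 𝓝 y :=
        (isOpen_lt continuous_const continuous_norm).mem_nhds (not_le.1 hc)
      filter_upwards [this] with z hz
      exact hh0 _ (hΨs z hz)
    rw [hlap, this.fderiv_eq, this.eq_of_nhds]
    simp
  · have hnn : ∀ t, 0 ≤ h t := by
      intro t
      have : Monotone H := by
        intro a b hab
        simp only [H]
        exact neg_le_neg (Real.smoothTransition.monotone (by linarith))
      exact this.deriv_nonneg
    have hne : ∃ t ∈ Ioo (0:ℝ) 2, h t ≠ 0 := by
      obtain ⟨t, ht, he⟩ := exists_deriv_eq_slope H (by norm_num : (0:ℝ) < 2)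
        hH.continuous.continuousOn (hH.differentiable (by simp)).differentiableOn
      refine ⟨t, ht, ?_⟩
      have h1 : H 0 = -1 := by
        simp only [H]
        rw [Real.smoothTransition.one_of_one_le (by norm_num)]
      have : h t = (H 2 - H 0) / (2 - 0) := he
      rw [this, hH0 2 le_rfl, h1]
      norm_num
    obtain ⟨t, ht, hne⟩ := hne
    refine (hg.cont.integral_pos_of_hasCompactSupport_nonneg_nonzero hg.2 (fun y => hnn _)
      (x := EuclideanSpace.single 0 (Real.sqrt t)) ?_).ne'
    simp only [g]
    rw [PiLp.norm_single, Real.norm_of_nonneg (Real.sqrt_nonneg _),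
      Real.sq_sqrt ht.1.le]
    exact hne


lemma cs_abs {α : Type*} [MeasurableSpace α] {μ : Measure α} {f g : α → ℝ} (hf : MemLp f 2 μ) (hg : MemLp g 2 μ) :
    ∫ x, |f x * g x| ∂μ ≤ Real.sqrt (∫ x, f x ^ 2 ∂μ) * Real.sqrt (∫ x, g x ^ 2 ∂μ) := by
  have h := integral_mul_le_Lp_mul_Lq_of_nonneg (μ := μ) (Real.HolderConjugate.two_two)
    (f := fun x => |f x|) (g := fun x => |g x|) (Eventually.of_forall fun x => abs_nonneg _)
    (Eventually.of_forall fun x => abs_nonneg _) (by simpa using hf.norm) (by simpa using hg.norm)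
  simp only [abs_mul]
  simpa [Real.sqrt_eq_rpow] using h

lemma cs_int {α : Type*} [MeasurableSpace α] {μ : Measure α} {f g : α → ℝ} (hf : MemLp f 2 μ) (hg : MemLp g 2 μ) :
    |∫ x, f x * g x ∂μ| ≤ Real.sqrt (∫ x, f x ^ 2 ∂μ) * Real.sqrt (∫ x, g x ^ 2 ∂μ) :=
  (abs_integral_le_integral_abs).trans (cs_abs hf hg)

lemma TF.comp_affine {f : E3 → ℝ} (h : TF f) {b : ℝ} (hb : b ≠ 0) (x : E3) :
    TF (fun y => f (b • (y - x))) := by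
  have h1 := h.comp_smul hb
  refine ⟨h1.1.comp (contDiff_id.sub contDiff_const), ?_⟩
  exact h1.2.comp_homeomorph (Homeomorph.subRight x)

lemma pd_comp_affine {f : E3 → ℝ} (hf : Differentiable ℝ f) (b : ℝ) (i : Fin 3) (x y : E3) :
    pd (fun y => f (b • (y - x))) i y = b * pd f i (b • (y - x)) := by
  rw [← pd_comp_smul hf]
  unfold pd
  rw [fderiv_comp_sub (f := fun y => f (b • y))]

lemma Lap_comp_affine {f : E3 → ℝ} (hf : TF f) (b : ℝ) (x y : E3) :
    Lap (fun y => f (b • (y - x))) y = b ^ 2 * Lap f (b • (y - x)) := by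
  unfold Lap
  rw [Finset.mul_sum]
  refine Finset.sum_congr rfl fun i _ => ?_
  have e : pd (fun y => f (b • (y - x))) i = fun y => b * pd f i (b • (y - x)) :=
    funext fun y => pd_comp_affine hf.diff b i x y
  rw [e]
  have hd : Differentiable ℝ (fun y => pd f i (b • (y - x))) := by
    have := (hf.pd i).diff
    exact this.comp (by fun_prop)
  rw [pd_const_mul _ (hd y), pd_comp_affine (hf.pd i).diff]
  ring

/-- Liouville theorem for weakly harmonic functions in `L¹ + L²`. -/
lemma weak_liouville {p w : E3 → ℝ} (hp : Integrable p volume) (hw : MemLp w 2 volume)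
    (h0 : ∀ ψ, TF ψ → ∫ x, (p x - w x) * Lap ψ x = 0) : p =ᵐ[volume] w := by
  obtain ⟨Ψ, g, hΨ, hg, hgs, hΨs, hgi, hlap⟩ := kernel_exists
  set h : E3 → ℝ := fun x => p x - w x with hdef
  have hwl : LocallyIntegrable w volume := hw.locallyIntegrable (by norm_num)
  have hl : LocallyIntegrable h volume := hp.locallyIntegrable.sub hwl
  have hint : ∀ f : E3 → ℝ, TF f → Integrable (fun y => h y * f y) volume := by
    intro f hf
    simpa [mul_comm] using hl.integrable_smul_left_of_hasCompactSupport hf.cont hf.2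
  let V : E3 → ℝ → ℝ := fun x b => ∫ y, h y * (b ^ 3 * g (b • (y - x)))
  obtain ⟨C, hC0, hC⟩ := hΨ.lap.bdd
  obtain ⟨D, hD0, hD⟩ := hg.bdd
  have hder : ∀ x b, 0 < b → HasDerivAt (V x) 0 b := by
    intro x b hb
    have key := (hasDerivAt_integral_of_dominated_loc_of_deriv_le (μ := volume)
      (F := fun b y => h y * (b ^ 3 * g (b • (y - x))))
      (F' := fun b y => h y * (b ^ 2 / 2 * Lap Ψ (b • (y - x))))
      (x₀ := b) (s := ball b (b / 2))
      (bound := fun y => (closedBall x (4 / b)).indicator (fun y => |h y| * ((2 * b) ^ 2 / 2 * C)) y)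
      (ball_mem_nhds b (by positivity)) ?_ ?_ ?_ ?_ ?_ ?_).2
    · have e : ∫ y, h y * (b ^ 2 / 2 * Lap Ψ (b • (y - x))) = 0 := by
        have := h0 _ (hΨ.comp_affine hb.ne' x)
        simp only [Lap_comp_affine hΨ] at this
        have e2 : ∀ y, h y * (b ^ 2 / 2 * Lap Ψ (b • (y - x))) =
          (1 / 2) * ((p y - w y) * (b ^ 2 * Lap Ψ (b • (y - x)))) := by
          intro y
          simp only [hdef]
          ring
        simp_rw [e2]
        rw [integral_const_mul, this, mul_zero]
      rw [e] at key
      exact key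
    · filter_upwards with a
      refine hl.aestronglyMeasurable.mul ?_
      exact (continuous_const.mul (hg.cont.comp (by fun_prop))).aestronglyMeasurable
    · exact hint _ ((hg.comp_affine hb.ne' x).const_mul _)
    · refine hl.aestronglyMeasurable.mul ?_
      exact (continuous_const.mul (hΨ.lap.cont.comp (by fun_prop))).aestronglyMeasurable
    · filter_upwards with y
      intro a ha
      rw [mem_ball, Real.dist_eq, abs_lt] at ha
      have ha0 : 0 < a := by linarith
      by_cases hy : y ∈ closedBall x (4 / b)
      · rw [indicator_of_mem hy, norm_mul, Real.norm_eq_abs, Real.norm_eq_abs, abs_mul,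
          abs_of_nonneg (by positivity : 0 ≤ a ^ 2 / 2)]
        gcongr
        · linarith
        · exact hC _
      · rw [indicator_of_notMem hy]
        have : Lap Ψ (a • (y - x)) = 0 := by
          by_contra hne
          apply hy
          have := hΨs _ hne
          rw [norm_smul, Real.norm_of_nonneg ha0.le] at this
          rw [mem_closedBall, dist_eq_norm, le_div_iff₀ hb]
          have := norm_nonneg (y - x)
          nlinarith
        rw [this]
        simp
    · rw [integrable_indicator_iff measurableSet_closedBall]
      exact ((hl.integrableOn_isCompact (isCompact_closedBall _ _)).abs).mul_const _
    · filter_upwards with y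
      intro a ha
      rw [mem_ball, Real.dist_eq, abs_lt] at ha
      have ha0 : 0 < a := by linarith
      have h1 : HasDerivAt (fun a : ℝ => a • (y - x)) (y - x) a := by
        simpa using (hasDerivAt_id a).smul_const (y - x)
      have h2 : HasDerivAt (fun a : ℝ => g (a • (y - x))) (fderiv ℝ g (a • (y - x)) (y - x)) a :=
        (hg.diff _).hasFDerivAt.comp_hasDerivAt a h1
      have h3 := ((hasDerivAt_pow 3 a).mul h2).const_mul (h y)
      refine h3.congr_deriv ?_
      rw [hlap, map_smul, smul_eq_mul]
      push_cast
      ring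
  have hconst : ∀ x, ∃ c, ∀ b ∈ Ioi (0:ℝ), V x b = c := by
    intro x
    refine IsOpen.exists_is_const_of_deriv_eq_zero isOpen_Ioi isPreconnected_Ioi ?_ ?_
    · exact fun b hb => (hder x b hb).differentiableAt.differentiableWithinAt
    · exact fun b hb => (hder x b hb).deriv
  -- decay as `b → 0`
  have hV0 : ∀ x, ∀ b ∈ Ioi (0:ℝ), V x b = 0 := by
    intro x
    obtain ⟨c, hc⟩ := hconst x
    suffices hc0 : c = 0 by
      intro b hb
      rw [hc b hb, hc0]
    have hbound : ∀ b ∈ Ioi (0:ℝ), |c| ≤ b ^ 3 * (D * ∫ y, |p y|) +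
        Real.sqrt (b ^ 3) * (Real.sqrt (∫ y, w y ^ 2) * Real.sqrt (∫ y, g y ^ 2)) := by
      intro b hb
      have hb' : 0 < b := hb
      have hgb := hg.comp_affine hb'.ne' x
      have i1 : Integrable (fun y => p y * (b ^ 3 * g (b • (y - x)))) volume := by
        have := hp.locallyIntegrable.integrable_smul_left_of_hasCompactSupport
          (hgb.const_mul (b ^ 3)).cont (hgb.const_mul (b ^ 3)).2
        simpa [mul_comm] using this
      have i2 : Integrable (fun y => w y * (b ^ 3 * g (b • (y - x)))) volume := by
        have := hwl.integrable_smul_left_of_hasCompactSupport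
          (hgb.const_mul (b ^ 3)).cont (hgb.const_mul (b ^ 3)).2
        simpa [mul_comm] using this
      have e : c = (∫ y, p y * (b ^ 3 * g (b • (y - x)))) -
          ∫ y, w y * (b ^ 3 * g (b • (y - x))) := by
        rw [← integral_sub i1 i2, ← hc b hb]
        refine integral_congr_ae (Eventually.of_forall fun y => ?_)
        simp only [hdef]
        ring
      have b1 : |∫ y, p y * (b ^ 3 * g (b • (y - x)))| ≤ b ^ 3 * (D * ∫ y, |p y|) := by
        refine abs_integral_le_integral_abs.trans ?_
        rw [← mul_assoc, ← integral_const_mul]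
        refine integral_mono i1.abs (hp.abs.const_mul _) fun y => ?_
        simp only [abs_mul]
        rw [abs_of_nonneg (by positivity : 0 ≤ b ^ 3), mul_comm]
        gcongr
        exact hD _
      have b2 : |∫ y, w y * (b ^ 3 * g (b • (y - x)))| ≤
          Real.sqrt (b ^ 3) * (Real.sqrt (∫ y, w y ^ 2) * Real.sqrt (∫ y, g y ^ 2)) := by
        refine (cs_int hw ((hgb.const_mul (b ^ 3)).memLp 2)).trans (le_of_eq ?_)
        have e3 : ∫ y, (b ^ 3 * g (b • (y - x))) ^ 2 = b ^ 3 * ∫ y, g y ^ 2 := by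
          have : ∫ y, (b ^ 3 * g (b • (y - x))) ^ 2 = ∫ y, (b ^ 3 * g (b • y)) ^ 2 :=
            integral_sub_right_eq_self (fun y => (b ^ 3 * g (b • y)) ^ 2) x
          rw [this]
          simp only [mul_pow]
          rw [integral_const_mul, Measure.integral_comp_smul volume (fun y => g y ^ 2) b]
          simp only [finrank_euclideanSpace, Fintype.card_fin, smul_eq_mul]
          rw [abs_of_nonneg (by positivity)]
          field_simp
        rw [e3, Real.sqrt_mul (by positivity)]
        ring
      rw [e]
      exact (abs_sub _ _).trans (add_le_add b1 b2)
    have hlim : Tendsto (fun b : ℝ => b ^ 3 * (D * ∫ y, |p y|) +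
        Real.sqrt (b ^ 3) * (Real.sqrt (∫ y, w y ^ 2) * Real.sqrt (∫ y, g y ^ 2)))
        (𝓝[>] 0) (𝓝 0) := by
      have hcont : Continuous (fun b : ℝ => b ^ 3 * (D * ∫ y, |p y|) +
        Real.sqrt (b ^ 3) * (Real.sqrt (∫ y, w y ^ 2) * Real.sqrt (∫ y, g y ^ 2))) := by
        fun_prop
      have := hcont.tendsto 0
      simp only [ne_eq, OfNat.ofNat_ne_zero, not_false_eq_true, zero_pow, zero_mul,
        Real.sqrt_zero, add_zero] at this
      exact this.mono_left nhdsWithin_le_nhds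
    have : |c| ≤ 0 := ge_of_tendsto hlim (by
      filter_upwards [self_mem_nhdsWithin] with b hb using hbound b hb)
    exact abs_nonpos_iff.1 this
  -- Lebesgue points
  have hae := IsUnifLocDoublingMeasure.ae_tendsto_average_norm_sub (volume : Measure E3) hl 1
  filter_upwards [hae] with x hx
  set m := (volume (closedBall (0:E3) 1)).toReal with hm
  have hδ : Tendsto (fun n : ℕ => 2 / ((n:ℝ) + 1)) atTop (𝓝[>] 0) := by
    refine tendsto_nhdsWithin_iff.2 ⟨?_, Eventually.of_forall fun n => ?_⟩
    · simpa using (tendsto_one_div_add_atTop_nhds_zero_nat (𝕜 := ℝ)).const_mul 2 |>.congr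
        (fun n => by ring)
    · show (0:ℝ) < 2 / ((n:ℝ) + 1)
      positivity
  have hav := hx (fun _ => x) (fun n : ℕ => 2 / ((n:ℝ) + 1)) hδ
    (Eventually.of_forall fun n => mem_closedBall_self (by positivity))
  have hb2 : ∀ n : ℕ, |h x * ∫ y, g y| ≤
      D * (8 * m) * ⨍ y in closedBall x (2 / ((n:ℝ) + 1)), ‖h y - h x‖ := by
    intro n
    set b : ℝ := (n:ℝ) + 1 with hbd
    have hb : 0 < b := by positivity
    have hgb := hg.comp_affine hb.ne' x
    have e1 : h x * ∫ y, g y = ∫ y, h x * (b ^ 3 * g (b • (y - x))) := by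
      rw [integral_const_mul, integral_const_mul,
        integral_sub_right_eq_self (fun y => g (b • y)) x,
        Measure.integral_comp_smul volume g b]
      simp only [finrank_euclideanSpace, Fintype.card_fin, smul_eq_mul]
      rw [abs_of_nonneg (by positivity)]
      field_simp
    have e2 : - (h x * ∫ y, g y) = ∫ y, (h y - h x) * (b ^ 3 * g (b • (y - x))) := by
      simp only [sub_mul]
      rw [integral_sub (hint _ (hgb.const_mul _)) ((hgb.const_mul _).integrable.const_mul _),
        ← e1]
      have := hV0 x b hb
      simp only [V] at this
      rw [this]
      ring
    rw [← abs_neg, e2]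
    have hsub : ∀ y, |(h y - h x) * (b ^ 3 * g (b • (y - x)))| ≤
        (closedBall x (2 / b)).indicator (fun y => D * b ^ 3 * ‖h y - h x‖) y := by
      intro y
      by_cases hy : y ∈ closedBall x (2 / b)
      · rw [indicator_of_mem hy, abs_mul, abs_mul, abs_of_nonneg (by positivity : 0 ≤ b ^ 3),
          Real.norm_eq_abs]
        have := hD (b • (y - x))
        have h3 := abs_nonneg (h y - h x)
        calc _ ≤ |h y - h x| * (b ^ 3 * D) := by gcongr
          _ = _ := by ring
      · rw [indicator_of_notMem hy]
        have : g (b • (y - x)) = 0 := by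
          by_contra hne
          apply hy
          have := hgs _ hne
          rw [norm_smul, Real.norm_of_nonneg hb.le] at this
          rw [mem_closedBall, dist_eq_norm, le_div_iff₀ hb]
          linarith
        rw [this]
        simp
    have hio : IntegrableOn (fun y => ‖h y - h x‖) (closedBall x (2 / b)) volume :=
      ((hl.integrableOn_isCompact (isCompact_closedBall _ _)).sub
        (integrableOn_const (by exact measure_closedBall_lt_top.ne))).norm
    have hvol : volume.real (closedBall x (2 / b)) = 8 / b ^ 3 * m := by
      rw [Measure.real, Measure.addHaar_closedBall' volume x (by positivity), ENNReal.toReal_mul, hm]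
      simp only [finrank_euclideanSpace, Fintype.card_fin]
      rw [ENNReal.toReal_ofReal (by positivity)]
      congr 1
      rw [div_pow]
      norm_num
    have hmpos : 0 < m := ENNReal.toReal_pos
      (measure_closedBall_pos volume (0:E3) one_pos).ne' measure_closedBall_lt_top.ne
    refine abs_integral_le_integral_abs.trans ?_
    refine (integral_mono_of_nonneg (Eventually.of_forall fun y => abs_nonneg _)
      ((integrable_indicator_iff measurableSet_closedBall).2 (Integrable.const_mul hio _))
      (Eventually.of_forall hsub)).trans (le_of_eq ?_)
    rw [integral_indicator measurableSet_closedBall, integral_const_mul, setAverage_eq, hvol,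
      smul_eq_mul]
    field_simp
  have hz : |h x * ∫ y, g y| ≤ 0 := by
    refine ge_of_tendsto (f := fun n : ℕ => D * (8 * m) *
      ⨍ y in closedBall x (2 / ((n:ℝ) + 1)), ‖h y - h x‖) (x := atTop) ?_
      (Eventually.of_forall hb2)
    simpa using hav.const_mul (D * (8 * m))
  have := abs_nonpos_iff.1 hz
  have hhx : h x = 0 := (mul_eq_zero.1 this).resolve_right hgi
  simp only [hdef] at hhx
  linarith

theorem memLp_two_of_weak_bound {p : E3 → ℝ} (hp : Integrable p volume) (A : ℝ)
    (hA : ∀ ψ, TF ψ → |∫ x, p x * Lap ψ x| ≤ A * Real.sqrt (∫ x, Lap ψ x ^ 2)) :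
    MemLp p 2 volume := by
  have hlin : ∀ f g : E3 → ℝ, TF f → TF g → Lap (f + g) = Lap f + Lap g := by
    intro f g hf hg
    ext x
    simp only [Lap, Pi.add_apply, ← Finset.sum_add_distrib]
    refine Finset.sum_congr rfl fun i _ => ?_
    have : pd (f + g) i = fun x => pd f i x + pd g i x :=
      funext fun x => pd_add (hf.diff x) (hg.diff x) i
    rw [this]
    exact pd_add ((hf.pd i).diff x) ((hg.pd i).diff x) i
  have hsm : ∀ (c : ℝ) (f : E3 → ℝ), TF f → Lap (c • f) = c • Lap f := by
    intro c f hf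
    ext x
    simp only [Lap, Pi.smul_apply, smul_eq_mul, Finset.mul_sum]
    refine Finset.sum_congr rfl fun i _ => ?_
    have : pd (c • f) i = fun x => c * pd f i x :=
      funext fun x => pd_const_mul c (hf.diff x) i
    rw [this]
    exact pd_const_mul c ((hf.pd i).diff x) i
  let W : Submodule ℝ (E3 → ℝ) :=
    { carrier := {f | TF f}
      add_mem' := fun hf hg => hf.add hg
      zero_mem' := ⟨contDiff_const, HasCompactSupport.zero⟩
      smul_mem' := fun c f hf => hf.const_mul c }
  have hW : ∀ f : W, TF f.1 := fun f => f.2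
  let T : W →ₗ[ℝ] Lp ℝ 2 (volume : Measure E3) :=
    { toFun := fun f => ((hW f).lap.memLp 2).toLp _
      map_add' := by
        intro f g
        rw [← MemLp.toLp_add]
        simp only [Submodule.coe_add, hlin _ _ (hW f) (hW g)]
      map_smul' := by
        intro c f
        rw [RingHom.id_apply, ← MemLp.toLp_const_smul]
        simp only [Submodule.coe_smul, hsm c _ (hW f)] }
  have hpi : ∀ f : E3 → ℝ, TF f → Integrable (fun x => p x * f x) volume := by
    intro f hf
    simpa [mul_comm] using
      hp.locallyIntegrable.integrable_smul_left_of_hasCompactSupport hf.cont hf.2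
  let l : W →ₗ[ℝ] ℝ :=
    { toFun := fun f => ∫ x, p x * Lap f.1 x
      map_add' := by
        intro f g
        rw [← integral_add (hpi _ (hW f).lap) (hpi _ (hW g).lap)]
        simp only [Submodule.coe_add, hlin _ _ (hW f) (hW g), Pi.add_apply, mul_add]
      map_smul' := by
        intro c f
        rw [RingHom.id_apply, smul_eq_mul, ← integral_const_mul]
        simp only [Submodule.coe_smul, hsm c _ (hW f), Pi.smul_apply, smul_eq_mul]
        refine integral_congr_ae (Eventually.of_forall fun x => ?_)
        simp only
        ring }
  have hnorm : ∀ f : W, ‖T f‖ = Real.sqrt (∫ x, Lap f.1 x ^ 2) := by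
    intro f
    rw [@norm_eq_sqrt_real_inner _ _ _ (T f), L2.inner_def]
    congr 1
    refine integral_congr_ae ?_
    filter_upwards [((hW f).lap.memLp 2).coeFn_toLp] with x hx
    have : (T f : E3 → ℝ) x = Lap f.1 x := hx
    rw [this]
    simp [sq]
  obtain ⟨w, hw⟩ := riesz_factor T l A (by
    intro f
    rw [hnorm]
    exact hA _ (hW f))
  have hwm : MemLp w 2 volume := Lp.memLp w
  have : p =ᵐ[volume] w := by
    refine weak_liouville hp hwm fun ψ hψ => ?_
    have h1 := hw ⟨ψ, hψ⟩
    rw [L2.inner_def] at h1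
    have h2 : ∫ x, inner ℝ (w x) (T ⟨ψ, hψ⟩ x) = ∫ x, w x * Lap ψ x := by
      refine integral_congr_ae ?_
      filter_upwards [(hψ.lap.memLp 2).coeFn_toLp] with x hx
      have : (T ⟨ψ, hψ⟩ : E3 → ℝ) x = Lap ψ x := hx
      rw [this]
      simp [mul_comm]
    rw [h2] at h1
    have h3 : ∫ x, p x * Lap ψ x = ∫ x, w x * Lap ψ x := h1
    simp only [sub_mul]
    have i2 : Integrable (fun x => w x * Lap ψ x) volume := hwm.integrable_mul (hψ.lap.memLp 2)
    rw [integral_sub (hpi _ hψ.lap) i2, h3, sub_self]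
  exact hwm.ae_eq this.symm


lemma trans_tendsto {a : E3 → ℝ} {p : ℝ≥0∞} (hp1 : 1 ≤ p) (hp : p ≠ ⊤) (ha : MemLp a p volume)
    {z : ℕ → E3} (hz : Tendsto z atTop (𝓝 0)) :
    Tendsto (fun n => eLpNorm (fun y => a (y + z n) - a y) p volume) atTop (𝓝 0) := by
  haveI : Fact (1 ≤ p) := ⟨hp1⟩
  let g : E3 → C(E3, E3) := fun w => ⟨fun y => y + w, by fun_prop⟩
  have hgc : Continuous g := by
    refine ContinuousMap.continuous_of_continuous_uncurry _ ?_
    show Continuous (fun q : E3 × E3 => q.2 + q.1)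
    fun_prop
  have hgm : ∀ w, MeasurePreserving (g w) volume volume := fun w =>
    measurePreserving_add_right volume w
  have hc : Continuous (fun w => Lp.compMeasurePreserving (g w) (hgm w) (ha.toLp a)) :=
    Continuous.compMeasurePreservingLp continuous_const hgc hgm hp
  have h1 := (hc.tendsto 0).comp hz
  rw [tendsto_iff_edist_tendsto_0] at h1
  refine h1.congr fun n => ?_
  simp only [Function.comp]
  rw [Lp.edist_def]
  refine eLpNorm_congr_ae ?_
  have e1 := Lp.coeFn_compMeasurePreserving (ha.toLp a) (hgm (z n))
  have e2 := Lp.coeFn_compMeasurePreserving (ha.toLp a) (hgm 0)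
  have e3 := ha.coeFn_toLp
  have e4 := (hgm (z n)).quasiMeasurePreserving.ae_eq_comp e3
  have e5 := (hgm 0).quasiMeasurePreserving.ae_eq_comp e3
  filter_upwards [e1, e2, e4, e5] with y h1 h2 h4 h5
  simp only [Pi.sub_apply]
  rw [h1, h2, h4, h5]
  simp [g]

lemma jensen_prod {P : Measure E3} [IsProbabilityMeasure P] {p : ℝ≥0∞} (hp1 : 1 ≤ p) (hp : p ≠ ⊤)
    {F : E3 → E3 → ℝ} (hF : Measurable (Function.uncurry F)) :
    eLpNorm (fun y => ∫ w, F y w ∂P) p volume ^ p.toReal ≤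
      ∫⁻ w, eLpNorm (fun y => F y w) p volume ^ p.toReal ∂P := by
  have hp0 : p ≠ 0 := (one_pos.trans_le hp1).ne'
  have hpt : 0 < p.toReal := ENNReal.toReal_pos hp0 hp
  have key : ∀ {m : Measure E3} (f : E3 → ℝ), eLpNorm f p m ^ p.toReal = ∫⁻ y, ‖f y‖ₑ ^ p.toReal ∂m := by
    intro m f
    rw [eLpNorm_eq_lintegral_rpow_enorm_toReal hp0 hp, ← ENNReal.rpow_mul, one_div,
      inv_mul_cancel₀ hpt.ne', ENNReal.rpow_one]
  simp only [key]
  rw [lintegral_lintegral_swap]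
  · refine lintegral_mono fun y => ?_
    rw [← key]
    refine ENNReal.rpow_le_rpow ?_ hpt.le
    refine (enorm_integral_le_lintegral_enorm _).trans ?_
    rw [← eLpNorm_one_eq_lintegral_enorm]
    exact eLpNorm_le_eLpNorm_of_exponent_le hp1
      (hF.comp measurable_prodMk_left).aestronglyMeasurable
  · exact ((hF.comp measurable_swap).enorm.pow_const _).aemeasurable

lemma eLpNorm_trans (a : E3 → ℝ) (hm : Measurable a) (p : ℝ≥0∞) (z : E3) :
    eLpNorm (fun y => a (y + z)) p volume = eLpNorm a p volume :=
  eLpNorm_comp_measurePreserving hm.aestronglyMeasurable (measurePreserving_add_right volume z)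

lemma MemLp.trans {a : E3 → ℝ} (p : ℝ≥0∞) (h : MemLp a p volume) (z : E3) :
    MemLp (fun y => a (y + z)) p volume :=
  h.comp_measurePreserving (measurePreserving_add_right volume z)

lemma avg_le {P : Measure E3} [IsProbabilityMeasure P] {p : ℝ≥0∞} (hp1 : 1 ≤ p) (hp : p ≠ ⊤)
    {g : E3 → ℝ} (hg : Measurable g) (ε : ℝ) :
    eLpNorm (fun y => ∫ w, g (y + ε • w) ∂P) p volume ≤ eLpNorm g p volume := by
  have hp0 : p ≠ 0 := (one_pos.trans_le hp1).ne'
  have hpt : 0 < p.toReal := ENNReal.toReal_pos hp0 hp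
  have h := jensen_prod (P := P) hp1 hp (F := fun y w => g (y + ε • w))
    (hg.comp (by fun_prop))
  simp only [eLpNorm_trans g hg, lintegral_const, measure_univ, mul_one] at h
  exact (ENNReal.rpow_le_rpow_iff hpt).1 h

lemma avg_tendsto {P : Measure E3} [IsProbabilityMeasure P] {p : ℝ≥0∞} (hp1 : 1 ≤ p) (hp : p ≠ ⊤)
    {g : E3 → ℝ} (hg : Measurable g) (hgp : MemLp g p volume) {ε : ℕ → ℝ}
    (hε : Tendsto ε atTop (𝓝 0)) :
    Tendsto (fun n => eLpNorm (fun y => ∫ w, g (y + ε n • w) ∂P - g y) p volume) atTop (𝓝 0) := by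
  have hp0 : p ≠ 0 := (one_pos.trans_le hp1).ne'
  have hpt : 0 < p.toReal := ENNReal.toReal_pos hp0 hp
  -- integrability of sections
  have hint : ∀ e : ℝ, ∀ᵐ y, Integrable (fun w => g (y + e • w)) P := by
    intro e
    have hm : Measurable (fun q : E3 × E3 => g (q.1 + e • q.2)) := hg.comp (by fun_prop)
    have h1 : ∫⁻ y, ∫⁻ w, ‖g (y + e • w)‖ₑ ^ p.toReal ∂P ∂volume ≠ ⊤ := by
      rw [lintegral_lintegral_swap (hm.enorm.pow_const _).aemeasurable]
      have : ∀ w, ∫⁻ y, ‖g (y + e • w)‖ₑ ^ p.toReal = ∫⁻ y, ‖g y‖ₑ ^ p.toReal := fun w =>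
        lintegral_add_right_eq_self (fun y => ‖g y‖ₑ ^ p.toReal) (e • w)
      simp only [this, lintegral_const, measure_univ, mul_one]
      exact (lintegral_rpow_enorm_lt_top_of_eLpNorm_lt_top hp0 hp hgp.2).ne
    have h2 := ae_lt_top (Measurable.lintegral_prod_right' (hm.enorm.pow_const _)) h1
    filter_upwards [h2] with y hy
    have hmy : AEStronglyMeasurable (fun w => g (y + e • w)) P :=
      (hg.comp (by fun_prop)).aestronglyMeasurable
    have : MemLp (fun w => g (y + e • w)) p P :=
      ⟨hmy, (eLpNorm_lt_top_iff_lintegral_rpow_enorm_lt_top hp0 hp).2 hy⟩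
    exact this.integrable hp1
  have hle : ∀ n, eLpNorm (fun y => ∫ w, g (y + ε n • w) ∂P - g y) p volume ^ p.toReal ≤
      ∫⁻ w, eLpNorm (fun y => g (y + ε n • w) - g y) p volume ^ p.toReal ∂P := by
    intro n
    refine le_trans (le_of_eq ?_) (jensen_prod (P := P) hp1 hp
      (F := fun y w => g (y + ε n • w) - g y) ?_)
    · congr 1
      refine eLpNorm_congr_ae ?_
      filter_upwards [hint (ε n)] with y hy
      rw [integral_sub hy (integrable_const _)]
      simp
    · exact (hg.comp (f := fun q : E3 × E3 => q.1 + ε n • q.2) (by fun_prop)).sub (hg.comp measurable_fst)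
  have hlim : Tendsto (fun n => ∫⁻ w, eLpNorm (fun y => g (y + ε n • w) - g y) p volume ^ p.toReal ∂P)
      atTop (𝓝 (∫⁻ w, 0 ∂P)) := by
    refine tendsto_lintegral_of_dominated_convergence
      (fun _ => (eLpNorm g p volume + eLpNorm g p volume) ^ p.toReal) ?_ ?_ ?_ ?_
    · intro n
      have key : ∀ (f : E3 → ℝ), eLpNorm f p volume ^ p.toReal = ∫⁻ y, ‖f y‖ₑ ^ p.toReal := by
        intro f
        rw [eLpNorm_eq_lintegral_rpow_enorm_toReal hp0 hp, ← ENNReal.rpow_mul, one_div,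
          inv_mul_cancel₀ hpt.ne', ENNReal.rpow_one]
      simp only [key]
      refine Measurable.lintegral_prod_right'
        (f := fun q : E3 × E3 => ‖g (q.2 + ε n • q.1) - g q.2‖ₑ ^ p.toReal) ?_
      exact (((hg.comp (f := fun q : E3 × E3 => q.2 + ε n • q.1) (by fun_prop)).sub
        (hg.comp measurable_snd)).enorm.pow_const _)
    · intro n
      refine Eventually.of_forall fun w => ?_
      refine ENNReal.rpow_le_rpow ?_ hpt.le
      refine (eLpNorm_sub_le ?_ hg.aestronglyMeasurable hp1).trans (le_of_eq ?_)
      · exact (hg.comp (by fun_prop)).aestronglyMeasurable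
      · rw [eLpNorm_trans g hg]
    · simp only [lintegral_const, measure_univ, mul_one]
      exact ENNReal.rpow_ne_top_of_nonneg hpt.le (by simp [hgp.2.ne])
    · refine Eventually.of_forall fun w => ?_
      have := trans_tendsto hp1 hp hgp (z := fun n => ε n • w) (by simpa using hε.smul_const w)
      have h2 := this.ennrpow_const p.toReal
      simpa [hpt] using h2
  simp only [lintegral_zero] at hlim
  have h3 : Tendsto (fun n => eLpNorm (fun y => ∫ w, g (y + ε n • w) ∂P - g y) p volume ^ p.toReal)
      atTop (𝓝 0) :=
    tendsto_of_tendsto_of_tendsto_of_le_of_le tendsto_const_nhds hlim (fun _ => zero_le) hle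
  have h4 := h3.ennrpow_const (p.toReal⁻¹)
  simpa [← ENNReal.rpow_mul, hpt.ne', hpt] using h4


lemma rpow_sub_le {x y s : ℝ} (hx : 0 ≤ x) (hy : 0 ≤ y) (hs : 1 ≤ s) :
    |x ^ s - y ^ s| ≤ s * (|x - y| * (x ^ (s - 1) + y ^ (s - 1))) := by
  have main : ∀ x y : ℝ, 0 ≤ x → 0 ≤ y → y ≤ x →
      |x ^ s - y ^ s| ≤ s * (|x - y| * (x ^ (s - 1) + y ^ (s - 1))) := by
    intro x y hx hy hxy
    have h1 : y ^ s ≤ x ^ s := Real.rpow_le_rpow hy hxy (by linarith)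
    rw [abs_of_nonneg (by linarith), abs_of_nonneg (by linarith)]
    rcases hx.eq_or_lt with h0 | h0
    · have hy0 : y = 0 := by linarith
      rw [← h0, hy0]; simp
    have hb := one_add_mul_self_le_rpow_one_add (s := y / x - 1) (p := s)
      (by have : 0 ≤ y / x := by positivity
          linarith) hs
    have e : (1 + (y / x - 1)) ^ s = y ^ s / x ^ s := by
      rw [add_sub_cancel, Real.div_rpow hy hx]
    rw [e, le_div_iff₀ (Real.rpow_pos_of_pos h0 _)] at hb
    have e2 : x ^ s = x * x ^ (s - 1) := by
      rw [Real.rpow_sub_one h0.ne']; field_simp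
    have e3 : (1 + s * (y / x - 1)) * x ^ s = x ^ s - s * ((x - y) * x ^ (s - 1)) := by
      rw [e2]; field_simp; ring
    rw [e3] at hb
    have h2 : 0 ≤ s * ((x - y) * y ^ (s - 1)) := by
      have := Real.rpow_nonneg hy (s - 1)
      have : 0 ≤ x - y := by linarith
      positivity
    nlinarith
  rcases le_total y x with h | h
  · exact main x y hx hy h
  · rw [abs_sub_comm, abs_sub_comm x y, add_comm]
    exact main y x hy hx h

lemma eLpNorm_rpow {x : E3 → ℝ} (hx : ∀ y, 0 ≤ x y) {P s : ℝ} (hP : 0 < P) (hs : 0 < s) :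
    eLpNorm (fun y => x y ^ s) (ENNReal.ofReal (P / s)) volume =
      eLpNorm x (ENNReal.ofReal P) volume ^ s := by
  have h := eLpNorm_norm_rpow (p := ENNReal.ofReal (P / s)) (μ := (volume : Measure E3)) x hs
  rw [← ENNReal.ofReal_mul (by positivity), div_mul_cancel₀ _ hs.ne'] at h
  rw [← h]
  congr 1
  ext y
  rw [Real.norm_of_nonneg (hx y)]

lemma memLp_rpow {x : E3 → ℝ} (hx : ∀ y, 0 ≤ x y) {P s : ℝ} (hP : 0 < P) (hs : 0 < s)
    (h : MemLp x (ENNReal.ofReal P) volume) :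
    MemLp (fun y => x y ^ s) (ENNReal.ofReal (P / s)) volume := by
  refine ⟨(h.1.aemeasurable.pow_const s).aestronglyMeasurable, ?_⟩
  rw [eLpNorm_rpow hx hP hs]
  exact ENNReal.rpow_lt_top_of_nonneg hs.le h.2.ne

lemma holder_ofReal {a b c : ℝ} (ha : 0 < a) (hb : 0 < b) (hc : 0 < c) (h : a⁻¹ + b⁻¹ = c⁻¹) :
    ENNReal.HolderTriple (ENNReal.ofReal a) (ENNReal.ofReal b) (ENNReal.ofReal c) := by
  constructor
  rw [← ENNReal.ofReal_inv_of_pos ha, ← ENNReal.ofReal_inv_of_pos hb,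
    ← ENNReal.ofReal_inv_of_pos hc, ← ENNReal.ofReal_add (by positivity) (by positivity), h]

lemma pow_tendsto {x : ℕ → E3 → ℝ} {x0 : E3 → ℝ} {P s : ℝ} (hP : 0 < P) (hs : 1 < s)
    (hsP : s - 1 ≤ P)
    (hx : ∀ n y, 0 ≤ x n y) (hx0 : ∀ y, 0 ≤ x0 y)
    (hm : ∀ n, AEStronglyMeasurable (x n) volume) (h0 : MemLp x0 (ENNReal.ofReal P) volume)
    (hb : ∀ n, eLpNorm (x n) (ENNReal.ofReal P) volume ≤ eLpNorm x0 (ENNReal.ofReal P) volume)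
    (hl : Tendsto (fun n => eLpNorm (fun y => x n y - x0 y) (ENNReal.ofReal P) volume) atTop (𝓝 0)) :
    Tendsto (fun n => eLpNorm (fun y => x n y ^ s - x0 y ^ s) (ENNReal.ofReal (P / s)) volume)
      atTop (𝓝 0) := by
  have hs1 : 0 < s - 1 := by linarith
  have hs0 : 0 < s := by linarith
  set B := eLpNorm x0 (ENNReal.ofReal P) volume with hB
  have hBt : B ≠ ⊤ := h0.2.ne
  have hH : ENNReal.HolderTriple (ENNReal.ofReal P) (ENNReal.ofReal (P / (s - 1)))
    (ENNReal.ofReal (P / s)) := holder_ofReal hP (by positivity) (by positivity) (by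
      rw [inv_div, inv_div]; field_simp; ring)
  have hbound : ∀ n, eLpNorm (fun y => x n y ^ s - x0 y ^ s) (ENNReal.ofReal (P / s)) volume ≤
      (s.toNNReal : ℝ≥0∞) * eLpNorm (fun y => x n y - x0 y) (ENNReal.ofReal P) volume *
        (B ^ (s - 1) + B ^ (s - 1)) := by
    intro n
    have h1 := eLpNorm_le_eLpNorm_mul_eLpNorm_of_nnnorm (μ := (volume : Measure E3))
      (p := ENNReal.ofReal P)
      (q := ENNReal.ofReal (P / (s - 1))) (r := ENNReal.ofReal (P / s))
      (f := fun y => x n y - x0 y) (g := fun y => x n y ^ (s - 1) + x0 y ^ (s - 1))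
      ((hm n).sub h0.1) (((hm n).aemeasurable.pow_const _).add
        (h0.1.aemeasurable.pow_const _)).aestronglyMeasurable
      (fun a b => s * (a * b)) s.toNNReal ?_
    · have h2 : eLpNorm (fun y => x n y ^ s - x0 y ^ s) (ENNReal.ofReal (P / s)) volume ≤
        eLpNorm (fun y => s * ((x n y - x0 y) * (x n y ^ (s - 1) + x0 y ^ (s - 1))))
          (ENNReal.ofReal (P / s)) volume := by
        refine eLpNorm_mono fun y => ?_
        have h3 := rpow_sub_le (hx n y) (hx0 y) hs.le
        simp only [Real.norm_eq_abs, abs_mul, abs_of_pos hs0]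
        rw [abs_of_nonneg (add_nonneg (Real.rpow_nonneg (hx n y) _) (Real.rpow_nonneg (hx0 y) _))]
        exact h3
      refine h2.trans (h1.trans ?_)
      gcongr
      refine (eLpNorm_add_le ((hm n).aemeasurable.pow_const _).aestronglyMeasurable
        (h0.1.aemeasurable.pow_const _).aestronglyMeasurable ?_).trans ?_
      · rw [← ENNReal.ofReal_one]
        exact ENNReal.ofReal_le_ofReal (by rw [le_div_iff₀ hs1]; linarith)
      · rw [eLpNorm_rpow (hx n) hP hs1, eLpNorm_rpow hx0 hP hs1]
        gcongr
        exact hb n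
    · refine Eventually.of_forall fun y => ?_
      rw [← NNReal.coe_le_coe]
      simp only [coe_nnnorm, NNReal.coe_mul, norm_mul, Real.coe_toNNReal _ hs0.le,
        Real.norm_of_nonneg hs0.le]
      rw [mul_assoc]
  refine tendsto_of_tendsto_of_tendsto_of_le_of_le tendsto_const_nhds ?_ (fun _ => zero_le) hbound
  have hc : B ^ (s - 1) + B ^ (s - 1) ≠ ⊤ := by
    simp [hBt, hs.le]
  have h4 := ENNReal.Tendsto.mul_const (b := B ^ (s - 1) + B ^ (s - 1))
    (ENNReal.Tendsto.const_mul (a := (s.toNNReal : ℝ≥0∞)) hl (Or.inr ENNReal.coe_ne_top))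
    (Or.inr hc)
  simpa using h4

/-- convolution -/
def cv (a k : E3 → ℝ) : E3 → ℝ := fun y => ∫ t, a t * k (y - t)

lemma cv_eq (a k : E3 → ℝ) : cv a k = MeasureTheory.convolution a k (ContinuousLinearMap.mul ℝ ℝ) volume := by
  ext y; rfl

lemma cv_contDiff {a k : E3 → ℝ} (ha : LocallyIntegrable a volume) (hk : TF k) :
    ContDiff ℝ ((⊤ : ℕ∞) : WithTop ℕ∞) (cv a k) := by
  rw [cv_eq]
  exact hk.2.contDiff_convolution_right _ ha hk.1

lemma cv_pd {a k : E3 → ℝ} (ha : LocallyIntegrable a volume) (hk : TF k) (i : Fin 3) :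
    pd (cv a k) i = cv a (pd k i) := by
  ext y
  have h := hk.2.hasFDerivAt_convolution_right (ContinuousLinearMap.mul ℝ ℝ) ha
    (hk.1.of_le (by simp)) y
  unfold pd
  rw [cv_eq, h.fderiv]
  rw [convolution_precompR_apply _ ha (hk.2.fderiv ℝ) (hk.1.continuous_fderiv (by simp))]
  rfl

lemma cv_tf {a k : E3 → ℝ} (ha : LocallyIntegrable a volume) (hc : HasCompactSupport a) (hk : TF k) :
    TF (cv a k) := by
  refine ⟨cv_contDiff ha hk, ?_⟩
  rw [cv_eq]
  exact hc.convolution _ hk.2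

lemma cv_shift {a k : E3 → ℝ} (hk : ∀ z, k (-z) = k z) (y : E3) :
    cv a k y = ∫ z, a (y + z) * k z := by
  unfold cv
  rw [← integral_add_left_eq_self (fun t => a t * k (y - t)) y]
  congr 1; ext z
  simp [hk]

lemma cv_shift_odd {a k : E3 → ℝ} (hk : ∀ z, k (-z) = - k z) (y : E3) :
    cv a k y = - ∫ z, a (y + z) * k z := by
  unfold cv
  rw [← integral_add_left_eq_self (fun t => a t * k (y - t)) y, ← integral_neg]
  congr 1; ext z
  simp [hk]

lemma pd_odd {k : E3 → ℝ} (hk : ∀ z, k (-z) = k z) (hd : Differentiable ℝ k) (i : Fin 3) (z : E3) :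
    pd k i (-z) = - pd k i z := by
  have h := pd_comp_smul hd (-1) i z
  simp only [neg_one_smul, hk] at h
  linarith

lemma mollifier : ∃ θ : E3 → ℝ, TF θ ∧ (∀ z, 0 ≤ θ z) ∧ (∀ z, θ (-z) = θ z) ∧ ∫ z, θ z = 1 := by
  let b : ContDiffBump (0 : E3) := ⟨1, 2, by norm_num, by norm_num⟩
  exact ⟨b.normed volume, ⟨b.contDiff_normed, b.hasCompactSupport_normed⟩, b.nonneg_normed,
    b.normed_neg, b.integral_normed⟩


lemma le_one_add_rpow {x γ : ℝ} (hx : 0 ≤ x) (hγ : 1 ≤ γ) : x ≤ 1 + x ^ γ := by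
  have h0 := Real.rpow_nonneg hx γ
  rcases le_total x 1 with h | h
  · linarith
  · have := Real.rpow_le_rpow_of_exponent_le h hγ
    rw [Real.rpow_one] at this
    linarith

lemma locInt_of_rpow {a : E3 → ℝ} {γ : ℝ} (hγ : 1 ≤ γ) (ham : Measurable a) (ha0 : ∀ x, 0 ≤ a x)
    (hag : Integrable (fun x => a x ^ γ) volume) : LocallyIntegrable a volume := by
  have h1 : LocallyIntegrable (fun x => 1 + a x ^ γ) volume :=
    (locallyIntegrable_const 1).add hag.locallyIntegrable
  refine h1.mono ham.aestronglyMeasurable (Eventually.of_forall fun x => ?_)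
  have := le_one_add_rpow (ha0 x) hγ
  have h0 := Real.rpow_nonneg (ha0 x) γ
  rw [Real.norm_of_nonneg (ha0 x), Real.norm_of_nonneg (by linarith)]
  exact this

lemma dom_int {a f κ : E3 → ℝ} {m : E3 × E3 → ℝ} {γ C : ℝ} (hγ : 1 ≤ γ) (ham : Measurable a)
    (ha0 : ∀ x, 0 ≤ a x) (hag : Integrable (fun x => a x ^ γ) volume)
    (hf : Continuous f) (hfc : HasCompactSupport f) (hκ : TF κ) (hm : Measurable m)
    (hmC : ∀ q, |m q| ≤ C) :
    Integrable (fun q : E3 × E3 => a (q.1 + q.2) * f q.1 * m q * κ q.2) (volume.prod volume) := by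
  obtain ⟨D, hD⟩ := hf.bounded_above_of_compact_support hfc
  have hfi : Integrable f volume := hf.integrable_of_hasCompactSupport hfc
  have i1 : Integrable (fun q : E3 × E3 => f q.1 * κ q.2) (volume.prod volume) :=
    hfi.mul_prod hκ.integrable
  have i2 : Integrable (fun q : E3 × E3 => a (q.1 + q.2) ^ γ * κ q.2) (volume.prod volume) :=
    (measurePreserving_add_prod volume volume).integrable_comp_of_integrable
      (hag.mul_prod hκ.integrable)
  have hC : 0 ≤ C := (abs_nonneg _).trans (hmC 0)
  refine ((i1.norm.const_mul C).add (i2.norm.const_mul (C * D))).mono' ?_ ?_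
  · refine Measurable.aestronglyMeasurable ?_
    exact (((ham.comp (measurable_fst.add measurable_snd)).mul (hf.measurable.comp measurable_fst)).mul
      hm).mul (hκ.cont.measurable.comp measurable_snd)
  · refine Eventually.of_forall fun q => ?_
    simp only [Pi.add_apply, Real.norm_eq_abs, abs_mul]
    have h1 := le_one_add_rpow (ha0 (q.1 + q.2)) hγ
    have h2 := Real.rpow_nonneg (ha0 (q.1 + q.2)) γ
    rw [abs_of_nonneg (ha0 _), abs_of_nonneg h2]
    have h3 := hD q.1
    rw [Real.norm_eq_abs] at h3
    calc a (q.1 + q.2) * |f q.1| * |m q| * |κ q.2|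
        ≤ ((1 + a (q.1 + q.2) ^ γ) * |f q.1|) * C * |κ q.2| := by
          gcongr
          exact hmC q
      _ = C * (|f q.1| * |κ q.2|) + C * |f q.1| * (a (q.1 + q.2) ^ γ * |κ q.2|) := by ring
      _ ≤ _ := by gcongr

lemma cv_nonneg {a k : E3 → ℝ} (ha0 : ∀ x, 0 ≤ a x) (hk0 : ∀ x, 0 ≤ k x) (y : E3) : 0 ≤ cv a k y :=
  integral_nonneg fun t => mul_nonneg (ha0 t) (hk0 _)

lemma pd_rpow {b : E3 → ℝ} {γ : ℝ} (hγ : 1 ≤ γ) (hb : Differentiable ℝ b) (i : Fin 3) (y : E3) :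
    pd (fun x => b x ^ γ) i y = γ * b y ^ (γ - 1) * pd b i y := by
  unfold pd
  rw [((hb y).hasFDerivAt.rpow_const (Or.inr hγ)).fderiv]
  simp

theorem comm_identity {a k χ v : E3 → ℝ} {γ : ℝ} (hγ : 2 ≤ γ) (ham : Measurable a)
    (ha0 : ∀ x, 0 ≤ a x) (hag : Integrable (fun x => a x ^ γ) volume)
    (hk : TF k) (hk0 : ∀ z, 0 ≤ k z) (hke : ∀ z, k (-z) = k z) (hχ : TF χ) (hv : TF v) (i : Fin 3) :
    TF (cv (fun y => χ y * cv a k y ^ (γ - 1)) k) ∧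
    ∫ x, a x * v x * pd (cv (fun y => χ y * cv a k y ^ (γ - 1)) k) i x =
      (∫ z, (∫ y, a (y + z) * (χ y * cv a k y ^ (γ - 1)) * (v (y + z) - v y)) * pd k i z)
      + (1 / γ) * ∫ y, cv a k y ^ γ * (χ y * pd v i y + v y * pd χ i y) := by
  have hal := locInt_of_rpow (by linarith) ham ha0 hag
  set b := cv a k with hbdef
  have hb : ContDiff ℝ ((⊤ : ℕ∞) : WithTop ℕ∞) b := cv_contDiff hal hk
  have hbd : Differentiable ℝ b := hb.differentiable (by simp)
  set f : E3 → ℝ := fun y => χ y * b y ^ (γ - 1) with hfdef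
  have hfcont : Continuous f :=
    hχ.cont.mul (hb.continuous.rpow_const fun y => Or.inr (by linarith))
  have hfc : HasCompactSupport f := hχ.2.mul_right
  have hfl : LocallyIntegrable f volume := hfcont.locallyIntegrable
  refine ⟨cv_tf hfl hfc hk, ?_⟩
  rw [cv_pd hfl hk]
  obtain ⟨C, hC0, hC⟩ := hv.bdd
  have iT : Integrable (fun q : E3 × E3 => a (q.1 + q.2) * f q.1 * v (q.1 + q.2) * pd k i q.2)
      (volume.prod volume) :=
    dom_int (m := fun q => v (q.1 + q.2)) (by linarith : 1 ≤ γ) ham ha0 hag hfcont hfc (hk.pd i)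
      (hv.cont.measurable.comp (measurable_fst.add measurable_snd)) (fun q => hC _)
  have iU : Integrable (fun q : E3 × E3 => a (q.1 + q.2) * f q.1 * v q.1 * pd k i q.2)
      (volume.prod volume) :=
    dom_int (m := fun q => v q.1) (by linarith : 1 ≤ γ) ham ha0 hag hfcont hfc (hk.pd i)
      (hv.cont.measurable.comp measurable_fst) (fun q => hC _)
  have iS : Integrable (fun q : E3 × E3 => a q.1 * v q.1 * (f q.2 * pd k i (q.1 - q.2)))
      (volume.prod volume) := by
    refine ((measurePreserving_prod_sub_swap volume volume).integrable_comp_of_integrable iT).congr ?_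
    refine Eventually.of_forall fun q => ?_
    simp only [Function.comp, add_sub_cancel]
    ring
  -- swap
  have e1 : ∫ x, a x * v x * cv f (pd k i) x = ∫ y, ∫ x, a x * v x * (f y * pd k i (x - y)) := by
    rw [← integral_integral_swap (f := fun x y => a x * v x * (f y * pd k i (x - y))) iS]
    congr 1; ext x
    unfold cv
    rw [integral_const_mul]
  have e2 : ∀ y, ∫ x, a x * v x * (f y * pd k i (x - y)) =
      ∫ z, a (y + z) * f y * v (y + z) * pd k i z := by
    intro y
    rw [← integral_add_left_eq_self _ y]
    congr 1; ext z
    simp only [add_sub_cancel_left]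
    ring
  simp only [e2] at e1
  rw [e1]
  have e3 : ∫ y, ∫ z, a (y + z) * f y * v (y + z) * pd k i z =
      (∫ y, ∫ z, (a (y + z) * f y * v (y + z) * pd k i z - a (y + z) * f y * v y * pd k i z)) +
      ∫ y, ∫ z, a (y + z) * f y * v y * pd k i z := by
    have := integral_integral_sub (f := fun q : E3 × E3 => a (q.1 + q.2) * f q.1 * v (q.1 + q.2) * pd k i q.2)
      (g := fun q : E3 × E3 => a (q.1 + q.2) * f q.1 * v q.1 * pd k i q.2) iT iU
    linarith
  rw [e3, integral_integral_swap
    (f := fun y z => (a (y + z) * f y * v (y + z) * pd k i z - a (y + z) * f y * v y * pd k i z))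
    (iT.sub iU)]
  congr 1
  · congr 1; ext z
    rw [← integral_mul_const]
    congr 1; ext y
    ring
  · have e4 : ∀ y, ∫ z, a (y + z) * f y * v y * pd k i z = - (f y * v y * pd b i y) := by
      intro y
      rw [hbdef, cv_pd hal hk, cv_shift_odd (fun z => pd_odd hke hk.diff i z)]
      rw [mul_neg, neg_neg, ← integral_const_mul]
      congr 1; ext z
      ring
    simp only [e4]
    have hbg : ContDiff ℝ 1 (fun y => b y ^ γ) := by
      rw [contDiff_iff_contDiffAt]
      intro y
      exact ContDiffAt.rpow_const_of_le (m := 1) ((hb.of_le (by simp)).contDiffAt) (by norm_num; linarith)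
    have e5 := ibp hbg (hχ.mul hv) i
    have e6 : ∀ y, b y ^ γ * (χ y * pd v i y + v y * pd χ i y) =
        b y ^ γ * pd (fun y => χ y * v y) i y := by
      intro y
      rw [pd_mul (hχ.diff y) (hv.diff y)]
      ring
    simp only [e6]
    rw [e5, mul_neg, integral_neg, ← integral_const_mul]
    congr 2; ext y
    rw [pd_rpow (by linarith) hbd]
    simp only [hfdef]
    have : γ ≠ 0 := by linarith
    field_simp


lemma pair_bound {p q : ℝ≥0∞} [hpqr : ENNReal.HolderTriple p q 1] {f g : E3 → ℝ}
    (hf : MemLp f p volume) (hg : MemLp g q volume) :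
    |∫ x, f x * g x| ≤ (eLpNorm f p volume).toReal * (eLpNorm g q volume).toReal := by
  have hi : Integrable (fun x => f x * g x) volume := hf.integrable_mul hg
  have h1 : eLpNorm (f • g) 1 volume ≤ eLpNorm f p volume * eLpNorm g q volume :=
    eLpNorm_smul_le_mul_eLpNorm hg.1 hf.1
  have h2 : eLpNorm (f • g) 1 volume = eLpNorm (fun x => f x * g x) 1 volume := rfl
  rw [h2] at h1
  rw [← ENNReal.toReal_mul]
  refine le_trans ?_ (ENNReal.toReal_mono (ENNReal.mul_ne_top hf.2.ne hg.2.ne) h1)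
  rw [eLpNorm_one_eq_lintegral_enorm, ← integral_norm_eq_lintegral_enorm hi.1]
  exact norm_integral_le_integral_norm (fun x => f x * g x)

/-- directional derivative -/
def dirD (v : E3 → ℝ) (w : E3) : E3 → ℝ := fun y => ∑ j, w j * pd v j y

lemma TF.dirD {v : E3 → ℝ} (hv : TF v) (w : E3) : TF (dirD v w) :=
  TF.sum _ fun j => (hv.pd j).const_mul _

lemma dirD_norm {v : E3 → ℝ} (hv : TF v) (w : E3) :
    (eLpNorm (dirD v w) 2 volume).toReal ≤ ‖w‖ * ∑ j, (eLpNorm (pd v j) 2 volume).toReal := by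
  have e : dirD v w = ∑ j, (w j) • pd v j := by
    ext y; simp [dirD, Finset.sum_apply]
  have h1 : eLpNorm (dirD v w) 2 volume ≤ ∑ j, eLpNorm ((w j) • pd v j) 2 volume := by
    rw [e]
    exact eLpNorm_sum_le (fun j _ => ((hv.pd j).memLp 2).1.const_smul _) (by norm_num)
  have hfin : ∀ j, eLpNorm ((w j) • pd v j) 2 volume ≠ ⊤ := fun j =>
    (((hv.pd j).memLp 2).const_smul (w j)).2.ne
  refine (ENNReal.toReal_mono (ENNReal.sum_ne_top.2 fun j _ => hfin j) h1).trans ?_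
  rw [ENNReal.toReal_sum fun j _ => hfin j, Finset.mul_sum]
  refine Finset.sum_le_sum fun j _ => ?_
  rw [eLpNorm_const_smul, ENNReal.toReal_mul]
  gcongr
  simpa using PiLp.norm_apply_le w j

/-- uniform measure on segment from `0` to `w` -/
def seg (w : E3) : Measure E3 := (volume.restrict (Icc (0:ℝ) 1)).map (fun t => t • w)

instance (w : E3) : IsProbabilityMeasure (seg w) := by
  have : IsProbabilityMeasure (volume.restrict (Icc (0:ℝ) 1)) := ⟨by simp⟩
  exact Measure.isProbabilityMeasure_map (by fun_prop)

lemma diffquot {v : E3 → ℝ} (hv : TF v) (w y : E3) (ε : ℝ) :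
    v (y + ε • w) - v y = ε * ∫ w', dirD v w (y + ε • w') ∂(seg w) := by
  have h1 : ∀ t : ℝ, HasDerivAt (fun t : ℝ => v (y + t • (ε • w)))
      (ε * dirD v w (y + t • (ε • w))) t := by
    intro t
    have hl : HasDerivAt (fun t : ℝ => y + t • (ε • w)) (ε • w) t := by
      simpa using ((hasDerivAt_id t).smul_const (ε • w)).const_add y
    refine ((hv.diff _).hasFDerivAt.comp_hasDerivAt t hl).congr_deriv ?_
    rw [map_smul, fderiv_eq_sum, smul_eq_mul]
    rfl
  have hc : Continuous (fun t : ℝ => ε * dirD v w (y + t • (ε • w))) :=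
    continuous_const.mul ((hv.dirD w).cont.comp (by fun_prop))
  have h2 := intervalIntegral.integral_eq_sub_of_hasDerivAt (a := 0) (b := 1)
    (fun t _ => h1 t) (hc.intervalIntegrable _ _)
  simp only [one_smul, zero_smul, add_zero] at h2
  have hm : Continuous (fun w' : E3 => dirD v w (y + ε • w')) := (hv.dirD w).cont.comp (by fun_prop)
  rw [← h2, intervalIntegral.integral_const_mul, seg, integral_map (by fun_prop)
    hm.aestronglyMeasurable,
    intervalIntegral.integral_of_le zero_le_one, integral_Icc_eq_integral_Ioc]
  simp only [smul_comm ε]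

lemma moment {θ : E3 → ℝ} (hθ : TF θ) (h1 : ∫ z, θ z = 1) (i j : Fin 3) :
    ∫ w, w j * pd θ i w = if i = j then -1 else 0 := by
  have hc : ContDiff ℝ 1 (fun w : E3 => w j) := by fun_prop
  rw [ibp hc hθ i]
  have : ∀ x : E3, pd (fun w : E3 => w j) i x = if i = j then 1 else 0 := by
    intro x
    unfold pd
    have : HasFDerivAt (fun w : E3 => w j) (EuclideanSpace.proj j : E3 →L[ℝ] ℝ) x :=
      (EuclideanSpace.proj j : E3 →L[ℝ] ℝ).hasFDerivAt
    rw [this.fderiv]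
    simp [Pi.single_apply, eq_comm]
  simp only [this]
  split_ifs with h
  · simp [h1]
  · simp

/-- rescaled kernel -/
def kern (θ : E3 → ℝ) (N : ℝ) : E3 → ℝ := fun z => N ^ 3 * θ (N • z)

lemma ker_tf {θ : E3 → ℝ} (hθ : TF θ) {N : ℝ} (hN : 0 < N) : TF (kern θ N) :=
  (hθ.comp_smul hN.ne').const_mul _

lemma ker_int {θ F : E3 → ℝ} {N : ℝ} (hN : 0 < N) :
    ∫ z, F z * kern θ N z = ∫ w, F (N⁻¹ • w) * θ w := by
  have h := Measure.integral_comp_smul (volume : Measure E3) (fun w => F (N⁻¹ • w) * θ w) N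
  simp only [finrank_euclideanSpace, Fintype.card_fin, smul_smul, inv_mul_cancel₀ hN.ne', one_smul,
    smul_eq_mul] at h
  rw [abs_of_pos (by positivity)] at h
  have : ∀ z, F z * kern θ N z = N ^ 3 * (F z * θ (N • z)) := fun z => by unfold kern; ring
  simp only [this]
  rw [integral_const_mul, h, ← mul_assoc, mul_inv_cancel₀ (by positivity), one_mul]

lemma ker_pd {θ : E3 → ℝ} (hθ : TF θ) {N : ℝ} (i : Fin 3) (z : E3) :
    pd (kern θ N) i z = N * kern (pd θ i) N z := by
  unfold kern
  rw [pd_const_mul (f := fun z => θ (N • z)) _ ((hθ.1.comp (contDiff_const_smul N)).differentiable (by simp) z),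
    pd_comp_smul hθ.diff]
  ring

/-- probability measure with density -/
def densM (θ : E3 → ℝ) : Measure E3 := volume.withDensity (fun w => ENNReal.ofReal (θ w))

lemma densM_prob {θ : E3 → ℝ} (hθ : TF θ) (h0 : ∀ z, 0 ≤ θ z) (h1 : ∫ z, θ z = 1) :
    IsProbabilityMeasure (densM θ) := by
  constructor
  rw [densM, withDensity_apply _ MeasurableSet.univ, Measure.restrict_univ,
    ← ofReal_integral_eq_lintegral_ofReal hθ.integrable (Eventually.of_forall h0), h1]
  simp

lemma densM_int {θ : E3 → ℝ} (hθ : TF θ) (h0 : ∀ z, 0 ≤ θ z) (F : E3 → ℝ) :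
    ∫ w, F w ∂(densM θ) = ∫ w, F w * θ w := by
  rw [densM, integral_withDensity_eq_integral_toReal_smul
    hθ.cont.measurable.ennreal_ofReal (Eventually.of_forall fun _ => ENNReal.ofReal_lt_top)]
  congr 1; ext w
  rw [ENNReal.toReal_ofReal (h0 w), smul_eq_mul, mul_comm]

lemma cv_ker {a θ : E3 → ℝ} (hθ : TF θ) (h0 : ∀ z, 0 ≤ θ z) (he : ∀ z, θ (-z) = θ z)
    {N : ℝ} (hN : 0 < N) (y : E3) :
    cv a (kern θ N) y = ∫ w, a (y + N⁻¹ • w) ∂(densM θ) := by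
  rw [densM_int hθ h0, cv_shift (fun z => by simp [kern, he]), ker_int (F := fun z => a (y + z)) hN]


lemma tendsto_pair2 {p q : ℝ≥0∞} [hpqr : ENNReal.HolderTriple p q 1]
    {f g : ℕ → E3 → ℝ} {f0 g0 : E3 → ℝ}
    (hf0 : MemLp f0 p volume) (hg0 : MemLp g0 q volume)
    (hf : ∀ n, MemLp (f n) p volume) (hg : ∀ n, MemLp (g n) q volume)
    (hfl : Tendsto (fun n => eLpNorm (fun x => f n x - f0 x) p volume) atTop (𝓝 0))
    (hgl : Tendsto (fun n => eLpNorm (fun x => g n x - g0 x) q volume) atTop (𝓝 0)) :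
    Tendsto (fun n => ∫ x, f n x * g n x) atTop (𝓝 (∫ x, f0 x * g0 x)) := by
  have h := tendsto_mul_Lp (r := 1) le_rfl hf0 hg0 (fun n => (hf n).1) (fun n => (hg n).1) hfl hgl
  exact tendsto_integral_of_L1' _ (hf0.1.mul hg0.1)
    (Eventually.of_forall fun n => (hf n).integrable_mul (hg n)) h

lemma bdd_mul_norm {χ g : E3 → ℝ} {C : ℝ} (hC : 0 ≤ C) (hχ : ∀ x, |χ x| ≤ C) (p : ℝ≥0∞) :
    eLpNorm (fun x => χ x * g x) p volume ≤ ENNReal.ofReal C * eLpNorm g p volume := by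
  refine eLpNorm_le_mul_eLpNorm_of_ae_le_mul (Eventually.of_forall fun x => ?_) p
  rw [norm_mul]
  exact mul_le_mul_of_nonneg_right (hχ x) (norm_nonneg _)

lemma bdd_mul_memLp {χ g : E3 → ℝ} {C : ℝ} (hC : 0 ≤ C) (hχ : ∀ x, |χ x| ≤ C)
    (hc : Continuous χ) {p : ℝ≥0∞} (hg : MemLp g p volume) :
    MemLp (fun x => χ x * g x) p volume :=
  ⟨hc.aestronglyMeasurable.mul hg.1, (bdd_mul_norm hC hχ p).trans_lt
    (ENNReal.mul_lt_top ENNReal.ofReal_lt_top hg.2)⟩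

lemma hterm_bound {χ v : E3 → ℝ} (hχ : TF χ) {Cχ : ℝ} (hC : 0 ≤ Cχ) (hχb : ∀ x, |χ x| ≤ Cχ)
    {Cs : ℝ≥0} (hs : ∀ f : E3 → ℝ, TF f → eLpNorm f 6 volume ≤ Cs * ∑ i, eLpNorm (pd f i) 2 volume)
    (hv : TF v) (i : Fin 3) :
    (eLpNorm (fun y => χ y * pd v i y + v y * pd χ i y) 2 volume).toReal ≤
      (Cχ + Cs * ∑ l, (eLpNorm (pd χ l) 3 volume).toReal) *
        ∑ j, (eLpNorm (pd v j) 2 volume).toReal := by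
  have hH : ENNReal.HolderTriple 6 3 2 := by
    constructor
    rw [← ENNReal.toReal_eq_toReal_iff' (by simp) (by simp), ENNReal.toReal_add (by simp) (by simp)]
    norm_num
  have h1 : eLpNorm (fun y => χ y * pd v i y + v y * pd χ i y) 2 volume ≤
      ENNReal.ofReal Cχ * eLpNorm (pd v i) 2 volume +
      (Cs * ∑ j, eLpNorm (pd v j) 2 volume) * eLpNorm (pd χ i) 3 volume := by
    refine (eLpNorm_add_le (f := fun y => χ y * pd v i y) (g := fun y => v y * pd χ i y)
      ((hχ.mul (hv.pd i)).memLp 2).1 ((hv.mul (hχ.pd i)).memLp 2).1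
      (by norm_num)).trans ?_
    refine add_le_add (bdd_mul_norm hC hχb 2) ?_
    have h2 : eLpNorm (v • pd χ i) 2 volume ≤ eLpNorm v 6 volume * eLpNorm (pd χ i) 3 volume :=
      eLpNorm_smul_le_mul_eLpNorm ((hχ.pd i).memLp 3).1 (hv.memLp 6).1
    refine le_trans h2 ?_
    gcongr
    exact hs v hv
  have f1 : ∀ j, eLpNorm (pd v j) 2 volume ≠ ⊤ := fun j => ((hv.pd j).memLp 2).2.ne
  have f2 : ∀ j, eLpNorm (pd χ j) 3 volume ≠ ⊤ := fun j => ((hχ.pd j).memLp 3).2.ne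
  have f3 : ∑ j, eLpNorm (pd v j) 2 volume ≠ ⊤ := ENNReal.sum_ne_top.2 fun j _ => f1 j
  have f4 := ENNReal.mul_ne_top (ENNReal.ofReal_ne_top (r := Cχ)) (f1 i)
  have f5 := ENNReal.mul_ne_top (ENNReal.mul_ne_top (ENNReal.coe_ne_top (r := Cs)) f3) (f2 i)
  have h3 := ENNReal.toReal_mono (ENNReal.add_ne_top.2 ⟨f4, f5⟩) h1
  rw [ENNReal.toReal_add f4 f5, ENNReal.toReal_mul, ENNReal.toReal_mul, ENNReal.toReal_mul,
    ENNReal.toReal_ofReal hC, ENNReal.toReal_sum fun j _ => f1 j, ENNReal.coe_toReal] at h3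
  refine h3.trans ?_
  set S := ∑ j, (eLpNorm (pd v j) 2 volume).toReal with hS
  have hS0 : 0 ≤ S := Finset.sum_nonneg fun j _ => ENNReal.toReal_nonneg
  have e1 : (eLpNorm (pd v i) 2 volume).toReal ≤ S :=
    Finset.single_le_sum (f := fun j => (eLpNorm (pd v j) 2 volume).toReal)
      (fun j _ => ENNReal.toReal_nonneg) (Finset.mem_univ i)
  have e2 : (eLpNorm (pd χ i) 3 volume).toReal ≤ ∑ l, (eLpNorm (pd χ l) 3 volume).toReal :=
    Finset.single_le_sum (f := fun j => (eLpNorm (pd χ j) 3 volume).toReal)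
      (fun j _ => ENNReal.toReal_nonneg) (Finset.mem_univ i)
  calc Cχ * (eLpNorm (pd v i) 2 volume).toReal + Cs * S * (eLpNorm (pd χ i) 3 volume).toReal
      ≤ Cχ * S + Cs * S * ∑ l, (eLpNorm (pd χ l) 3 volume).toReal := by gcongr
    _ = _ := by ring

lemma two_ofReal : (2 : ℝ≥0∞) = ENNReal.ofReal 2 := by simp

/-- The key analysis of one kernel term. -/
lemma H_facts {a χ θ v : E3 → ℝ} {γ : ℝ} (hγ : 6 ≤ γ) (ham : Measurable a)
    (ha0 : ∀ x, 0 ≤ a x) (hag : Integrable (fun x => a x ^ γ) volume)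
    (ha2 : MemLp a (ENNReal.ofReal (2 * γ)) volume)
    (hθ : TF θ) (hθ0 : ∀ z, 0 ≤ θ z) (hθe : ∀ z, θ (-z) = θ z) (hθ1 : ∫ z, θ z = 1)
    (hχ : TF χ) {Cχ : ℝ} (hC : 0 ≤ Cχ) (hχb : ∀ x, |χ x| ≤ Cχ) (hv : TF v)
    (b : ℕ → E3 → ℝ) (hb : ∀ n, b n = cv a (kern θ ((n:ℝ) + 1)))
    (H : ℕ → E3 → ℝ)
    (hHd : ∀ n w, H n w = ((n:ℝ) + 1) * ∫ y, a (y + ((n:ℝ) + 1)⁻¹ • w) * (χ y * b n y ^ (γ - 1)) *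
      (v (y + ((n:ℝ) + 1)⁻¹ • w) - v y)) :
    (∀ n w, |H n w| ≤ ((eLpNorm a (ENNReal.ofReal (2 * γ)) volume) *
        (eLpNorm a (ENNReal.ofReal (2 * γ)) volume) ^ (γ - 1)).toReal * Cχ * ‖w‖ *
        ∑ j, (eLpNorm (pd v j) 2 volume).toReal) ∧
    (∀ w, Tendsto (fun n => H n w) atTop (𝓝 (∫ y, a y ^ γ * (χ y * dirD v w y)))) ∧
    (∀ n h, TF h → |∫ y, b n y ^ γ * h y| ≤
        ((eLpNorm a (ENNReal.ofReal (2 * γ)) volume) ^ γ).toReal * (eLpNorm h 2 volume).toReal) ∧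
    (∀ h, TF h → Tendsto (fun n => ∫ y, b n y ^ γ * h y) atTop (𝓝 (∫ y, a y ^ γ * h y))) := by
  have hPr := densM_prob hθ hθ0 hθ1
  have hal := locInt_of_rpow (by linarith) ham ha0 hag
  have hN : ∀ n : ℕ, 0 < (n:ℝ) + 1 := fun n => by positivity
  have hε : Tendsto (fun n : ℕ => ((n:ℝ) + 1)⁻¹) atTop (𝓝 0) := by
    simpa using tendsto_one_div_add_atTop_nhds_zero_nat (𝕜 := ℝ)
  set p := ENNReal.ofReal (2 * γ) with hp
  have hp1 : 1 ≤ p := by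
    rw [hp, ← ENNReal.ofReal_one]; exact ENNReal.ofReal_le_ofReal (by linarith)
  have hpt : p ≠ ⊤ := ENNReal.ofReal_ne_top
  have hP : (0:ℝ) < 2 * γ := by linarith
  have hbf : ∀ n, b n = fun y => ∫ w, a (y + ((n:ℝ) + 1)⁻¹ • w) ∂(densM θ) := fun n => by
    rw [hb]; ext y; exact cv_ker hθ hθ0 hθe (hN n) y
  have hb0 : ∀ n y, 0 ≤ b n y := fun n y => by
    rw [hb]; exact cv_nonneg ha0 (fun z => mul_nonneg (by positivity) (hθ0 _)) y
  have hbc : ∀ n, Continuous (b n) := fun n => by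
    rw [hb]; exact (cv_contDiff hal (ker_tf hθ (hN n))).continuous
  have hble : ∀ n, eLpNorm (b n) p volume ≤ eLpNorm a p volume := fun n => by
    rw [hbf]; exact avg_le hp1 hpt ham _
  have hbl : Tendsto (fun n => eLpNorm (fun y => b n y - a y) p volume) atTop (𝓝 0) := by
    simp only [hbf]
    exact avg_tendsto hp1 hpt ham ha2 hε
  have hbm : ∀ n, MemLp (b n) p volume := fun n =>
    ⟨(hbc n).aestronglyMeasurable, (hble n).trans_lt ha2.2⟩
  have e2 : 2 * γ / γ = 2 := by field_simp
  -- power γ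
  have pg := pow_tendsto (s := γ) hP (by linarith) (by linarith) hb0 ha0
    (fun n => (hbm n).1) ha2 hble hbl
  rw [e2, ← two_ofReal] at pg
  have mg : ∀ n, MemLp (fun y => b n y ^ γ) 2 volume := fun n => by
    have := memLp_rpow (hb0 n) hP (by linarith : 0 < γ) (hbm n)
    rwa [e2, ← two_ofReal] at this
  have mga : MemLp (fun y => a y ^ γ) 2 volume := by
    have := memLp_rpow ha0 hP (by linarith : 0 < γ) ha2
    rwa [e2, ← two_ofReal] at this
  have ng : ∀ n, eLpNorm (fun y => b n y ^ γ) 2 volume ≤ eLpNorm a p volume ^ γ := fun n => by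
    have := eLpNorm_rpow (hb0 n) hP (by linarith : 0 < γ)
    rw [e2, ← two_ofReal] at this
    rw [this]
    exact ENNReal.rpow_le_rpow (hble n) (by linarith)
  -- power γ - 1
  set r := ENNReal.ofReal (2 * γ / (γ - 1)) with hr
  have pg1 : Tendsto (fun n => eLpNorm (fun y => b n y ^ (γ - 1) - a y ^ (γ - 1)) r volume)
      atTop (𝓝 0) :=
    pow_tendsto (s := γ - 1) hP (by linarith) (by linarith) hb0 ha0
      (fun n => (hbm n).1) ha2 hble hbl
  have mg1 : ∀ n, MemLp (fun y => b n y ^ (γ - 1)) r volume := fun n =>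
    memLp_rpow (hb0 n) hP (by linarith) (hbm n)
  have mga1 : MemLp (fun y => a y ^ (γ - 1)) r volume := memLp_rpow ha0 hP (by linarith) ha2
  have ng1 : ∀ n, eLpNorm (fun y => b n y ^ (γ - 1)) r volume ≤ eLpNorm a p volume ^ (γ - 1) := by
    intro n
    rw [eLpNorm_rpow (hb0 n) hP (by linarith : 0 < γ - 1)]
    exact ENNReal.rpow_le_rpow (hble n) (by linarith)
  have hH3 : ENNReal.HolderTriple p r 2 := by
    rw [two_ofReal]
    refine holder_ofReal hP (div_pos hP (by linarith)) (by norm_num) ?_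
    rw [inv_div]; field_simp; ring
  -- averaged difference quotients
  set D : ℕ → E3 → E3 → ℝ := fun n w y => ∫ w', dirD v w (y + ((n:ℝ) + 1)⁻¹ • w') ∂(seg w) with hD
  have hDq : ∀ (n : ℕ) (w y : E3), v (y + ((n:ℝ) + 1)⁻¹ • w) - v y = ((n:ℝ) + 1)⁻¹ * D n w y := fun n w y =>
    diffquot hv w y _
  have hDc : ∀ n w, Continuous (D n w) := by
    intro n w
    have : D n w = fun y => ((n:ℝ) + 1) * (v (y + ((n:ℝ) + 1)⁻¹ • w) - v y) := by
      ext y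
      rw [hDq, ← mul_assoc, mul_inv_cancel₀ (hN n).ne', one_mul]
    rw [this]
    have := hv.cont
    fun_prop
  have hDn : ∀ n w, eLpNorm (D n w) 2 volume ≤ eLpNorm (dirD v w) 2 volume := fun n w =>
    avg_le (by norm_num) (by norm_num) (hv.dirD w).cont.measurable _
  have hDl : ∀ w, Tendsto (fun n => eLpNorm (fun y => D n w y - dirD v w y) 2 volume) atTop (𝓝 0) :=
    fun w => avg_tendsto (by norm_num) (by norm_num) (hv.dirD w).cont.measurable
      ((hv.dirD w).memLp 2) hε
  have hDm : ∀ n w, MemLp (D n w) 2 volume := fun n w =>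
    ⟨(hDc n w).aestronglyMeasurable, (hDn n w).trans_lt ((hv.dirD w).memLp 2).2⟩
  have hHe : ∀ n w, H n w = ∫ y, (a (y + ((n:ℝ) + 1)⁻¹ • w) * b n y ^ (γ - 1)) * (χ y * D n w y) := by
    intro n w
    rw [hHd, ← integral_const_mul]
    congr 1; ext y
    rw [hDq]
    have := (hN n).ne'
    field_simp
  have mprod : ∀ (n : ℕ) (w : E3), MemLp (fun y => a (y + ((n:ℝ) + 1)⁻¹ • w) * b n y ^ (γ - 1)) 2 volume := by
    intro n w
    exact (mg1 n).mul (MemLp.trans p ha2 _)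
  have nprod : ∀ (n : ℕ) (w : E3), eLpNorm (fun y => a (y + ((n:ℝ) + 1)⁻¹ • w) * b n y ^ (γ - 1)) 2 volume ≤
      eLpNorm a p volume * eLpNorm a p volume ^ (γ - 1) := by
    intro n w
    have h2 : eLpNorm ((fun y => a (y + ((n:ℝ) + 1)⁻¹ • w)) • (fun y => b n y ^ (γ - 1))) 2 volume ≤
      eLpNorm (fun y => a (y + ((n:ℝ) + 1)⁻¹ • w)) p volume * eLpNorm (fun y => b n y ^ (γ - 1)) r volume :=
      eLpNorm_smul_le_mul_eLpNorm (mg1 n).1 (MemLp.trans p ha2 _).1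
    refine le_trans h2 ?_
    rw [eLpNorm_trans a ham]
    gcongr
    exact ng1 n
  have hAt : eLpNorm a p volume ≠ ⊤ := ha2.2.ne
  refine ⟨?_, ?_, ?_, ?_⟩
  · intro n w
    rw [hHe]
    refine (pair_bound (mprod n w) (bdd_mul_memLp hC hχb hχ.cont (hDm n w))).trans ?_
    have s1 : (eLpNorm (fun x => χ x * D n w x) 2 volume).toReal ≤
        Cχ * (‖w‖ * ∑ j, (eLpNorm (pd v j) 2 volume).toReal) := by
      refine le_trans ?_ (mul_le_mul_of_nonneg_left (dirD_norm hv w) hC)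
      have h5 : eLpNorm (fun x => χ x * D n w x) 2 volume ≤
          ENNReal.ofReal Cχ * eLpNorm (dirD v w) 2 volume :=
        (bdd_mul_norm hC hχb 2).trans (by gcongr; exact hDn n w)
      have h6 := ENNReal.toReal_mono (ENNReal.mul_ne_top ENNReal.ofReal_ne_top
        ((hv.dirD w).memLp 2).2.ne) h5
      rwa [ENNReal.toReal_mul, ENNReal.toReal_ofReal hC] at h6
    have s2 := ENNReal.toReal_mono (ENNReal.mul_ne_top hAt
      (ENNReal.rpow_ne_top_of_nonneg (by linarith : 0 ≤ γ - 1) hAt)) (nprod n w)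
    calc _ ≤ (eLpNorm a p volume * eLpNorm a p volume ^ (γ - 1)).toReal *
          (Cχ * (‖w‖ * ∑ j, (eLpNorm (pd v j) 2 volume).toReal)) := by gcongr
      _ = _ := by ring
  · intro w
    simp only [hHe]
    have t1 : Tendsto (fun n : ℕ => eLpNorm (fun y => a (y + ((n:ℝ) + 1)⁻¹ • w) - a y) p volume)
        atTop (𝓝 0) := trans_tendsto hp1 hpt ha2 (by simpa using hε.smul_const w)
    have t2 := tendsto_mul_Lp (r := 2) (by norm_num) ha2 mga1
      (fun n => (MemLp.trans p ha2 (((n:ℝ) + 1)⁻¹ • w)).1) (fun n => (mg1 n).1) t1 pg1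
    have t3 : Tendsto (fun n => eLpNorm (fun y => χ y * D n w y - χ y * dirD v w y) 2 volume)
        atTop (𝓝 0) := by
      have h7 : ∀ n, eLpNorm (fun y => χ y * D n w y - χ y * dirD v w y) 2 volume ≤
          ENNReal.ofReal Cχ * eLpNorm (fun y => D n w y - dirD v w y) 2 volume := fun n => by
        simp only [← mul_sub]
        exact bdd_mul_norm hC hχb 2
      have h8 := ENNReal.Tendsto.const_mul (a := ENNReal.ofReal Cχ) (hDl w)
        (Or.inr ENNReal.ofReal_ne_top)
      rw [mul_zero] at h8
      exact tendsto_of_tendsto_of_tendsto_of_le_of_le tendsto_const_nhds h8 (fun _ => zero_le) h7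
    have t4 := tendsto_pair2 (mga1.mul ha2) ((hχ.mul (hv.dirD w)).memLp 2)
      (fun n => mprod n w) (fun n => bdd_mul_memLp hC hχb hχ.cont (hDm n w)) t2 t3
    have e : ∫ y, a y ^ γ * (χ y * dirD v w y) =
        ∫ x, (a * fun y => a y ^ (γ - 1)) x * (χ x * dirD v w x) := by
      congr 1; ext y
      congr 1
      simp only [Pi.mul_apply]
      rcases (ha0 y).eq_or_lt with h0 | h0
      · rw [← h0, Real.zero_rpow (by linarith), zero_mul]
      · rw [Real.rpow_sub_one h0.ne']; field_simp
    rw [e]; exact t4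
  · intro n h hh
    refine (pair_bound (mg n) (hh.memLp 2)).trans ?_
    gcongr
    · exact ENNReal.rpow_ne_top_of_nonneg (by linarith) hAt
    · exact ng n
  · intro h hh
    exact tendsto_pair2 mga (hh.memLp 2) mg (fun _ => hh.memLp 2) pg (by simp)


/-- Commutator (renormalisation) argument. -/
theorem renorm {a χ : E3 → ℝ} {γ : ℝ} (hγ : 6 ≤ γ) (ham : Measurable a)
    (ha0 : ∀ x, 0 ≤ a x) (hag : Integrable (fun x => a x ^ γ) volume)
    (ha2 : MemLp a (ENNReal.ofReal (2 * γ)) volume) (hχ : TF χ) :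
    ∃ ψ : ℕ → E3 → ℝ, (∀ n, TF (ψ n)) ∧ ∃ C : ℝ, 0 ≤ C ∧
      (∀ v, TF v → ∀ i n, |∫ x, a x * v x * pd (ψ n) i x| ≤
        C * ∑ j, (eLpNorm (pd v j) 2 volume).toReal) ∧
      ∀ v, TF v → ∀ i, Tendsto (fun n => ∫ x, a x * v x * pd (ψ n) i x) atTop
        (𝓝 (-(∫ y, a y ^ γ * (χ y * pd v i y)) +
          (1 / γ) * ∫ y, a y ^ γ * (χ y * pd v i y + v y * pd χ i y))) := by
  obtain ⟨θ, hθ, hθ0, hθe, hθ1⟩ := mollifier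
  obtain ⟨Cχ, hC, hχb⟩ := hχ.bdd
  obtain ⟨Cs, hs⟩ := sobolev
  have hal := locInt_of_rpow (by linarith) ham ha0 hag
  have hN : ∀ n : ℕ, 0 < (n:ℝ) + 1 := fun n => by positivity
  set k : ℕ → E3 → ℝ := fun n => kern θ ((n:ℝ) + 1) with hk
  have hkt : ∀ n, TF (k n) := fun n => ker_tf hθ (hN n)
  have hk0 : ∀ n z, 0 ≤ k n z := fun n z => mul_nonneg (by positivity) (hθ0 _)
  have hke : ∀ n z, k n (-z) = k n z := fun n z => by simp [hk, kern, hθe]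
  set b : ℕ → E3 → ℝ := fun n => cv a (k n) with hb
  set H : (E3 → ℝ) → ℕ → E3 → ℝ := fun v n w =>
    ((n:ℝ) + 1) * ∫ y, a (y + ((n:ℝ) + 1)⁻¹ • w) * (χ y * b n y ^ (γ - 1)) *
      (v (y + ((n:ℝ) + 1)⁻¹ • w) - v y) with hH
  have hF := fun v (hv : TF v) => H_facts hγ ham ha0 hag ha2 hθ hθ0 hθe hθ1 hχ hC hχb hv b
    (fun n => rfl) (H v) (fun n w => rfl)
  have hbc : ∀ n, Continuous (b n) := fun n => (cv_contDiff hal (hkt n)).continuous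
  have hid : ∀ v, TF v → ∀ i n, ∫ x, a x * v x * pd (cv (fun y => χ y * b n y ^ (γ - 1)) (k n)) i x =
      (∫ w, H v n w * pd θ i w) + (1 / γ) * ∫ y, b n y ^ γ * (χ y * pd v i y + v y * pd χ i y) := by
    intro v hv i n
    rw [(comm_identity (by linarith : 2 ≤ γ) ham ha0 hag (hkt n) (hk0 n) (hke n) hχ hv i).2]
    congr 1
    rw [← ker_int (θ := pd θ i) (F := fun z => ((n:ℝ) + 1) * ∫ y, a (y + z) *
      (χ y * b n y ^ (γ - 1)) * (v (y + z) - v y)) (hN n)]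
    congr 1; ext z
    rw [ker_pd hθ]
    ring
  have hHm : ∀ v, TF v → ∀ n, StronglyMeasurable (H v n) := by
    intro v hv n
    refine StronglyMeasurable.const_mul ?_ _
    refine StronglyMeasurable.integral_prod_right'
      (f := fun z : E3 × E3 => a (z.2 + ((n:ℝ) + 1)⁻¹ • z.1) * (χ z.2 * b n z.2 ^ (γ - 1)) *
        (v (z.2 + ((n:ℝ) + 1)⁻¹ • z.1) - v z.2)) ?_
    refine Measurable.stronglyMeasurable ?_
    have m1 := hχ.cont.measurable
    have m2 := hv.cont.measurable
    have m3 := (hbc n).measurable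
    have m4 : Measurable (fun z : E3 × E3 => z.2 + ((n:ℝ) + 1)⁻¹ • z.1) := by fun_prop
    exact ((ham.comp m4).mul ((m1.comp measurable_snd).mul
      ((m3.comp measurable_snd).pow_const _))).mul ((m2.comp m4).sub (m2.comp measurable_snd))
  set K1 : ℝ := ((eLpNorm a (ENNReal.ofReal (2 * γ)) volume) *
        (eLpNorm a (ENNReal.ofReal (2 * γ)) volume) ^ (γ - 1)).toReal * Cχ with hK1
  have hK10 : 0 ≤ K1 := by positivity
  have hwi : ∀ i, Integrable (fun w : E3 => ‖w‖ * |pd θ i w|) volume := fun i => by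
    have := (TF.mulInt (f := fun w : E3 => ‖w‖) continuous_norm (hθ.pd i)).norm
    refine this.congr (Eventually.of_forall fun x => ?_)
    simp
  have hdom : ∀ v, TF v → ∀ i n w, ‖H v n w * pd θ i w‖ ≤
      (K1 * ∑ j, (eLpNorm (pd v j) 2 volume).toReal) * (‖w‖ * |pd θ i w|) := by
    intro v hv i n w
    rw [norm_mul, Real.norm_eq_abs, Real.norm_eq_abs]
    calc _ ≤ (K1 * ‖w‖ * ∑ j, (eLpNorm (pd v j) 2 volume).toReal) * |pd θ i w| := by
          gcongr; exact (hF v hv).1 n w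
      _ = _ := by ring
  refine ⟨fun n => cv (fun y => χ y * b n y ^ (γ - 1)) (k n), fun n =>
    (comm_identity (by linarith : 2 ≤ γ) ham ha0 hag (hkt n) (hk0 n) (hke n) hχ hχ 0).1, ?_⟩
  set K2 : ℝ := ((eLpNorm a (ENNReal.ofReal (2 * γ)) volume) ^ γ).toReal with hK2
  set K3 : ℝ := (Cχ + Cs * ∑ l, (eLpNorm (pd χ l) 3 volume).toReal) with hK3
  have hK30 : 0 ≤ K3 := by positivity
  refine ⟨K1 * (∑ i, ∫ w : E3, ‖w‖ * |pd θ i w|) + (1 / γ) * (K2 * K3), ?_, ?_, ?_⟩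
  · have : 0 ≤ ∑ i, ∫ w : E3, ‖w‖ * |pd θ i w| :=
      Finset.sum_nonneg fun i _ => integral_nonneg fun w => by positivity
    have : 0 ≤ γ := by linarith
    positivity
  · intro v hv i n
    simp only [hid v hv i n]
    set S := ∑ j, (eLpNorm (pd v j) 2 volume).toReal with hS
    have hS0 : 0 ≤ S := Finset.sum_nonneg fun j _ => ENNReal.toReal_nonneg
    have b1 : |∫ w, H v n w * pd θ i w| ≤ (K1 * S) * ∑ i, ∫ w : E3, ‖w‖ * |pd θ i w| := by
      have h1 : ‖∫ w, H v n w * pd θ i w‖ ≤ ∫ w, (K1 * S) * (‖w‖ * |pd θ i w|) :=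
        norm_integral_le_of_norm_le ((hwi i).const_mul _)
          (Eventually.of_forall fun w => hdom v hv i n w)
      rw [integral_const_mul] at h1
      refine le_trans h1 (mul_le_mul_of_nonneg_left ?_ (by positivity))
      exact Finset.single_le_sum (f := fun i => ∫ w : E3, ‖w‖ * |pd θ i w|)
        (fun i _ => integral_nonneg fun w => by positivity) (Finset.mem_univ i)
    have b2 : |∫ y, b n y ^ γ * (χ y * pd v i y + v y * pd χ i y)| ≤ K2 * (K3 * S) := by
      refine ((hF v hv).2.2.1 n _ ((hχ.mul (hv.pd i)).add (hv.mul (hχ.pd i)))).trans ?_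
      exact mul_le_mul_of_nonneg_left (hterm_bound hχ hC hχb hs hv i) ENNReal.toReal_nonneg
    have hg : 0 ≤ 1 / γ := by positivity
    calc _ ≤ |∫ w, H v n w * pd θ i w| +
          |(1 / γ) * ∫ y, b n y ^ γ * (χ y * pd v i y + v y * pd χ i y)| := abs_add_le _ _
      _ ≤ (K1 * S) * (∑ i, ∫ w : E3, ‖w‖ * |pd θ i w|) + (1 / γ) * (K2 * (K3 * S)) := by
          rw [abs_mul, abs_of_nonneg hg]; gcongr
      _ = _ := by ring
  · intro v hv i
    simp only [hid v hv i]
    refine Tendsto.add ?_ (Tendsto.const_mul _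
      ((hF v hv).2.2.2 _ ((hχ.mul (hv.pd i)).add (hv.mul (hχ.pd i)))))
    have hlim := tendsto_integral_of_dominated_convergence
      (F := fun n w => H v n w * pd θ i w)
      (f := fun w => (∫ y, a y ^ γ * (χ y * dirD v w y)) * pd θ i w)
      (fun w => (K1 * ∑ j, (eLpNorm (pd v j) 2 volume).toReal) * (‖w‖ * |pd θ i w|))
      (fun n => ((hHm v hv n).aestronglyMeasurable.mul (hθ.pd i).cont.aestronglyMeasurable))
      ((hwi i).const_mul _) (fun n => Eventually.of_forall fun w => hdom v hv i n w)
      (Eventually.of_forall fun w => ((hF v hv).2.1 w).mul_const _)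
    convert hlim using 2
    have hi2 : ∀ j, Integrable (fun y => a y ^ γ * (χ y * pd v j y)) volume := fun j => by
      have t := hχ.mul (hv.pd j)
      obtain ⟨C, hC0, hCb⟩ := t.bdd
      have := hag.bdd_mul (c := C) t.cont.aestronglyMeasurable (Eventually.of_forall hCb)
      refine this.congr (Eventually.of_forall fun x => ?_)
      simp only; ring
    have e1 : ∀ w : E3, (∫ y, a y ^ γ * (χ y * dirD v w y)) * pd θ i w =
        ∑ j, (∫ y, a y ^ γ * (χ y * pd v j y)) * (w j * pd θ i w) := by
      intro w
      have : ∀ y, a y ^ γ * (χ y * dirD v w y) =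
          ∑ j, w j * (a y ^ γ * (χ y * pd v j y)) := by
        intro y; simp only [dirD, Finset.mul_sum]
        exact Finset.sum_congr rfl fun j _ => by ring
      simp only [this]
      rw [integral_finsetSum _ fun j _ => (hi2 j).const_mul _, Finset.sum_mul]
      refine Finset.sum_congr rfl fun j _ => ?_
      rw [integral_const_mul]; ring
    simp only [e1]
    rw [integral_finsetSum]
    · simp only [integral_const_mul, moment hθ hθ1]
      simp
    · intro j _
      refine (TF.mulInt (f := fun w : E3 => w j) (by fun_prop) (hθ.pd i)).const_mul _


/-- The stress component. -/
def sg (μ η : ℝ) (D : Fin 3 → Fin 3 → E3 → ℝ) (i j : Fin 3) (x : E3) : ℝ :=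
  Smat μ η (fun i j => D i j x) i j

/-- Cleaned-up solution data. -/
structure Sol (μ η γ : ℝ) (a : E3 → ℝ) (U : Fin 3 → E3 → ℝ) (D : Fin 3 → Fin 3 → E3 → ℝ)
    (g : Fin 3 → E3 → ℝ) (un : ℕ → Fin 3 → E3 → ℝ) (gn : ℕ → E3 → ℝ) : Prop where
  hμ : 0 < μ
  hη : 0 ≤ η
  hγ : 6 ≤ γ
  ham : Measurable a
  ha0 : ∀ x, 0 ≤ a x
  hag : Integrable (fun x => a x ^ γ) volume
  hX : Integrable (fun x => a x * ∑ i, U i x ^ 2) volume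
  hU : ∀ i, MemLp (U i) 6 volume
  hD : ∀ i j, MemLp (D i j) 2 volume
  hg : ∀ i, MemLp (g i) (ENNReal.ofReal (6 * γ / (5 * γ - 6))) volume
  hun : ∀ n i, TF (un n i)
  hgn : ∀ n, TF (gn n)
  hunl : ∀ i, Tendsto (fun n => eLpNorm (fun x => un n i x - U i x) 6 volume) atTop (𝓝 0)
  hdl : ∀ i j, Tendsto (fun n => eLpNorm (fun x => pd (un n i) j x - D i j x) 2 volume)
    atTop (𝓝 0)
  hgl : ∀ i, Tendsto (fun n => eLpNorm (fun x => pd (gn n) i x - g i x)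
    (ENNReal.ofReal (6 * γ / (5 * γ - 6))) volume) atTop (𝓝 0)
  mass : ∀ φ, TF φ → ∫ x, a x * ∑ i, U i x * pd φ i x = 0
  mom : ∀ φ : Fin 3 → E3 → ℝ, (∀ i, TF (φ i)) →
    ∫ x, ((∑ i, ∑ j, a x * U i x * U j x * pd (φ i) j x) + a x ^ γ * ∑ i, pd (φ i) i x) =
      (∫ x, ∑ i, ∑ j, sg μ η D i j x * pd (φ i) j x) - ∫ x, ∑ i, a x * g i x * φ i x

lemma hold {p q r : ℝ≥0∞} (a b c : ℝ) (hp : p = ENNReal.ofReal a) (hq : q = ENNReal.ofReal b)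
    (hr : r = ENNReal.ofReal c) (ha : 0 < a) (hb : 0 < b) (hc : 0 < c) (h : a⁻¹ + b⁻¹ = c⁻¹) :
    ENNReal.HolderTriple p q r := by
  subst hp hq hr
  exact holder_ofReal ha hb hc h

lemma int_of_bound {f g : E3 → ℝ} (hg : Integrable g volume) (hf : AEStronglyMeasurable f volume)
    (h : ∀ x, |f x| ≤ g x) : Integrable f volume :=
  hg.mono' hf (Eventually.of_forall h)

lemma norm2_eq {h : E3 → ℝ} (hh : MemLp h 2 volume) :
    (eLpNorm h 2 volume).toReal = √(∫ x, h x ^ 2) := by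
  rw [MemLp.eLpNorm_eq_integral_rpow_norm (by norm_num) (by norm_num) hh,
    ENNReal.toReal_ofReal (by positivity), Real.sqrt_eq_rpow]
  simp

lemma sq_bound {r w γ : ℝ} (hr : 0 ≤ r) (hw : 0 ≤ w) (hγ : 6 ≤ γ) :
    (r * w) ^ 2 ≤ r * w + r ^ γ + w ^ 3 := by
  have h0 := Real.rpow_nonneg hr γ
  have hrw : 0 ≤ r * w := by positivity
  have hw3 : 0 ≤ w ^ 3 := by positivity
  rcases le_total (r * w) 1 with h | h
  · nlinarith
  · rcases le_total 1 r with h1 | h1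
    · have h2 : r ^ (6:ℕ) ≤ r ^ γ := by
        rw [← Real.rpow_natCast]; exact Real.rpow_le_rpow_of_exponent_le h1 (by simpa using hγ)
      have h3 : (r * w) ^ 2 ≤ r ^ 6 + w ^ 3 := by
        rcases le_total (r ^ 2) w with h4 | h4
        · have : r ^ 2 * w ^ 2 ≤ w * w ^ 2 := by gcongr
          nlinarith [pow_nonneg hr 6]
        · have : w ^ 2 ≤ (r ^ 2) ^ 2 := by gcongr
          have : r ^ 2 * w ^ 2 ≤ r ^ 2 * (r ^ 2) ^ 2 := by gcongr
          nlinarith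
      linarith
    · have h2 : 1 ≤ w := by nlinarith
      have h3 : (r * w) ^ 2 ≤ w ^ 2 := by
        have : r * w ≤ w := by nlinarith
        gcongr
      have h4 : w ^ 2 ≤ w ^ 3 := pow_le_pow_right₀ h2 (by norm_num)
      linarith

lemma lin_bound {X t w : ℝ} (hX : 0 ≤ X) (ht : t ^ 2 ≤ w) : |X * t| ≤ X + X ^ 2 + w ^ 3 := by
  have hw : 0 ≤ w := (sq_nonneg t).trans ht
  rw [abs_mul, abs_of_nonneg hX]
  rw [← sq_abs] at ht
  have := abs_nonneg t
  rcases le_total w 1 with h | h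
  · have : |t| ≤ 1 := by nlinarith
    have : 0 ≤ w ^ 3 := by positivity
    nlinarith
  · have : w ≤ w ^ 3 := le_self_pow₀ h (by norm_num)
    nlinarith [sq_nonneg (X - |t|)]

lemma comp_sq_le (U : Fin 3 → E3 → ℝ) (i : Fin 3) (x : E3) : U i x ^ 2 ≤ ∑ j, U j x ^ 2 :=
  Finset.single_le_sum (f := fun j => U j x ^ 2) (fun j _ => sq_nonneg _) (Finset.mem_univ i)

lemma prod_le (U : Fin 3 → E3 → ℝ) (i j : Fin 3) (x : E3) : |U i x * U j x| ≤ ∑ j, U j x ^ 2 := by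
  have h1 := comp_sq_le U i x
  have h2 := comp_sq_le U j x
  rw [abs_mul]
  rw [← sq_abs] at h1 h2
  nlinarith [sq_nonneg (|U i x| - |U j x|)]

section
variable {μ η γ : ℝ} {a : E3 → ℝ} {U : Fin 3 → E3 → ℝ} {D : Fin 3 → Fin 3 → E3 → ℝ}
    {g : Fin 3 → E3 → ℝ} {un : ℕ → Fin 3 → E3 → ℝ} {gn : ℕ → E3 → ℝ}

lemma Sol.W3 (S : Sol μ η γ a U D g un gn) : Integrable (fun x => (∑ i, U i x ^ 2) ^ 3) volume := by
  have : ENNReal.HolderTriple 6 6 3 :=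
    hold 6 6 3 (by simp) (by simp) (by simp) (by norm_num) (by norm_num) (by norm_num) (by norm_num)
  have h1 : MemLp (fun x => ∑ i, U i x ^ 2) 3 volume := by
    refine memLp_finsetSum _ fun i _ => ?_
    have : MemLp (U i * U i) 3 volume := (S.hU i).mul (S.hU i)
    refine this.congr_norm ?_ (Eventually.of_forall fun x => ?_)
    · exact (S.hU i).1.pow 2
    · simp [sq]
  have h2 := MemLp.integrable_norm_pow (p := 3) (by simpa using h1) (by norm_num)
  refine h2.congr (Eventually.of_forall fun x => ?_)
  have : 0 ≤ ∑ i, U i x ^ 2 := Finset.sum_nonneg fun _ _ => sq_nonneg _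
  simp only [Real.norm_of_nonneg this]

lemma Sol.W0 (_S : Sol μ η γ a U D g un gn) (x : E3) : 0 ≤ ∑ i, U i x ^ 2 :=
  Finset.sum_nonneg fun _ _ => sq_nonneg _

lemma Sol.X2 (S : Sol μ η γ a U D g un gn) :
    Integrable (fun x => (a x * ∑ i, U i x ^ 2) ^ 2) volume := by
  refine int_of_bound ((S.hX.add S.hag).add S.W3) (S.hX.1.pow 2) fun x => ?_
  rw [abs_of_nonneg (sq_nonneg _)]
  exact sq_bound (S.ha0 x) (S.W0 x) S.hγ

lemma Sol.XL2 (S : Sol μ η γ a U D g un gn) :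
    MemLp (fun x => a x * ∑ i, U i x ^ 2) 2 volume :=
  (memLp_two_iff_integrable_sq S.hX.1).2 S.X2

lemma Sol.conv2 (S : Sol μ η γ a U D g un gn) (i j : Fin 3) :
    MemLp (fun x => a x * U i x * U j x) 2 volume := by
  refine S.XL2.mono ((S.ham.aestronglyMeasurable.mul (S.hU i).1).mul (S.hU j).1)
    (Eventually.of_forall fun x => ?_)
  rw [mul_assoc, norm_mul, norm_mul (a x) (∑ i, U i x ^ 2)]
  refine mul_le_mul_of_nonneg_left ?_ (norm_nonneg _)
  rw [Real.norm_of_nonneg (S.W0 x)]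
  exact prod_le U i j x

lemma Sol.conv3 (S : Sol μ η γ a U D g un gn) (i j : Fin 3) :
    Integrable (fun x => a x * U i x * U j x ^ 2) volume := by
  refine int_of_bound ((S.hX.add S.X2).add S.W3)
    ((S.ham.aestronglyMeasurable.mul (S.hU i).1).mul ((S.hU j).1.pow 2)) fun x => ?_
  have h1 := lin_bound (mul_nonneg (S.ha0 x) (S.W0 x)) (comp_sq_le U i x)
  refine le_trans ?_ h1
  have h2 := comp_sq_le U j x
  have h3 := S.ha0 x
  have h4 : a x * U i x * U j x ^ 2 = a x * U j x ^ 2 * U i x := by ring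
  rw [h4, abs_mul, abs_mul (a x * _)]
  refine mul_le_mul_of_nonneg_right ?_ (abs_nonneg _)
  rw [abs_of_nonneg (by positivity), abs_of_nonneg (mul_nonneg h3 (S.W0 x))]
  gcongr

lemma Sol.sL2 (S : Sol μ η γ a U D g un gn) (i j : Fin 3) : MemLp (sg μ η D i j) 2 volume := by
  have hd : MemLp (fun x => ∑ k, D k k x) 2 volume := memLp_finsetSum _ fun k _ => S.hD k k
  have := ((((S.hD i j).add (S.hD j i)).sub ((hd.const_mul (2 / 3)).mul_const
    (if i = j then (1:ℝ) else 0))).const_mul μ).add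
    ((hd.const_mul η).mul_const (if i = j then (1:ℝ) else 0))
  exact this

lemma Sol.aLg (S : Sol μ η γ a U D g un gn) : MemLp a (ENNReal.ofReal γ) volume := by
  have hγ := S.hγ
  have h := (integrable_norm_rpow_iff (f := a) (p := ENNReal.ofReal γ) (μ := volume)
    S.ham.aestronglyMeasurable (by simp; linarith) ENNReal.ofReal_ne_top).1
  refine h ?_
  rw [ENNReal.toReal_ofReal (by linarith)]
  refine S.hag.congr (Eventually.of_forall fun x => ?_)
  simp only [Real.norm_of_nonneg (S.ha0 x)]

lemma Sol.gL (S : Sol μ η γ a U D g un gn) (i : Fin 3) :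
    MemLp (fun x => a x * g i x) (ENNReal.ofReal (6 / 5)) volume := by
  have hγ := S.hγ
  have : ENNReal.HolderTriple (ENNReal.ofReal γ) (ENNReal.ofReal (6 * γ / (5 * γ - 6)))
      (ENNReal.ofReal (6 / 5)) := by
    refine holder_ofReal (by linarith) (div_pos (by linarith) (by linarith)) (by norm_num) ?_
    rw [inv_div]; field_simp; ring
  exact (S.hg i).mul S.aLg

lemma H65 : ENNReal.HolderTriple (ENNReal.ofReal (6 / 5)) 6 1 :=
  hold (6 / 5) 6 1 rfl (by simp) (by simp) (by norm_num) (by norm_num) (by norm_num) (by norm_num)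

/-- Step D : the force does no work. -/
lemma Sol.force (S : Sol μ η γ a U D g un gn) : ∑ i, ∫ x, a x * g i x * U i x = 0 := by
  have hγ := S.hγ
  have : ENNReal.HolderTriple (ENNReal.ofReal γ) 6 (ENNReal.ofReal (6 * γ / (γ + 6))) := by
    refine hold γ 6 _ rfl (by simp) rfl (by linarith) (by norm_num)
      (div_pos (by linarith) (by linarith)) ?_
    rw [inv_div]; field_simp; ring
  have : ENNReal.HolderTriple (ENNReal.ofReal (6 * γ / (γ + 6)))
      (ENNReal.ofReal (6 * γ / (5 * γ - 6))) 1 := by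
    refine hold _ _ 1 rfl rfl (by simp) (div_pos (by linarith) (by linarith))
      (div_pos (by linarith) (by linarith)) (by norm_num) ?_
    rw [inv_div, inv_div]; field_simp; ring
  have m1 : ∀ i, MemLp (fun x => a x * U i x) (ENNReal.ofReal (6 * γ / (γ + 6))) volume :=
    fun i => (S.hU i).mul S.aLg
  have t : Tendsto (fun n => ∑ i, ∫ x, a x * U i x * pd (gn n) i x) atTop
      (𝓝 (∑ i, ∫ x, a x * U i x * g i x)) :=
    tendsto_finsetSum _ fun i _ =>
      tendsto_pair (m1 i) (S.hg i) (fun n => ((S.hgn n).pd i).memLp _) (S.hgl i)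
  have e : ∀ n, ∑ i, ∫ x, a x * U i x * pd (gn n) i x = 0 := by
    intro n
    rw [← S.mass _ (S.hgn n), ← integral_finsetSum]
    · congr 1; ext x
      rw [Finset.mul_sum]
      exact Finset.sum_congr rfl fun i _ => by ring
    · intro i _
      exact (m1 i).integrable_mul (q := ENNReal.ofReal (6 * γ / (5 * γ - 6)))
        (((S.hgn n).pd i).memLp _)
  simp only [e] at t
  have := tendsto_nhds_unique t tendsto_const_nhds
  rw [← this]
  refine Finset.sum_congr rfl fun i _ => ?_
  congr 1; ext x; ring

lemma int_mul_tf {f h : E3 → ℝ} (hf : Integrable f volume) (hh : TF h) :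
    Integrable (fun x => f x * h x) volume := by
  obtain ⟨C, hC0, hCb⟩ := hh.bdd
  have := hf.bdd_mul (c := C) hh.cont.aestronglyMeasurable (Eventually.of_forall hCb)
  refine this.congr (Eventually.of_forall fun x => ?_)
  simp only; ring

/-- Momentum equation in split form. -/
lemma Sol.mom' (S : Sol μ η γ a U D g un gn) (φ : Fin 3 → E3 → ℝ) (hφ : ∀ i, TF (φ i)) :
    (∑ i, ∑ j, ∫ x, a x * U i x * U j x * pd (φ i) j x) + (∑ i, ∫ x, a x ^ γ * pd (φ i) i x) =
      (∑ i, ∑ j, ∫ x, sg μ η D i j x * pd (φ i) j x) - ∑ i, ∫ x, a x * g i x * φ i x := by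
  have h := S.mom φ hφ
  have := H65
  have i1 : ∀ i j, Integrable (fun x => a x * U i x * U j x * pd (φ i) j x) volume :=
    fun i j => (S.conv2 i j).integrable_mul (((hφ i).pd j).memLp 2)
  have i2 : ∀ i, Integrable (fun x => a x ^ γ * pd (φ i) i x) volume :=
    fun i => int_mul_tf S.hag ((hφ i).pd i)
  have i3 : ∀ i j, Integrable (fun x => sg μ η D i j x * pd (φ i) j x) volume :=
    fun i j => (S.sL2 i j).integrable_mul (((hφ i).pd j).memLp 2)
  have i4 : ∀ i, Integrable (fun x => a x * g i x * φ i x) volume :=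
    fun i => (S.gL i).integrable_mul (q := 6) ((hφ i).memLp 6)
  simp only [Finset.mul_sum] at h
  rw [integral_add (integrable_finsetSum _ fun i _ => integrable_finsetSum _ fun j _ => i1 i j)
    (integrable_finsetSum _ fun i _ => i2 i)] at h
  rw [integral_finsetSum _ fun i _ => integrable_finsetSum _ fun j _ => i1 i j,
    integral_finsetSum _ fun i _ => i2 i,
    integral_finsetSum _ fun i _ => integrable_finsetSum _ fun j _ => i3 i j,
    integral_finsetSum _ fun i _ => i4 i] at h
  rw [Finset.sum_congr rfl fun i _ => integral_finsetSum _ fun j _ => i1 i j,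
    Finset.sum_congr rfl fun i _ => integral_finsetSum _ fun j _ => i3 i j] at h
  exact h

/-- Step A : the pressure is square integrable. -/
lemma Sol.pL2 (S : Sol μ η γ a U D g un gn) : MemLp (fun x => a x ^ γ) 2 volume := by
  obtain ⟨Cs, hs⟩ := sobolev
  have := H65
  refine memLp_two_of_weak_bound S.hag
    ((∑ i, ∑ j, √(∫ x, sg μ η D i j x ^ 2)) + (∑ i, ∑ j, √(∫ x, (a x * U i x * U j x) ^ 2)) +
      ∑ i, (eLpNorm (fun x => a x * g i x) (ENNReal.ofReal (6 / 5)) volume).toReal *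
        (Cs * ∑ _l : Fin 3, (1:ℝ))) ?_
  intro ψ hψ
  have h := S.mom' (fun i => pd ψ i) (fun i => hψ.pd i)
  have e1 : ∫ x, a x ^ γ * Lap ψ x = ∑ i, ∫ x, a x ^ γ * pd (pd ψ i) i x := by
    rw [← integral_finsetSum _ fun i _ => int_mul_tf S.hag ((hψ.pd i).pd i)]
    congr 1; ext x; rw [Lap, Finset.mul_sum]
  set Q := √(∫ x, Lap ψ x ^ 2) with hQ
  have hQ0 : 0 ≤ Q := Real.sqrt_nonneg _
  have hb : ∀ i j, √(∫ x, pd (pd ψ i) j x ^ 2) ≤ Q := fun i j =>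
    Real.sqrt_le_sqrt (hess_bound hψ i j)
  have b1 : ∀ i j, |∫ x, sg μ η D i j x * pd (pd ψ i) j x| ≤ √(∫ x, sg μ η D i j x ^ 2) * Q :=
    fun i j => (cs_int (S.sL2 i j) (((hψ.pd i).pd j).memLp 2)).trans (by gcongr; exact hb i j)
  have b2 : ∀ i j, |∫ x, a x * U i x * U j x * pd (pd ψ i) j x| ≤
      √(∫ x, (a x * U i x * U j x) ^ 2) * Q :=
    fun i j => (cs_int (S.conv2 i j) (((hψ.pd i).pd j).memLp 2)).trans (by gcongr; exact hb i j)
  have b3 : ∀ i, |∫ x, a x * g i x * pd ψ i x| ≤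
      (eLpNorm (fun x => a x * g i x) (ENNReal.ofReal (6 / 5)) volume).toReal *
        (Cs * ∑ _l : Fin 3, (1:ℝ)) * Q := by
    intro i
    refine (pair_bound (q := 6) (S.gL i) ((hψ.pd i).memLp 6)).trans ?_
    rw [mul_assoc]
    refine mul_le_mul_of_nonneg_left ?_ ENNReal.toReal_nonneg
    have f1 : ∀ j, eLpNorm (pd (pd ψ i) j) 2 volume ≠ ⊤ := fun j =>
      (((hψ.pd i).pd j).memLp 2).2.ne
    have h3 := ENNReal.toReal_mono (ENNReal.mul_ne_top (ENNReal.coe_ne_top (r := Cs))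
      (ENNReal.sum_ne_top.2 fun j _ => f1 j)) (hs _ (hψ.pd i))
    rw [ENNReal.toReal_mul, ENNReal.toReal_sum fun j _ => f1 j, ENNReal.coe_toReal] at h3
    refine h3.trans ?_
    rw [mul_assoc, Finset.sum_mul]
    gcongr with l
    rw [norm2_eq (((hψ.pd i).pd l).memLp 2), one_mul]
    exact hb i l
  have e2 : ∫ x, a x ^ γ * Lap ψ x = (∑ i, ∑ j, ∫ x, sg μ η D i j x * pd (pd ψ i) j x) -
      (∑ i, ∑ j, ∫ x, a x * U i x * U j x * pd (pd ψ i) j x) -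
      ∑ i, ∫ x, a x * g i x * pd ψ i x := by
    rw [e1]; linarith
  rw [e2, add_mul, add_mul]
  have c1 : |∑ i, ∑ j, ∫ x, sg μ η D i j x * pd (pd ψ i) j x| ≤
      (∑ i, ∑ j, √(∫ x, sg μ η D i j x ^ 2)) * Q := by
    rw [Finset.sum_mul]; simp only [Finset.sum_mul]
    exact (Finset.abs_sum_le_sum_abs _ _).trans (Finset.sum_le_sum fun i _ =>
      (Finset.abs_sum_le_sum_abs _ _).trans (Finset.sum_le_sum fun j _ => b1 i j))
  have c2 : |∑ i, ∑ j, ∫ x, a x * U i x * U j x * pd (pd ψ i) j x| ≤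
      (∑ i, ∑ j, √(∫ x, (a x * U i x * U j x) ^ 2)) * Q := by
    rw [Finset.sum_mul]; simp only [Finset.sum_mul]
    exact (Finset.abs_sum_le_sum_abs _ _).trans (Finset.sum_le_sum fun i _ =>
      (Finset.abs_sum_le_sum_abs _ _).trans (Finset.sum_le_sum fun j _ => b2 i j))
  have c3 : |∑ i, ∫ x, a x * g i x * pd ψ i x| ≤
      (∑ i, (eLpNorm (fun x => a x * g i x) (ENNReal.ofReal (6 / 5)) volume).toReal *
        (Cs * ∑ _l : Fin 3, (1:ℝ))) * Q := by
    rw [Finset.sum_mul]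
    exact (Finset.abs_sum_le_sum_abs _ _).trans (Finset.sum_le_sum fun i _ => b3 i)
  refine (abs_sub _ _).trans (add_le_add ((abs_sub _ _).trans (add_le_add c1 c2)) c3)

lemma Sol.aL2g (S : Sol μ η γ a U D g un gn) : MemLp a (ENNReal.ofReal (2 * γ)) volume := by
  have hγ := S.hγ
  have h := (integrable_norm_rpow_iff (f := a) (p := ENNReal.ofReal (2 * γ)) (μ := volume)
    S.ham.aestronglyMeasurable (by simp; linarith) ENNReal.ofReal_ne_top).1
  refine h ?_
  rw [ENNReal.toReal_ofReal (by linarith)]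
  refine S.pL2.integrable_sq.congr (Eventually.of_forall fun x => ?_)
  simp only [Real.norm_of_nonneg (S.ha0 x)]
  rw [mul_comm, Real.rpow_mul (S.ha0 x), Real.rpow_two]

end


lemma cut_lim {χ : ℕ → E3 → ℝ} (hχ : ∀ n, TF (χ n)) (h01 : ∀ n x, 0 ≤ χ n x ∧ χ n x ≤ 1)
    (hl : ∀ x, Tendsto (fun n => χ n x) atTop (𝓝 1)) {f : E3 → ℝ} (hf : Integrable f volume) :
    Tendsto (fun n => ∫ x, f x * χ n x) atTop (𝓝 (∫ x, f x)) := by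
  refine tendsto_integral_of_dominated_convergence (fun x => ‖f x‖)
    (fun n => hf.1.mul (hχ n).cont.aestronglyMeasurable) hf.norm
    (fun n => Eventually.of_forall fun x => ?_) (Eventually.of_forall fun x => ?_)
  · rw [norm_mul, Real.norm_of_nonneg (h01 n x).1]
    exact mul_le_of_le_one_right (norm_nonneg _) (h01 n x).2
  · simpa using (hl x).const_mul (f x)

lemma cut_lim0 {χ : ℕ → E3 → ℝ} {C : ℝ}
    (hχ : ∀ (n : ℕ) i x, |pd (χ n) i x| ≤ C / (n + 1)) {f : E3 → ℝ} (hf : Integrable f volume)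
    (i : Fin 3) : Tendsto (fun n => ∫ x, f x * pd (χ n) i x) atTop (𝓝 0) := by
  have h1 : ∀ n : ℕ, ‖∫ x, f x * pd (χ n) i x‖ ≤ (C / (n + 1)) * ∫ x, ‖f x‖ := by
    intro n
    rw [← integral_const_mul]
    refine norm_integral_le_of_norm_le (hf.norm.const_mul _) (Eventually.of_forall fun x => ?_)
    rw [norm_mul, mul_comm]
    exact mul_le_mul_of_nonneg_right (hχ n i x) (norm_nonneg _)
  refine squeeze_zero_norm h1 ?_
  have := (tendsto_one_div_add_atTop_nhds_zero_nat (𝕜 := ℝ)).const_mul (C * ∫ x, ‖f x‖)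
  rw [mul_zero] at this
  refine this.congr fun n => ?_
  ring

section
variable {μ η γ : ℝ} {a : E3 → ℝ} {U : Fin 3 → E3 → ℝ} {D : Fin 3 → Fin 3 → E3 → ℝ}
    {g : Fin 3 → E3 → ℝ} {un : ℕ → Fin 3 → E3 → ℝ} {gn : ℕ → E3 → ℝ}

/-- Localised powers of the density. -/
lemma Sol.ahL (S : Sol μ η γ a U D g un gn) {h : E3 → ℝ} (hh : TF h) {s : ℝ} (hs : 0 < s)
    (hs' : s < 2 * γ) : MemLp (fun x => a x * h x) (ENNReal.ofReal s) volume := by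
  have hγ := S.hγ
  have hH : ENNReal.HolderTriple (ENNReal.ofReal (2 * γ)) (ENNReal.ofReal (2 * γ * s / (2 * γ - s)))
      (ENNReal.ofReal s) := by
    have : 0 < 2 * γ - s := by linarith
    refine holder_ofReal (by linarith) (div_pos (by nlinarith) this) hs ?_
    rw [inv_div]; field_simp; ring
  exact (hh.memLp (ENNReal.ofReal (2 * γ * s / (2 * γ - s)))).mul S.aL2g

lemma Sol.pU (S : Sol μ η γ a U D g un gn) (i : Fin 3) :
    Integrable (fun x => a x ^ γ * U i x) volume := by
  refine int_of_bound ((S.hag.add S.pL2.integrable_sq).add S.W3) (S.hag.1.mul (S.hU i).1) fun x => ?_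
  exact lin_bound (Real.rpow_nonneg (S.ha0 x) _) (comp_sq_le U i x)

lemma Sol.pD (S : Sol μ η γ a U D g un gn) (i j : Fin 3) :
    Integrable (fun x => a x ^ γ * D i j x) volume := S.pL2.integrable_mul (S.hD i j)

lemma Sol.hdlR (S : Sol μ η γ a U D g un gn) (i j : Fin 3) :
    Tendsto (fun n => (eLpNorm (fun x => pd (un n i) j x - D i j x) 2 volume).toReal) atTop (𝓝 0) := by
  have := (ENNReal.tendsto_toReal ENNReal.zero_ne_top).comp (S.hdl i j)
  simpa [Function.comp_def] using this

/-- Renormalised equation for the limit velocity. -/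
lemma Sol.renormU (S : Sol μ η γ a U D g un gn) {χ : E3 → ℝ} (hχ : TF χ) :
    ∃ ψ : ℕ → E3 → ℝ, (∀ n, TF (ψ n)) ∧ ∀ i, Tendsto (fun n => ∫ x, a x * U i x * pd (ψ n) i x)
      atTop (𝓝 (-(∫ y, a y ^ γ * (χ y * D i i y)) +
          (1 / γ) * ∫ y, a y ^ γ * (χ y * D i i y + U i y * pd χ i y))) := by
  have hγ := S.hγ
  obtain ⟨ψ, hψ, C, hC, hb, hl⟩ := renorm hγ S.ham S.ha0 S.hag S.aL2g hχ
  refine ⟨ψ, hψ, fun i => ?_⟩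
  have hH := H65
  obtain ⟨Cχ, hCχ, hχb⟩ := hχ.bdd
  -- pairing limit for fixed `n`
  have hfix : ∀ n, Tendsto (fun m => ∫ x, a x * un m i x * pd (ψ n) i x) atTop
      (𝓝 (∫ x, a x * U i x * pd (ψ n) i x)) := by
    intro n
    have h := tendsto_pair (q := 6) (S.ahL ((hψ n).pd i) (s := 6 / 5) (by norm_num) (by linarith))
      (S.hU i) (fun m => (S.hun m i).memLp 6) (S.hunl i)
    refine (h.congr fun m => ?_).trans (le_of_eq ?_)
    · congr 1; ext x; ring
    · congr 2; ext x; ring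
  -- linear bound
  have hdiff : ∀ m k n, |(∫ x, a x * un m i x * pd (ψ n) i x) - ∫ x, a x * un k i x * pd (ψ n) i x| ≤
      C * ∑ j, ((eLpNorm (fun x => pd (un m i) j x - D i j x) 2 volume).toReal +
        (eLpNorm (fun x => pd (un k i) j x - D i j x) 2 volume).toReal) := by
    intro m k n
    have hint : ∀ m, Integrable (fun x => a x * un m i x * pd (ψ n) i x) volume := fun m => by
      have := (S.ahL ((hψ n).pd i) (s := 6 / 5) (by norm_num) (by linarith)).integrable_mul (q := 6)
        ((S.hun m i).memLp 6)
      refine this.congr (Eventually.of_forall fun x => ?_)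
      simp only [Pi.mul_apply]; ring
    have h1 := hb _ ((S.hun m i).sub (S.hun k i)) i n
    have h2 : ∫ x, a x * (un m i x - un k i x) * pd (ψ n) i x =
        (∫ x, a x * un m i x * pd (ψ n) i x) - ∫ x, a x * un k i x * pd (ψ n) i x := by
      rw [← integral_sub (hint m) (hint k)]
      congr 1; ext x; ring
    rw [h2] at h1
    refine h1.trans (mul_le_mul_of_nonneg_left (Finset.sum_le_sum fun j _ => ?_) hC)
    have h3 : pd (fun x => un m i x - un k i x) j =
        (fun x => pd (un m i) j x - D i j x) - (fun x => pd (un k i) j x - D i j x) := by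
      ext x
      rw [pd_sub ((S.hun m i).diff x) ((S.hun k i).diff x)]
      simp
    rw [h3]
    have m1 : ∀ m, MemLp (fun x => pd (un m i) j x - D i j x) 2 volume := fun m =>
      (((S.hun m i).pd j).memLp 2).sub (S.hD i j)
    rw [← ENNReal.toReal_add (m1 m).2.ne (m1 k).2.ne]
    exact ENNReal.toReal_mono (ENNReal.add_ne_top.2 ⟨(m1 m).2.ne, (m1 k).2.ne⟩)
      (eLpNorm_sub_le (m1 m).1 (m1 k).1 (by norm_num))
  have hlimd : ∀ m n, |(∫ x, a x * un m i x * pd (ψ n) i x) - ∫ x, a x * U i x * pd (ψ n) i x| ≤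
      C * ∑ j, (eLpNorm (fun x => pd (un m i) j x - D i j x) 2 volume).toReal := by
    intro m n
    have t1 := ((hfix n).const_sub (∫ x, a x * un m i x * pd (ψ n) i x)).abs
    have t2 : Tendsto (fun k => C * ∑ j, ((eLpNorm (fun x => pd (un m i) j x - D i j x) 2 volume).toReal +
        (eLpNorm (fun x => pd (un k i) j x - D i j x) 2 volume).toReal)) atTop
        (𝓝 (C * ∑ j, ((eLpNorm (fun x => pd (un m i) j x - D i j x) 2 volume).toReal + 0))) :=
      Tendsto.const_mul _ (tendsto_finsetSum _ fun j _ => (S.hdlR i j).const_add _)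
    simp only [add_zero] at t2
    exact le_of_tendsto_of_tendsto' t1 t2 fun k => hdiff m k n
  have hz : Tendsto (fun m => C * ∑ j, (eLpNorm (fun x => pd (un m i) j x - D i j x) 2 volume).toReal)
      atTop (𝓝 0) := by
    have : Tendsto (fun m => C * ∑ j, (eLpNorm (fun x => pd (un m i) j x - D i j x) 2 volume).toReal)
      atTop (𝓝 (C * ∑ _j : Fin 3, 0)) :=
      Tendsto.const_mul _ (tendsto_finsetSum _ fun j _ => S.hdlR i j)
    simpa using this
  have hunif : TendstoUniformly (fun m n => ∫ x, a x * un m i x * pd (ψ n) i x)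
      (fun n => ∫ x, a x * U i x * pd (ψ n) i x) atTop := by
    rw [Metric.tendstoUniformly_iff]
    intro ε hε
    filter_upwards [hz.eventually (gt_mem_nhds hε)] with m hm n
    rw [dist_comm, Real.dist_eq]
    exact (hlimd m n).trans_lt hm
  refine hunif.tendsto_of_eventually_tendsto
    (Eventually.of_forall fun m => hl _ (S.hun m i) i) ?_
  -- convergence of the limits
  have p1 : MemLp (fun x => a x ^ γ * χ x) 2 volume := by
    have := bdd_mul_memLp hCχ hχb hχ.cont S.pL2
    refine (memLp_congr_ae (Eventually.of_forall fun x => ?_)).1 this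
    ring
  have l1 : Tendsto (fun m => ∫ y, a y ^ γ * (χ y * pd (un m i) i y)) atTop
      (𝓝 (∫ y, a y ^ γ * (χ y * D i i y))) := by
    have := tendsto_pair p1 (S.hD i i) (fun m => ((S.hun m i).pd i).memLp 2) (S.hdl i i)
    simpa only [mul_assoc] using this
  have p2 : MemLp (fun x => a x ^ γ * pd χ i x) (ENNReal.ofReal (6 / 5)) volume := by
    have hH2 : ENNReal.HolderTriple 2 3 (ENNReal.ofReal (6 / 5)) :=
      hold 2 3 (6 / 5) (by simp) (by simp) rfl (by norm_num) (by norm_num) (by norm_num) (by norm_num)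
    exact ((hχ.pd i).memLp 3).mul S.pL2
  have l2 : Tendsto (fun m => ∫ y, a y ^ γ * (un m i y * pd χ i y)) atTop
      (𝓝 (∫ y, a y ^ γ * (U i y * pd χ i y))) := by
    have := tendsto_pair (q := 6) p2 (S.hU i) (fun m => (S.hun m i).memLp 6) (S.hunl i)
    refine (this.congr fun m => ?_).trans (le_of_eq ?_)
    · congr 1; ext x; ring
    · congr 2; ext x; ring
  have i1 : ∀ f : E3 → ℝ, MemLp f 2 volume → Integrable (fun y => a y ^ γ * (χ y * f y)) volume :=
    fun f hf => (p1.integrable_mul hf).congr (Eventually.of_forall fun x => by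
      simp only [Pi.mul_apply]; ring)
  have i2 : ∀ f : E3 → ℝ, MemLp f 6 volume → Integrable (fun y => a y ^ γ * (f y * pd χ i y)) volume :=
    fun f hf => (p2.integrable_mul (q := 6) hf).congr (Eventually.of_forall fun x => by
      simp only [Pi.mul_apply]; ring)
  refine l1.neg.add (Tendsto.const_mul _ ?_)
  simp only [mul_add]
  rw [integral_add (i1 _ (S.hD i i)) (i2 _ (S.hU i))]
  refine (l1.add l2).congr fun m => ?_
  rw [integral_add (i1 _ (((S.hun m i).pd i).memLp 2)) (i2 _ ((S.hun m i).memLp 6))]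

/-- Step B : the pressure does no work. -/
lemma Sol.press (S : Sol μ η γ a U D g un gn) : ∑ i, ∫ x, a x ^ γ * D i i x = 0 := by
  have hγ := S.hγ
  obtain ⟨χ, C, hC, hχ, h01, hl, hd⟩ := cutoffs
  have key : ∀ n, (-1 + 1 / γ) * (∑ i, ∫ x, a x ^ γ * D i i x * χ n x) +
      (1 / γ) * ∑ i, ∫ x, a x ^ γ * U i x * pd (χ n) i x = 0 := by
    intro n
    obtain ⟨ψ, hψ, ht⟩ := S.renormU (hχ n)
    have hs := tendsto_finsetSum Finset.univ fun i _ => ht i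
    have e : ∀ m, ∑ i, ∫ x, a x * U i x * pd (ψ m) i x = 0 := by
      intro m
      have hH := H65
      rw [← S.mass _ (hψ m), ← integral_finsetSum]
      · congr 1; ext x
        rw [Finset.mul_sum]
        exact Finset.sum_congr rfl fun i _ => by ring
      · intro i _
        have := (S.ahL ((hψ m).pd i) (s := 6 / 5) (by norm_num) (by linarith)).integrable_mul (q := 6)
          (S.hU i)
        refine this.congr (Eventually.of_forall fun x => ?_)
        simp only [Pi.mul_apply]; ring
    simp only [e] at hs
    have h0 := tendsto_nhds_unique hs tendsto_const_nhds
    rw [← h0, Finset.mul_sum, Finset.mul_sum, ← Finset.sum_add_distrib]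
    refine Finset.sum_congr rfl fun i _ => ?_
    have e1 : ∫ y, a y ^ γ * (χ n y * D i i y) = ∫ x, a x ^ γ * D i i x * χ n x := by
      congr 1; ext x; ring
    have e2 : ∫ y, a y ^ γ * (χ n y * D i i y + U i y * pd (χ n) i y) =
        (∫ x, a x ^ γ * D i i x * χ n x) + ∫ x, a x ^ γ * U i x * pd (χ n) i x := by
      rw [← integral_add (int_mul_tf (S.pD i i) (hχ n)) (int_mul_tf (S.pU i) ((hχ n).pd i))]
      congr 1; ext x; ring
    rw [e1, e2]; ring
  have l1 : Tendsto (fun n => (-1 + 1 / γ) * (∑ i, ∫ x, a x ^ γ * D i i x * χ n x) +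
      (1 / γ) * ∑ i, ∫ x, a x ^ γ * U i x * pd (χ n) i x) atTop
      (𝓝 ((-1 + 1 / γ) * (∑ i, ∫ x, a x ^ γ * D i i x) + (1 / γ) * ∑ _i : Fin 3, 0)) :=
    (Tendsto.const_mul _ (tendsto_finsetSum _ fun i _ => cut_lim hχ h01 hl (S.pD i i))).add
      (Tendsto.const_mul _ (tendsto_finsetSum _ fun i _ => cut_lim0 hd (S.pU i) i))
  simp only [key] at l1
  have h0 := tendsto_nhds_unique l1 tendsto_const_nhds
  simp only [Finset.sum_const_zero, mul_zero, add_zero] at h0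
  rcases mul_eq_zero.1 h0 with h | h
  · exfalso
    have : 1 / γ < 1 := by rw [div_lt_one (by linarith)]; linarith
    linarith
  · exact h

end


section
variable {μ η γ : ℝ} {a : E3 → ℝ} {U : Fin 3 → E3 → ℝ} {D : Fin 3 → Fin 3 → E3 → ℝ}
    {g : Fin 3 → E3 → ℝ} {un : ℕ → Fin 3 → E3 → ℝ} {gn : ℕ → E3 → ℝ}

lemma Sol.convLoc (S : Sol μ η γ a U D g un gn) {χ : E3 → ℝ} (hχ : TF χ) (j : Fin 3) :
    ∑ i, ((∫ x, a x * U i x * U j x ^ 2 * pd χ i x) +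
      2 * ∫ x, a x * U i x * U j x * D j i x * χ x) = 0 := by
  have hγ := S.hγ
  have hH1 : ENNReal.HolderTriple 6 6 3 :=
    hold 6 6 3 (by simp) (by simp) (by simp) (by norm_num) (by norm_num) (by norm_num) (by norm_num)
  have hH2 : ENNReal.HolderTriple 6 2 (ENNReal.ofReal (3 / 2)) :=
    hold 6 2 (3 / 2) (by simp) (by simp) rfl (by norm_num) (by norm_num) (by norm_num) (by norm_num)
  have hH3 : ENNReal.HolderTriple 2 6 (ENNReal.ofReal (3 / 2)) :=
    hold 2 6 (3 / 2) (by simp) (by simp) rfl (by norm_num) (by norm_num) (by norm_num) (by norm_num)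
  have hH4 : ENNReal.HolderTriple (ENNReal.ofReal (3 / 2)) 3 1 :=
    hold (3 / 2) 3 1 rfl (by simp) (by simp) (by norm_num) (by norm_num) (by norm_num) (by norm_num)
  have hH5 : ENNReal.HolderTriple 3 (ENNReal.ofReal (3 / 2)) 1 :=
    hold 3 (3 / 2) 1 (by simp) rfl (by simp) (by norm_num) (by norm_num) (by norm_num) (by norm_num)
  have m6 : ∀ h : E3 → ℝ, TF h → ∀ i, MemLp (fun x => a x * h x * U i x) 3 volume := fun h hh i => by
    have := S.ahL hh (s := 6) (by norm_num) (by linarith)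
    rw [show ENNReal.ofReal 6 = 6 by simp] at this
    exact (S.hU i).mul this
  have m2 : ∀ h : E3 → ℝ, TF h → ∀ i,
      MemLp (fun x => a x * h x * U i x) (ENNReal.ofReal (3 / 2)) volume := fun h hh i => by
    have := S.ahL hh (s := 2) (by norm_num) (by linarith)
    rw [show ENNReal.ofReal 2 = 2 by simp] at this
    exact (S.hU i).mul this
  have u3 : ∀ m, MemLp (fun x => un m j x * un m j x) 3 volume := fun m =>
    ((S.hun m j).mul (S.hun m j)).memLp 3
  have d32 : ∀ m i, MemLp (fun x => un m j x * pd (un m j) i x) (ENNReal.ofReal (3 / 2)) volume :=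
    fun m i => ((S.hun m j).mul ((S.hun m j).pd i)).memLp _
  have u3' : MemLp (fun x => U j x * U j x) 3 volume := (S.hU j).mul (S.hU j)
  have d32' : ∀ i, MemLp (fun x => U j x * D j i x) (ENNReal.ofReal (3 / 2)) volume :=
    fun i => (S.hD j i).mul (S.hU j)
  have c1 := tendsto_mul_Lp (r := 3) (by norm_num) (S.hU j) (S.hU j)
    (fun m => ((S.hun m j).memLp 6).1) (fun m => ((S.hun m j).memLp 6).1) (S.hunl j) (S.hunl j)
  have c2 := fun i => tendsto_mul_Lp (r := ENNReal.ofReal (3 / 2)) (by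
      rw [← ENNReal.ofReal_one]; exact ENNReal.ofReal_le_ofReal (by norm_num)) (S.hU j) (S.hD j i)
    (fun m => ((S.hun m j).memLp 6).1) (fun m => (((S.hun m j).pd i).memLp 2).1) (S.hunl j) (S.hdl j i)
  have e : ∀ m, ∑ i, ((∫ x, a x * pd χ i x * U i x * (un m j x * un m j x)) +
      2 * ∫ x, a x * χ x * U i x * (un m j x * pd (un m j) i x)) = 0 := by
    intro m
    have hφ := hχ.mul ((S.hun m j).mul (S.hun m j))
    have i1 : ∀ i, Integrable (fun x => a x * pd χ i x * U i x * (un m j x * un m j x)) volume :=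
      fun i => (m2 _ (hχ.pd i) i).integrable_mul (q := 3) (u3 m)
    have i2 : ∀ i, Integrable (fun x => a x * χ x * U i x * (un m j x * pd (un m j) i x)) volume :=
      fun i => (m6 _ hχ i).integrable_mul (q := ENNReal.ofReal (3 / 2)) (d32 m i)
    rw [← S.mass _ hφ]
    have : ∀ i, (∫ x, a x * pd χ i x * U i x * (un m j x * un m j x)) +
      2 * ∫ x, a x * χ x * U i x * (un m j x * pd (un m j) i x) =
      ∫ x, (a x * pd χ i x * U i x * (un m j x * un m j x) +
        2 * (a x * χ x * U i x * (un m j x * pd (un m j) i x))) := fun i => by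
      rw [integral_add (i1 i) ((i2 i).const_mul 2), integral_const_mul]
    simp only [this]
    have i12 : ∀ i, Integrable (fun x => a x * pd χ i x * U i x * (un m j x * un m j x) +
        2 * (a x * χ x * U i x * (un m j x * pd (un m j) i x))) volume :=
      fun i => (i1 i).add ((i2 i).const_mul 2)
    rw [← integral_finsetSum _ fun i _ => i12 i]
    congr 1; ext x
    rw [Finset.mul_sum]
    refine Finset.sum_congr rfl fun i _ => ?_
    have hd := (S.hun m j).diff x
    rw [pd_mul (g := fun y => un m j y * un m j y) (hχ.diff x) (hd.mul hd), pd_mul hd hd]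
    ring
  have t : Tendsto (fun m => ∑ i, ((∫ x, a x * pd χ i x * U i x * (un m j x * un m j x)) +
      2 * ∫ x, a x * χ x * U i x * (un m j x * pd (un m j) i x))) atTop
      (𝓝 (∑ i, ((∫ x, a x * pd χ i x * U i x * (U j x * U j x)) +
      2 * ∫ x, a x * χ x * U i x * (U j x * D j i x)))) :=
    tendsto_finsetSum _ fun i _ =>
      (tendsto_pair (q := 3) (m2 _ (hχ.pd i) i) u3' u3 c1).add
      ((tendsto_pair (q := ENNReal.ofReal (3 / 2)) (m6 _ hχ i) (d32' i) (fun m => d32 m i)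
        (c2 i)).const_mul 2)
  simp only [e] at t
  have h0 := tendsto_nhds_unique t tendsto_const_nhds
  rw [← h0]
  refine Finset.sum_congr rfl fun i _ => ?_
  congr 1
  · congr 1; ext x; ring
  · congr 2; ext x; ring

/-- Step C : the convective term does no work. -/
lemma Sol.convWork (S : Sol μ η γ a U D g un gn) :
    ∑ i, ∑ j, ∫ x, a x * U i x * U j x * D i j x = 0 := by
  obtain ⟨χ, C, hC, hχ, h01, hl, hd⟩ := cutoffs
  refine Finset.sum_eq_zero fun j _ => ?_
  have iD : ∀ i, Integrable (fun x => a x * U i x * U j x * D j i x) volume :=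
    fun i => (S.conv2 i j).integrable_mul (S.hD j i)
  have l1 : Tendsto (fun n => ∑ i, ((∫ x, a x * U i x * U j x ^ 2 * pd (χ n) i x) +
      2 * ∫ x, a x * U i x * U j x * D j i x * χ n x)) atTop
      (𝓝 (∑ i, (0 + 2 * ∫ x, a x * U i x * U j x * D j i x))) :=
    tendsto_finsetSum _ fun i _ => (cut_lim0 hd (S.conv3 i j) i).add
      ((cut_lim hχ h01 hl (iD i)).const_mul 2)
  simp only [S.convLoc (hχ _) j] at l1
  have h0 := tendsto_nhds_unique l1 tendsto_const_nhds
  simp only [zero_add, ← Finset.mul_sum] at h0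
  have h1 := (mul_eq_zero.1 h0).resolve_left (by norm_num)
  rw [← h1]
  refine Finset.sum_congr rfl fun i _ => ?_
  congr 1; ext x; ring

/-- Step E, first part : no dissipation. -/
lemma Sol.diss (S : Sol μ η γ a U D g un gn) :
    ∑ i, ∑ j, ∫ x, sg μ η D i j x * D i j x = 0 := by
  have hH := H65
  have l1 : Tendsto (fun n => (∑ i, ∑ j, ∫ x, a x * U i x * U j x * pd (un n i) j x) +
      (∑ i, ∫ x, a x ^ γ * pd (un n i) i x)) atTop
      (𝓝 ((∑ i, ∑ j, ∫ x, a x * U i x * U j x * D i j x) + ∑ i, ∫ x, a x ^ γ * D i i x)) :=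
    (tendsto_finsetSum _ fun i _ => tendsto_finsetSum _ fun j _ =>
      tendsto_pair (S.conv2 i j) (S.hD i j) (fun n => ((S.hun n i).pd j).memLp 2) (S.hdl i j)).add
    (tendsto_finsetSum _ fun i _ =>
      tendsto_pair S.pL2 (S.hD i i) (fun n => ((S.hun n i).pd i).memLp 2) (S.hdl i i))
  have l2 : Tendsto (fun n => (∑ i, ∑ j, ∫ x, sg μ η D i j x * pd (un n i) j x) -
      ∑ i, ∫ x, a x * g i x * un n i x) atTop
      (𝓝 ((∑ i, ∑ j, ∫ x, sg μ η D i j x * D i j x) - ∑ i, ∫ x, a x * g i x * U i x)) :=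
    (tendsto_finsetSum _ fun i _ => tendsto_finsetSum _ fun j _ =>
      tendsto_pair (S.sL2 i j) (S.hD i j) (fun n => ((S.hun n i).pd j).memLp 2) (S.hdl i j)).sub
    (tendsto_finsetSum _ fun i _ =>
      tendsto_pair (q := 6) (S.gL i) (S.hU i) (fun n => (S.hun n i).memLp 6) (S.hunl i))
  simp only [fun n => S.mom' (un n) (S.hun n)] at l1
  have h := tendsto_nhds_unique l1 l2
  rw [S.convWork, S.press, S.force] at h
  linarith

/-- Korn-type identity for test fields. -/
lemma korn {μ η : ℝ} (hμ : 0 < μ) (hη : 0 ≤ η) {w : Fin 3 → E3 → ℝ} (hw : ∀ i, TF (w i)) :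
    μ * ∑ i, ∑ j, ∫ x, pd (w i) j x ^ 2 ≤
      ∑ i, ∑ j, ∫ x, sg μ η (fun i j => pd (w i) j) i j x * pd (w i) j x := by
  have hi : ∀ i j k l, Integrable (fun x => pd (w i) j x * pd (w k) l x) volume := fun i j k l =>
    (((hw i).pd j).mul ((hw k).pd l)).integrable
  have e1 : ∀ i j, ∫ x, sg μ η (fun i j => pd (w i) j) i j x * pd (w i) j x =
      μ * (∫ x, pd (w i) j x ^ 2) + μ * (∫ x, pd (w j) i x * pd (w i) j x) +
      (if i = j then (1:ℝ) else 0) * ((η - 2 / 3 * μ) * ∑ k, ∫ x, pd (w k) k x * pd (w i) j x) := by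
    intro i j
    have i3 : Integrable (fun x => (if i = j then (1:ℝ) else 0) *
        ((η - 2 / 3 * μ) * ∑ k, pd (w k) k x * pd (w i) j x)) volume :=
      ((integrable_finsetSum _ fun k _ => hi k k i j).const_mul _).const_mul _
    have i1 : Integrable (fun x => μ * (pd (w i) j x ^ 2)) volume := by
      simpa only [sq] using (hi i j i j).const_mul μ
    have i12 : Integrable (fun x => μ * (pd (w i) j x ^ 2) + μ * (pd (w j) i x * pd (w i) j x))
        volume := i1.add ((hi j i i j).const_mul μ)
    rw [← integral_finsetSum _ fun k _ => hi k k i j, ← integral_const_mul, ← integral_const_mul,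
      ← integral_const_mul, ← integral_const_mul, ← integral_add i1 ((hi j i i j).const_mul μ),
      ← integral_add i12 i3]
    congr 1; ext x
    rw [← Finset.sum_mul]
    simp only [sg, Smat]
    ring
  have e2 : ∀ i j, ∫ x, pd (w j) i x * pd (w i) j x = ∫ x, pd (w j) j x * pd (w i) i x :=
    fun i j => ibp_swap (hw j) (hw i) i j
  have e3 : ∑ i, ∑ k, ∫ x, pd (w k) k x * pd (w i) i x = ∫ x, (∑ k, pd (w k) k x) ^ 2 := by
    simp only [sq, Finset.sum_mul, Finset.mul_sum]
    rw [integral_finsetSum _ fun k _ => integrable_finsetSum _ fun l _ => hi l l k k]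
    refine Finset.sum_congr rfl fun k _ => ?_
    rw [integral_finsetSum _ fun l _ => hi l l k k]
  have e4 : 0 ≤ ∫ x, (∑ k, pd (w k) k x) ^ 2 := integral_nonneg fun x => sq_nonneg _
  have e5 : ∑ i, ∑ j, ∫ x, pd (w j) i x * pd (w i) j x = ∫ x, (∑ k, pd (w k) k x) ^ 2 := by
    rw [← e3]
    exact Finset.sum_congr rfl fun i _ => Finset.sum_congr rfl fun j _ => e2 i j
  simp only [e1, Finset.sum_add_distrib, ← Finset.mul_sum, ite_mul, zero_mul, one_mul,
    Finset.sum_ite_eq, Finset.mem_univ, if_true]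
  rw [e3, e5]
  nlinarith

lemma sg_memLp {E : Fin 3 → Fin 3 → E3 → ℝ} (hE : ∀ i j, MemLp (E i j) 2 volume) (i j : Fin 3) :
    MemLp (sg μ η E i j) 2 volume := by
  have hd : MemLp (fun x => ∑ k, E k k x) 2 volume := memLp_finsetSum _ fun k _ => hE k k
  have := ((((hE i j).add (hE j i)).sub ((hd.const_mul (2 / 3)).mul_const
    (if i = j then (1:ℝ) else 0))).const_mul μ).add
    ((hd.const_mul η).mul_const (if i = j then (1:ℝ) else 0))
  exact this

lemma sg_sub (E F : Fin 3 → Fin 3 → E3 → ℝ) (i j : Fin 3) (x : E3) :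
    sg μ η E i j x - sg μ η F i j x = sg μ η (fun i j x => E i j x - F i j x) i j x := by
  simp only [sg, Smat, Finset.sum_sub_distrib]
  ring

lemma sg_norm (hμ : 0 < μ) (hη : 0 ≤ η) {E : Fin 3 → Fin 3 → E3 → ℝ}
    (hE : ∀ i j, MemLp (E i j) 2 volume) (i j : Fin 3) :
    eLpNorm (sg μ η E i j) 2 volume ≤
      ENNReal.ofReal (3 * μ + η) * ∑ k, ∑ l, eLpNorm (E k l) 2 volume := by
  have h1 : eLpNorm (sg μ η E i j) 2 volume ≤ ENNReal.ofReal (3 * μ + η) *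
      eLpNorm (fun x => ∑ k, ∑ l, ‖E k l x‖) 2 volume := by
    refine eLpNorm_le_mul_eLpNorm_of_ae_le_mul (Eventually.of_forall fun x => ?_) 2
    have hT0 : 0 ≤ ∑ k, ∑ l, ‖E k l x‖ :=
      Finset.sum_nonneg fun k _ => Finset.sum_nonneg fun l _ => norm_nonneg _
    rw [Real.norm_of_nonneg hT0, Real.norm_eq_abs]
    set T := ∑ k, ∑ l, ‖E k l x‖ with hT
    have hs : ∀ k l, |E k l x| ≤ T := fun k l =>
      (Finset.single_le_sum (f := fun l => ‖E k l x‖) (fun l _ => norm_nonneg _)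
        (Finset.mem_univ l)).trans
      (Finset.single_le_sum (f := fun k => ∑ l, ‖E k l x‖)
        (fun k _ => Finset.sum_nonneg fun l _ => norm_nonneg _) (Finset.mem_univ k))
    have htr : |∑ k, E k k x| ≤ T := (Finset.abs_sum_le_sum_abs _ _).trans
      (Finset.sum_le_sum fun k _ => Finset.single_le_sum (f := fun l => ‖E k l x‖)
        (fun l _ => norm_nonneg _) (Finset.mem_univ k))
    have a1 := abs_le.1 (hs i j)
    have a2 := abs_le.1 (hs j i)
    have a3 := abs_le.1 htr
    simp only [sg, Smat]
    split_ifs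
    · rw [abs_le]; constructor <;> nlinarith
    · rw [abs_le]; constructor <;> nlinarith
  refine h1.trans ?_
  gcongr
  have h2 : (fun x => ∑ k, ∑ l, ‖E k l x‖) = ∑ k, ∑ l, fun x => ‖E k l x‖ := by
    ext x; simp [Finset.sum_apply]
  rw [h2]
  refine (eLpNorm_sum_le (fun k _ => ?_) (by norm_num)).trans (Finset.sum_le_sum fun k _ =>
    (eLpNorm_sum_le (fun l _ => (hE k l).1.norm) (by norm_num)).trans
      (Finset.sum_le_sum fun l _ => by rw [eLpNorm_norm]))
  exact Finset.aestronglyMeasurable_sum _ fun l _ => (hE k l).1.norm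

lemma Sol.main (S : Sol μ η γ a U D g un gn) (i : Fin 3) : ∀ᵐ x, U i x = 0 := by
  obtain ⟨Cs, hs⟩ := sobolev
  -- convergence of approximate stress
  have hsl : ∀ i j, Tendsto (fun n => eLpNorm (fun x => sg μ η (fun i j => pd (un n i) j) i j x -
      sg μ η D i j x) 2 volume) atTop (𝓝 0) := by
    intro i j
    have t : Tendsto (fun n => ENNReal.ofReal (3 * μ + η) *
        ∑ k, ∑ l, eLpNorm (fun x => pd (un n k) l x - D k l x) 2 volume) atTop
        (𝓝 (ENNReal.ofReal (3 * μ + η) * ∑ _k : Fin 3, ∑ _l : Fin 3, 0)) :=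
      ENNReal.Tendsto.const_mul (tendsto_finsetSum _ fun k _ => tendsto_finsetSum _ fun l _ =>
        S.hdl k l) (Or.inr ENNReal.ofReal_ne_top)
    simp only [Finset.sum_const_zero, mul_zero] at t
    refine tendsto_of_tendsto_of_tendsto_of_le_of_le tendsto_const_nhds t (fun _ => zero_le)
      (fun n => ?_)
    simp only [sg_sub]
    exact sg_norm S.hμ S.hη (fun k l => (((S.hun n k).pd l).memLp 2).sub (S.hD k l)) i j
  have l1 : Tendsto (fun n => ∑ i, ∑ j, ∫ x, sg μ η (fun i j => pd (un n i) j) i j x *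
      pd (un n i) j x) atTop (𝓝 0) := by
    rw [← S.diss]
    refine tendsto_finsetSum _ fun i _ => tendsto_finsetSum _ fun j _ => ?_
    refine tendsto_pair2 (S.sL2 i j) (S.hD i j) (fun n => ?_) (fun n => ((S.hun n i).pd j).memLp 2)
      (hsl i j) (S.hdl i j)
    exact sg_memLp (fun k l => ((S.hun n k).pd l).memLp 2) i j
  have l2 : Tendsto (fun n => μ * ∑ i, ∑ j, ∫ x, pd (un n i) j x ^ 2) atTop
      (𝓝 (μ * ∑ i, ∑ j, ∫ x, D i j x ^ 2)) := by
    refine Tendsto.const_mul _ (tendsto_finsetSum _ fun i _ => tendsto_finsetSum _ fun j _ => ?_)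
    have := tendsto_pair2 (S.hD i j) (S.hD i j) (fun n => ((S.hun n i).pd j).memLp 2)
      (fun n => ((S.hun n i).pd j).memLp 2) (S.hdl i j) (S.hdl i j)
    simpa only [sq] using this
  have h1 := le_of_tendsto_of_tendsto' l2 l1 fun n => korn S.hμ S.hη (S.hun n)
  have h2 : ∑ i, ∑ j, ∫ x, D i j x ^ 2 ≤ 0 := by
    have := S.hμ
    nlinarith
  have hn : ∀ i j, 0 ≤ ∫ x, D i j x ^ 2 := fun i j => integral_nonneg fun x => sq_nonneg _
  have hD0 : ∀ j, ∫ x, D i j x ^ 2 = 0 := by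
    intro j
    have a1 : ∫ x, D i j x ^ 2 ≤ ∑ j, ∫ x, D i j x ^ 2 :=
      Finset.single_le_sum (f := fun j => ∫ x, D i j x ^ 2) (fun j _ => hn i j) (Finset.mem_univ j)
    have a2 : ∑ j, ∫ x, D i j x ^ 2 ≤ ∑ i, ∑ j, ∫ x, D i j x ^ 2 :=
      Finset.single_le_sum (f := fun i => ∑ j, ∫ x, D i j x ^ 2)
        (fun i _ => Finset.sum_nonneg fun j _ => hn i j) (Finset.mem_univ i)
    exact le_antisymm (by linarith) (hn i j)
  have hD1 : ∀ j, D i j =ᵐ[volume] 0 := by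
    intro j
    have := (integral_eq_zero_iff_of_nonneg (fun x => sq_nonneg _) (S.hD i j).integrable_sq).1 (hD0 j)
    filter_upwards [this] with x hx
    simpa using hx
  have hd0 : ∀ j, Tendsto (fun n => eLpNorm (pd (un n i) j) 2 volume) atTop (𝓝 0) := by
    intro j
    refine (S.hdl i j).congr fun n => eLpNorm_congr_ae ?_
    filter_upwards [hD1 j] with x hx
    simp [hx]
  have hu0 : Tendsto (fun n => eLpNorm (un n i) 6 volume) atTop (𝓝 0) := by
    have t : Tendsto (fun n => (Cs : ℝ≥0∞) * ∑ j, eLpNorm (pd (un n i) j) 2 volume) atTop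
        (𝓝 ((Cs : ℝ≥0∞) * ∑ _j : Fin 3, 0)) :=
      ENNReal.Tendsto.const_mul (tendsto_finsetSum _ fun j _ => hd0 j) (Or.inr ENNReal.coe_ne_top)
    simp only [Finset.sum_const_zero, mul_zero] at t
    exact tendsto_of_tendsto_of_tendsto_of_le_of_le tendsto_const_nhds t (fun _ => zero_le)
      (fun n => hs _ (S.hun n i))
  have hU0 : eLpNorm (U i) 6 volume = 0 := by
    have t := hu0.add (S.hunl i)
    rw [add_zero] at t
    refine le_antisymm (ge_of_tendsto' t fun n => ?_) zero_le
    have e : U i = un n i - (fun x => un n i x - U i x) := by ext x; simp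
    nth_rw 1 [e]
    exact eLpNorm_sub_le ((S.hun n i).memLp 6).1 (((S.hun n i).memLp 6).sub (S.hU i)).1 (by norm_num)
  exact (eLpNorm_eq_zero_iff (S.hU i).1 (by norm_num)).1 hU0

end


lemma tendsto_eLpNorm_comp {F : ℕ → E3 → Fin 3 → ℝ} {p : ℝ≥0∞}
    (h : Tendsto (fun n => eLpNorm (F n) p volume) atTop (𝓝 0)) (i : Fin 3) :
    Tendsto (fun n => eLpNorm (fun x => F n x i) p volume) atTop (𝓝 0) :=
  tendsto_of_tendsto_of_tendsto_of_le_of_le tendsto_const_nhds h (fun _ => zero_le)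
    (fun n => eLpNorm_mono fun x => norm_le_pi_norm (F n x) i)

lemma tendsto_eLpNorm_comp2 {F : ℕ → E3 → Fin 3 → Fin 3 → ℝ} {p : ℝ≥0∞}
    (h : Tendsto (fun n => eLpNorm (F n) p volume) atTop (𝓝 0)) (i j : Fin 3) :
    Tendsto (fun n => eLpNorm (fun x => F n x i j) p volume) atTop (𝓝 0) :=
  tendsto_of_tendsto_of_tendsto_of_le_of_le tendsto_const_nhds h (fun _ => zero_le)
    (fun n => eLpNorm_mono fun x =>
      (norm_le_pi_norm (F n x i) j).trans (norm_le_pi_norm (F n x) i))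

lemma memLp_comp {F : E3 → Fin 3 → ℝ} {p : ℝ≥0∞} (h : MemLp F p volume) (i : Fin 3) :
    MemLp (fun x => F x i) p volume :=
  h.of_le ((continuous_apply i).comp_aestronglyMeasurable h.1)
    (ae_of_all _ fun x => norm_le_pi_norm (F x) i)

lemma memLp_comp2 {F : E3 → Fin 3 → Fin 3 → ℝ} {p : ℝ≥0∞} (h : MemLp F p volume)
    (i j : Fin 3) : MemLp (fun x => F x i j) p volume :=
  h.of_le ((continuous_apply_apply i j).comp_aestronglyMeasurable h.1)
    (ae_of_all _ fun x => (norm_le_pi_norm (F x i) j).trans (norm_le_pi_norm (F x) i))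

lemma tf_comp {φ : E3 → Fin 3 → ℝ}
    (h : IsTestVec ((⊤ : ℕ∞) : WithTop ℕ∞) univ φ) (i : Fin 3) : TF (fun x => φ x i) :=
  ⟨contDiff_pi.1 h.1 i, h.2.1.comp_left (g := fun v : Fin 3 → ℝ => v i) rfl⟩

lemma testVec_of_tf {φ : Fin 3 → E3 → ℝ} (h : ∀ i, TF (φ i)) :
    IsTestVec 1 univ (fun x i => φ i x) := by
  refine ⟨contDiff_pi.2 fun i => (h i).1.of_le (by exact_mod_cast le_top), ?_, subset_univ _⟩
  refine HasCompactSupport.intro (K := ⋃ i, tsupport (φ i))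
    (isCompact_iUnion fun i => (h i).2) ?_
  intro x hx
  ext i
  simp only [mem_iUnion, not_exists] at hx
  exact image_eq_zero_of_notMem_tsupport (hx i)

/-- **Theorem 6.** Let `(ρ, u)` be a weak solution of the stationary isentropic system on `ℝ³`
with `γ ≥ 6` and `G ∈ D₀^{1, 6γ/(5γ−6)}(ℝ³)`. If the total energy
`∫_{ℝ³} ((1/2) ρ|u|² + ρ^γ/(γ−1))` is finite, then `u = 0` a.e. -/
theorem liouville_isentropic_finite_energy
    (μ η γ : ℝ) (hμ : 0 < μ) (hη : 0 ≤ η) (hγ : 6 ≤ γ)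
    (G : E3 → ℝ) (dG : E3 → Fin 3 → ℝ)
    (ρ : E3 → ℝ) (u : E3 → Fin 3 → ℝ) (du : E3 → Fin 3 → Fin 3 → ℝ)
    (hG : MemD01q univ G dG (6 * γ / (5 * γ - 6)))
    (hsol : IsentropicWeakSolution μ η γ G dG ρ u du)
    (henergy : Integrable
      (fun x => (1 / 2) * ρ x * (∑ i, (u x i) ^ 2) + ρ x ^ γ / (γ - 1)) volume) :
    ∀ᵐ x, u x = 0 := by
  obtain ⟨-, hdG, gn, hgn, hgl, -⟩ := hG
  have hs : WeakSolution univ μ η (fun s => s ^ γ) G dG ρ u du := hsol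
  obtain ⟨-, -, hdu, un, hun, hdl, hunl⟩ := hs.u_D012
  have hρ0 := hs.ρ_nonneg
  have hmass := hs.mass
  have hmom := hs.momentum
  simp only [Measure.restrict_univ] at hdG hgl hdu hdl hunl hρ0 hmass hmom
  have hum : ∀ i, AEMeasurable (fun x => u x i) volume := fun i =>
    (measurable_pi_apply i).comp_aemeasurable hs.aemeas_u
  have hρm := hs.aemeas_ρ
  set a : E3 → ℝ := fun x => max (hρm.mk ρ x) 0 with ha
  have ham : Measurable a := hρm.measurable_mk.max measurable_const
  have hae : a =ᵐ[volume] ρ := by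
    filter_upwards [hρm.ae_eq_mk, hρ0] with x h1 h2
    simp only [ha, ← h1, max_eq_left h2]
  have hag' : Integrable (fun x => ρ x ^ γ) volume := by
    refine (henergy.const_mul (γ - 1)).mono' (hρm.pow_const γ).aestronglyMeasurable ?_
    filter_upwards [hρ0] with x h
    have h1 : 0 ≤ ρ x ^ γ := Real.rpow_nonneg h _
    rw [Real.norm_of_nonneg h1, mul_add, mul_div_cancel₀ _ (by linarith : γ - 1 ≠ 0)]
    have : 0 ≤ (γ - 1) * (1 / 2 * ρ x * ∑ i, u x i ^ 2) :=
      mul_nonneg (by linarith) (mul_nonneg (by linarith)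
        (Finset.sum_nonneg fun i _ => sq_nonneg _))
    linarith
  have hX' : Integrable (fun x => ρ x * ∑ i, u x i ^ 2) volume := by
    refine (henergy.const_mul 2).mono' (hρm.mul
      (Finset.aemeasurable_fun_sum _ fun i _ => (hum i).pow_const 2)).aestronglyMeasurable ?_
    filter_upwards [hρ0] with x h
    have h1 : 0 ≤ ρ x ^ γ / (γ - 1) := div_nonneg (Real.rpow_nonneg h _) (by linarith)
    rw [Real.norm_of_nonneg (mul_nonneg h (Finset.sum_nonneg fun i _ => sq_nonneg _))]
    linarith
  have hunl' := fun i => tendsto_eLpNorm_comp hunl i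
  have S : Sol μ η γ a (fun i x => u x i) (fun i j x => du x i j) (fun i x => dG x i)
      (fun n i x => un n x i) gn :=
    { hμ := hμ
      hη := hη
      hγ := hγ
      ham := ham
      ha0 := fun x => le_max_right _ _
      hag := hag'.congr (by filter_upwards [hae] with x h; rw [h])
      hX := hX'.congr (by filter_upwards [hae] with x h; rw [h])
      hU := fun i => by
        have h1 := (hunl' i).eventually (gt_mem_nhds ENNReal.zero_lt_top)
        obtain ⟨n, hn⟩ := h1.exists
        have t := tf_comp (hun n) i
        have m1 : MemLp (fun x => un n x i) 6 volume :=
          t.cont.memLp_of_hasCompactSupport t.2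
        have m2 : MemLp (fun x => (un n x - u x) i) 6 volume :=
          ⟨(m1.1.sub (hum i).aestronglyMeasurable), hn⟩
        refine (m1.sub m2).ae_eq (ae_of_all _ fun x => ?_)
        simp
      hD := fun i j => memLp_comp2 hdu i j
      hg := fun i => memLp_comp hdG i
      hun := fun n i => tf_comp (hun n) i
      hgn := fun n => (hgn n).tf
      hunl := hunl'
      hdl := fun i j => tendsto_eLpNorm_comp2 hdl i j
      hgl := fun i => tendsto_eLpNorm_comp hgl i
      mass := fun φ hφ => by
        rw [← hmass φ hφ.1 hφ.2]
        refine integral_congr_ae ?_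
        filter_upwards [hae] with x h
        rw [h]
      mom := fun φ hφ => by
        have h := hmom _ (testVec_of_tf hφ)
        refine Eq.trans (integral_congr_ae ?_) (h.trans ?_)
        · filter_upwards [hae] with x h
          rw [h]; rfl
        · congr 1
          refine integral_congr_ae ?_
          filter_upwards [hae] with x h
          rw [h] }
  have := ae_all_iff.2 fun i => S.main i
  filter_upwards [this] with x hx
  ext i
  exact hx i
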